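/- arXiv:2002.09221 — 2 statements merged into one kernel-verified Lean document; each statement's English description precedes it below -/
import Mathlib

section
/- Let V : ℝⁿ → ℝ be C² with e^{-V} integrable, and let μ be the probability measure with density proportional to e^{-V}. Let ρ : ℝⁿ → ℝ be continuous and bounded with ⟨u, Hess V(x) u⟩ ≥ ρ(x)‖u‖² for all x, u ∈ ℝⁿ, and suppose ρ(x) ≥ ρ₀ > 0 for all x and Osc(ρ) > 0. Set m = ∫ρ dμ and ε' = ((m − ρ₀) + Osc²(ρ)/ρ₀)·(1 − √(1 − (m − ρ₀)²/((m − ρ₀) + Osc²(ρ)/ρ₀)²)). Then μ satisfies a Poincaré inequality with constant 1/(ρ₀ + ε'): for every smooth compactly supported f : ℝⁿ → ℝ, Var_μ(f) ≤ (1/(ρ₀ + ε')) ∫‖∇f‖² dμ. -/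
open MeasureTheory Real Set
open scoped ENNReal RealInnerProductSpace

namespace PoinAux

open scoped Convolution



/-- partial derivative -/
noncomputable def D {n : ℕ} (i : Fin n) (F : EuclideanSpace ℝ (Fin n) → ℝ)
    (x : EuclideanSpace ℝ (Fin n)) : ℝ := fderiv ℝ F x (EuclideanSpace.single i 1)

variable {n : ℕ}

lemma D_add {i : Fin n} {F G : EuclideanSpace ℝ (Fin n) → ℝ} {x}
    (hF : DifferentiableAt ℝ F x) (hG : DifferentiableAt ℝ G x) :
    D i (fun y => F y + G y) x = D i F x + D i G x := by
  simp [D, fderiv_fun_add hF hG]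

lemma D_sub {i : Fin n} {F G : EuclideanSpace ℝ (Fin n) → ℝ} {x}
    (hF : DifferentiableAt ℝ F x) (hG : DifferentiableAt ℝ G x) :
    D i (fun y => F y - G y) x = D i F x - D i G x := by
  simp [D, fderiv_fun_sub hF hG]

lemma D_mul {i : Fin n} {F G : EuclideanSpace ℝ (Fin n) → ℝ} {x}
    (hF : DifferentiableAt ℝ F x) (hG : DifferentiableAt ℝ G x) :
    D i (fun y => F y * G y) x = D i F x * G x + F x * D i G x := by
  simp [D, fderiv_fun_mul hF hG]; ring

lemma D_const_mul {i : Fin n} {F : EuclideanSpace ℝ (Fin n) → ℝ} {x} (c : ℝ)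
    (hF : DifferentiableAt ℝ F x) :
    D i (fun y => c * F y) x = c * D i F x := by
  simp [D, fderiv_const_mul hF]

lemma D_sum {i : Fin n} {F : Fin n → EuclideanSpace ℝ (Fin n) → ℝ} {x}
    (hF : ∀ j, DifferentiableAt ℝ (F j) x) :
    D i (fun y => ∑ j, F j y) x = ∑ j, D i (F j) x := by
  simp [D, fderiv_fun_sum (fun j _ => hF j)]

lemma D_exp_neg {i : Fin n} {V : EuclideanSpace ℝ (Fin n) → ℝ} {x}
    (hF : DifferentiableAt ℝ V x) :
    D i (fun y => Real.exp (-V y)) x = - D i V x * Real.exp (-V x) := by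
  have := (hF.hasFDerivAt.neg).exp
  simp only [D]
  erw [this.fderiv]
  simp; ring

lemma D_exp {i : Fin n} {V : EuclideanSpace ℝ (Fin n) → ℝ} {x}
    (hF : DifferentiableAt ℝ V x) :
    D i (fun y => Real.exp (V y)) x = D i V x * Real.exp (V x) := by
  simp only [D]
  rw [(hF.hasFDerivAt).exp.fderiv]
  simp; ring

lemma contDiff_D {i : Fin n} {F : EuclideanSpace ℝ (Fin n) → ℝ} {k l : WithTop ℕ∞}
    (hF : ContDiff ℝ l F) (h : k + 1 ≤ l) : ContDiff ℝ k (D i F) :=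
  (hF.fderiv_right h).clm_apply contDiff_const

lemma smooth_D {i : Fin n} {F : EuclideanSpace ℝ (Fin n) → ℝ}
    (hF : ContDiff ℝ (⊤ : ℕ∞) F) : ContDiff ℝ (⊤ : ℕ∞) (D i F) :=
  contDiff_D hF (by norm_cast)

lemma cont_D {i : Fin n} {F : EuclideanSpace ℝ (Fin n) → ℝ}
    (hF : ContDiff ℝ 1 F) : Continuous (D i F) :=
  (contDiff_D (k := 0) hF (by norm_num)).continuous

lemma supp_D {i : Fin n} {F : EuclideanSpace ℝ (Fin n) → ℝ}
    (hF : HasCompactSupport F) : HasCompactSupport (D i F) := hF.fderiv_apply _ _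

lemma D_comm {i j : Fin n} {F : EuclideanSpace ℝ (Fin n) → ℝ} (hF : ContDiff ℝ 2 F) (x) :
    D i (D j F) x = D j (D i F) x := by
  have hd : DifferentiableAt ℝ (fderiv ℝ F) x :=
    (hF.fderiv_right (m := 1) (by norm_num)).differentiable (by norm_num) x
  have key : ∀ i j : Fin n, D i (D j F) x =
      fderiv ℝ (fderiv ℝ F) x (EuclideanSpace.single i 1) (EuclideanSpace.single j 1) := by
    intro i j
    have h : HasFDerivAt (D j F) _ x :=
      hd.hasFDerivAt.clm_apply (hasFDerivAt_const (EuclideanSpace.single j (1:ℝ)) x)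
    rw [D, h.fderiv]
    simp
  rw [key, key]
  exact (hF.contDiffAt.isSymmSndFDerivAt (by simp)) _ _

lemma integral_D {i : Fin n} {F : EuclideanSpace ℝ (Fin n) → ℝ} (hF : ContDiff ℝ 1 F)
    (hs : HasCompactSupport F) : ∫ x, D i F x = 0 := by
  have h := integral_mul_fderiv_eq_neg_fderiv_mul_of_integrable (μ := volume) (f := fun _ => (1:ℝ))
    (g := F) (v := EuclideanSpace.single i (1:ℝ)) (by simp)
    (by
      simp only [one_mul]
      exact (cont_D hF).integrable_of_hasCompactSupport (supp_D (i := i) hs))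
    (by simpa using hF.continuous.integrable_of_hasCompactSupport hs)
    (by intros; fun_prop)
    (fun x _ => hF.differentiable (by norm_num) x)
  simpa [D] using h

/-- Hessian in coordinates -/
lemma hess_coord {V : EuclideanSpace ℝ (Fin n) → ℝ} (hV : ContDiff ℝ 2 V) (x)
    (a : EuclideanSpace ℝ (Fin n)) :
    iteratedFDeriv ℝ 2 V x ![a, a] = ∑ i, ∑ j, a i * a j * D i (D j V) x := by
  have hd : DifferentiableAt ℝ (fderiv ℝ V) x :=
    (hV.fderiv_right (m := 1) (by norm_num)).differentiable (by norm_num) x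
  have key : ∀ i j : Fin n, D i (D j V) x =
      fderiv ℝ (fderiv ℝ V) x (EuclideanSpace.single i 1) (EuclideanSpace.single j 1) := by
    intro i j
    have h : HasFDerivAt (D j V) _ x :=
      hd.hasFDerivAt.clm_apply (hasFDerivAt_const (EuclideanSpace.single j (1:ℝ)) x)
    rw [D, h.fderiv]
    simp
  rw [iteratedFDeriv_two_apply]
  simp only [Matrix.cons_val_zero, Matrix.cons_val_one]
  have ha : a = ∑ i, a i • EuclideanSpace.single i (1:ℝ) := by
    ext k; simp [Finset.sum_apply, Pi.single_apply]
  conv_lhs => rw [ha]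
  simp only [map_sum, map_smul, sum_apply, smul_apply, key,
    smul_eq_mul, Finset.mul_sum]
  rw [Finset.sum_comm]
  refine Finset.sum_congr rfl fun i _ => Finset.sum_congr rfl fun j _ => by ring

lemma grad_coord {F : EuclideanSpace ℝ (Fin n) → ℝ} (x) :
    ‖gradient F x‖ ^ 2 = ∑ i, D i F x ^ 2 := by
  rw [EuclideanSpace.norm_sq_eq]
  refine Finset.sum_congr rfl fun i _ => ?_
  have : D i F x = (gradient F x) i := by
    simp only [D]
    rw [← InnerProductSpace.toDual_symm_apply (𝕜 := ℝ)]
    rw [real_inner_comm, EuclideanSpace.inner_single_left]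
    simp [gradient]
  rw [this]; simp
 
/-- generator -/
noncomputable def L (V u : EuclideanSpace ℝ (Fin n) → ℝ) (x : EuclideanSpace ℝ (Fin n)) : ℝ :=
  ∑ i, (D i (D i u) x - D i V x * D i u x)

lemma cont_L {V u : EuclideanSpace ℝ (Fin n) → ℝ} (hV : ContDiff ℝ 2 V)
    (hu : ContDiff ℝ (⊤ : ℕ∞) u) : ContDiff ℝ 1 (L V u) := by
  unfold L
  refine ContDiff.sum fun i _ => ?_
  exact ((smooth_D (smooth_D hu)).of_le (by exact_mod_cast le_top)).sub
    ((contDiff_D hV (by norm_num)).mul ((smooth_D hu).of_le (by exact_mod_cast le_top)))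

lemma supp_L {V u : EuclideanSpace ℝ (Fin n) → ℝ} 
    (hs : HasCompactSupport u) : HasCompactSupport (L V u) := by
  have h : tsupport (L V u) ⊆ tsupport u := by
    refine closure_minimal ?_ (isClosed_tsupport u)
    intro x hx
    by_contra hxu
    apply hx
    have h1 : ∀ i, D i u x = 0 := fun i => by
      by_contra h
      exact hxu (tsupport_fderiv_apply_subset ℝ _ (subset_tsupport _ h))
    have h2 : ∀ i, D i (D i u) x = 0 := fun i => by
      by_contra h
      exact hxu (tsupport_fderiv_apply_subset ℝ _ (tsupport_fderiv_apply_subset ℝ _ (subset_tsupport _ h)))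
    simp [L, h1, h2]
  exact hs.of_isClosed_subset (isClosed_tsupport _) h

lemma ibp {V u v : EuclideanSpace ℝ (Fin n) → ℝ} {i : Fin n} (hV : ContDiff ℝ 2 V)
    (hu : ContDiff ℝ 1 u) (hv : ContDiff ℝ 1 v) (hs : HasCompactSupport u) :
    ∫ x, (D i u x - D i V x * u x) * v x * Real.exp (-V x) =
      - ∫ x, u x * D i v x * Real.exp (-V x) := by
  have hV1 : ContDiff ℝ 1 V := hV.of_le (by norm_num)
  have he : ContDiff ℝ 1 (fun x => Real.exp (-V x)) := hV1.neg.exp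
  have h := integral_D (i := i) (F := fun x => u x * v x * Real.exp (-V x)) ((hu.mul hv).mul he)
    (hs.mul_right.mul_right)
  have du := hu.differentiable (by norm_num)
  have dv := hv.differentiable (by norm_num)
  have dV := hV1.differentiable (by norm_num)
  have hc : ∀ x, D i (fun x => u x * v x * Real.exp (-V x)) x =
      (D i u x - D i V x * u x) * v x * Real.exp (-V x) + u x * D i v x * Real.exp (-V x) := by
    intro x
    rw [D_mul (F := fun x => u x * v x) ((du x).mul (dv x)) (he.differentiable (by norm_num) x), D_mul (du x) (dv x), D_exp_neg (dV x)]
    ring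
  simp_rw [hc] at h
  rw [integral_add] at h
  · linarith
  · refine Continuous.integrable_of_hasCompactSupport ?_ ?_
    · exact (((cont_D hu).sub ((cont_D hV1).mul hu.continuous)).mul hv.continuous).mul he.continuous
    · exact (((supp_D hs).sub (hs.mul_left)).mul_right).mul_right
  · refine Continuous.integrable_of_hasCompactSupport ?_ ?_
    · exact ((hu.continuous).mul (cont_D hv)).mul he.continuous
    · exact (hs.mul_right).mul_right




lemma nts_D {i : Fin n} {u : EuclideanSpace ℝ (Fin n) → ℝ} {x} (hx : x ∉ tsupport u) :
    x ∉ tsupport (D i u) := fun h => hx (tsupport_fderiv_apply_subset ℝ _ h)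

lemma D_zero {i : Fin n} {u : EuclideanSpace ℝ (Fin n) → ℝ} {x} (hx : x ∉ tsupport u) :
    D i u x = 0 := image_eq_zero_of_notMem_tsupport (nts_D hx)

lemma L_zero {V u : EuclideanSpace ℝ (Fin n) → ℝ} {x} (hx : x ∉ tsupport u) :
    L V u x = 0 := by
  simp [L, D_zero hx, D_zero (nts_D hx)]

lemma intg {F u : EuclideanSpace ℝ (Fin n) → ℝ} (hF : Continuous F) (hs : HasCompactSupport u)
    (h : ∀ x, x ∉ tsupport u → F x = 0) : Integrable F :=
  hF.integrable_of_hasCompactSupport (HasCompactSupport.intro' hs (isClosed_tsupport u) h)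

lemma one_le_inf : (1 : WithTop ℕ∞) ≤ ((⊤ : ℕ∞) : WithTop ℕ∞) := by exact_mod_cast le_top
lemma two_le_inf : (2 : WithTop ℕ∞) ≤ ((⊤ : ℕ∞) : WithTop ℕ∞) := by
  exact WithTop.coe_le_coe.2 (le_top : (2 : ℕ∞) ≤ ⊤)

lemma L_ibp {V u v : EuclideanSpace ℝ (Fin n) → ℝ} (hV : ContDiff ℝ 2 V)
    (hu : ContDiff ℝ (⊤ : ℕ∞) u) (hv : ContDiff ℝ 1 v) (hs : HasCompactSupport u) :
    ∫ x, L V u x * v x * Real.exp (-V x) =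
      - ∫ x, (∑ i, D i u x * D i v x) * Real.exp (-V x) := by
  have hV1 : ContDiff ℝ 1 V := hV.of_le (by norm_num)
  have he : Continuous (fun x => Real.exp (-V x)) := hV1.neg.exp.continuous
  have cu : ∀ i, Continuous (D i u) := fun i => (smooth_D hu).continuous
  have cuu : ∀ i, Continuous (D i (D i u)) := fun i => (smooth_D (smooth_D hu)).continuous
  have cv : ∀ i, Continuous (D i v) := fun i => cont_D hv
  have cV : ∀ i, Continuous (D i V) := fun i => cont_D hV1
  have cv0 := hv.continuous
  simp only [L, Finset.sum_mul]
  rw [integral_finsetSum, integral_finsetSum, ← Finset.sum_neg_distrib]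
  · exact Finset.sum_congr rfl fun i _ => ibp hV ((smooth_D hu).of_le one_le_inf) hv (supp_D hs)
  · intro i _
    exact intg (by fun_prop) hs (fun x hx => by simp [D_zero hx])
  · intro i _
    exact intg (by fun_prop) hs (fun x hx => by simp [D_zero hx, D_zero (nts_D hx)])

lemma D_L {V u : EuclideanSpace ℝ (Fin n) → ℝ} (hV : ContDiff ℝ 2 V)
    (hu : ContDiff ℝ (⊤ : ℕ∞) u) (i : Fin n) (x) :
    D i (L V u) x = L V (D i u) x - ∑ j, D i (D j V) x * D j u x := by
  have h1 : ∀ j, DifferentiableAt ℝ (D j u) x := fun j =>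
    ((smooth_D hu).of_le one_le_inf).differentiable (by norm_num) x
  have h2 : ∀ j, DifferentiableAt ℝ (D j (D j u)) x := fun j =>
    ((smooth_D (smooth_D hu)).of_le one_le_inf).differentiable (by norm_num) x
  have h3 : ∀ j, DifferentiableAt ℝ (D j V) x := fun j =>
    (contDiff_D (k := 1) hV (by norm_num)).differentiable (by norm_num) x
  have : L V u = fun x => ∑ j, (D j (D j u) x - D j V x * D j u x) := rfl
  rw [this, D_sum (F := fun j x => D j (D j u) x - D j V x * D j u x)
    (fun j => (h2 j).sub ((h3 j).mul (h1 j)))]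
  simp only [L]
  rw [← Finset.sum_sub_distrib]
  refine Finset.sum_congr rfl fun j _ => ?_
  rw [D_sub (G := fun x => D j V x * D j u x) (h2 j) ((h3 j).mul (h1 j)), D_mul (h3 j) (h1 j)]
  have e1 : D i (D j u) = D j (D i u) := funext fun y => D_comm (hu.of_le two_le_inf) y
  have e2 : D i (D j (D j u)) x = D j (D j (D i u)) x := by
    rw [D_comm ((smooth_D hu).of_le two_le_inf) x, e1]
  rw [e2, e1]; ring

lemma bochner {V ρ : EuclideanSpace ℝ (Fin n) → ℝ} (hV : ContDiff ℝ 2 V) (hρ : Continuous ρ)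
    (hH : ∀ x (a : Fin n → ℝ), ρ x * ∑ i, a i ^ 2 ≤ ∑ i, ∑ j, a i * a j * D i (D j V) x)
    {Λ : ℝ} (hS : ∀ h : EuclideanSpace ℝ (Fin n) → ℝ, ContDiff ℝ (⊤ : ℕ∞) h → HasCompactSupport h →
      Λ * ∫ x, h x ^ 2 * Real.exp (-V x) ≤ (∫ x, (∑ i, D i h x ^ 2) * Real.exp (-V x))
        + ∫ x, ρ x * h x ^ 2 * Real.exp (-V x))
    {u : EuclideanSpace ℝ (Fin n) → ℝ} (hu : ContDiff ℝ (⊤ : ℕ∞) u) (hs : HasCompactSupport u) :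
    Λ * ∫ x, (∑ i, D i u x ^ 2) * Real.exp (-V x) ≤ ∫ x, L V u x ^ 2 * Real.exp (-V x) := by
  have hV1 : ContDiff ℝ 1 V := hV.of_le (by norm_num)
  have he : Continuous (fun x => Real.exp (-V x)) := hV1.neg.exp.continuous
  have cu : ∀ i, Continuous (D i u) := fun i => (smooth_D hu).continuous
  have cL : ∀ i, Continuous (L V (D i u)) := fun i => (cont_L hV (smooth_D hu)).continuous
  have cuu : ∀ i j, Continuous (D j (D i u)) := fun i j => (smooth_D (smooth_D hu)).continuous
  have cVV : ∀ i j, Continuous (D i (D j V)) := fun i j =>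
    cont_D (contDiff_D (k := 1) hV (by norm_num))
  have h1 := L_ibp hV hu (cont_L hV hu) hs
  have h2 : ∀ i, ∫ x, L V (D i u) x * D i u x * Real.exp (-V x) =
      - ∫ x, (∑ j, D j (D i u) x ^ 2) * Real.exp (-V x) := by
    intro i
    rw [L_ibp hV (smooth_D hu) ((smooth_D hu).of_le one_le_inf) (supp_D hs)]
    simp only [sq]
  have hA : ∀ i, Integrable (fun x => L V (D i u) x * D i u x * Real.exp (-V x)) := fun i =>
    intg (by fun_prop) hs (fun x hx => by simp [D_zero hx])
  have hB : Integrable (fun x => (∑ i, ∑ j, D i u x * D j u x * D i (D j V) x) * Real.exp (-V x)) :=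
    intg (by fun_prop) hs (fun x hx => by simp [D_zero hx])
  have hC : ∀ i, Integrable (fun x => D i u x ^ 2 * Real.exp (-V x)) := fun i =>
    intg (by fun_prop) hs (fun x hx => by simp [D_zero hx])
  have hE : ∀ i, Integrable (fun x => ρ x * D i u x ^ 2 * Real.exp (-V x)) := fun i =>
    intg (by fun_prop) hs (fun x hx => by simp [D_zero hx])
  have h3 : ∫ x, (∑ i, D i u x * D i (L V u) x) * Real.exp (-V x) =
      (∑ i, ∫ x, L V (D i u) x * D i u x * Real.exp (-V x)) -
      ∫ x, (∑ i, ∑ j, D i u x * D j u x * D i (D j V) x) * Real.exp (-V x) := by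
    rw [← integral_finsetSum _ (fun i _ => hA i), ← integral_sub (integrable_finsetSum _ (fun i _ => hA i)) hB]
    refine integral_congr_ae (Filter.Eventually.of_forall fun x => ?_)
    simp only [D_L hV hu]
    rw [← Finset.sum_mul, ← sub_mul, ← Finset.sum_sub_distrib]
    congr 1
    refine Finset.sum_congr rfl fun i _ => ?_
    rw [mul_sub, Finset.mul_sum]
    congr 1
    · ring
    · exact Finset.sum_congr rfl fun j _ => by ring
  have h4 : ∫ x, L V u x ^ 2 * Real.exp (-V x) =
      (∑ i, ∫ x, (∑ j, D j (D i u) x ^ 2) * Real.exp (-V x)) +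
      ∫ x, (∑ i, ∑ j, D i u x * D j u x * D i (D j V) x) * Real.exp (-V x) := by
    have : ∫ x, L V u x ^ 2 * Real.exp (-V x) = ∫ x, L V u x * L V u x * Real.exp (-V x) := by
      simp only [sq]
    rw [this, h1, h3, Finset.sum_congr rfl (fun i _ => h2 i), Finset.sum_neg_distrib]
    ring
  have h5 : ∑ i, ∫ x, ρ x * D i u x ^ 2 * Real.exp (-V x) ≤
      ∫ x, (∑ i, ∑ j, D i u x * D j u x * D i (D j V) x) * Real.exp (-V x) := by
    rw [← integral_finsetSum _ (fun i _ => hE i)]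
    refine integral_mono (integrable_finsetSum _ (fun i _ => hE i)) hB fun x => ?_
    have := mul_le_mul_of_nonneg_right (hH x (fun i => D i u x)) (Real.exp_pos (-V x)).le
    simp only [Finset.mul_sum, Finset.sum_mul] at this ⊢
    exact this
  have h6 : ∑ i, Λ * ∫ x, D i u x ^ 2 * Real.exp (-V x) ≤
      ∑ i, ((∫ x, (∑ j, D j (D i u) x ^ 2) * Real.exp (-V x)) + ∫ x, ρ x * D i u x ^ 2 * Real.exp (-V x)) :=
    Finset.sum_le_sum fun i _ => hS _ (smooth_D hu) (supp_D hs)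
  rw [Finset.sum_add_distrib] at h6
  have h7 : Λ * ∫ x, (∑ i, D i u x ^ 2) * Real.exp (-V x) =
      ∑ i, Λ * ∫ x, D i u x ^ 2 * Real.exp (-V x) := by
    simp only [Finset.sum_mul]
    rw [integral_finsetSum _ (fun i _ => hC i), Finset.mul_sum]
  linarith




/-- mollification -/
noncomputable def M (η w : EuclideanSpace ℝ (Fin n) → ℝ) (x : EuclideanSpace ℝ (Fin n)) : ℝ :=
  ∫ y, w y * η (x - y)

lemma M_eq (η w : EuclideanSpace ℝ (Fin n) → ℝ) :
    M η w = w ⋆[ContinuousLinearMap.mul ℝ ℝ, volume] η := by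
  ext x; simp [M, convolution]

lemma M_contDiff {η w : EuclideanSpace ℝ (Fin n) → ℝ} (hη : ContDiff ℝ (⊤ : ℕ∞) η)
    (hs : HasCompactSupport η) (hw : LocallyIntegrable w) : ContDiff ℝ (⊤ : ℕ∞) (M η w) := by
  rw [M_eq]
  exact hs.contDiff_convolution_right _ hw hη

lemma D_M {η w : EuclideanSpace ℝ (Fin n) → ℝ} (hη : ContDiff ℝ (⊤ : ℕ∞) η)
    (hs : HasCompactSupport η) (hw : LocallyIntegrable w) (i : Fin n) (x) :
    D i (M η w) x = M (D i η) w x := by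
  have h := hs.hasFDerivAt_convolution_right (ContinuousLinearMap.mul ℝ ℝ) hw (hη.of_le one_le_inf) x
  rw [← M_eq] at h
  rw [D, h.fderiv, convolution_precompR_apply _ hw (hs.fderiv ℝ)
    ((hη.of_le one_le_inf).continuous_fderiv one_ne_zero), M_eq]
  rfl

lemma cs_shift {η : EuclideanSpace ℝ (Fin n) → ℝ} (hs : HasCompactSupport η) (x) :
    HasCompactSupport (fun y => η (x - y)) :=
  hs.comp_homeomorph (Homeomorph.subLeft x)

lemma cs_mul (a : EuclideanSpace ℝ (Fin n) → ℝ) {b : EuclideanSpace ℝ (Fin n) → ℝ}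
    (hs : HasCompactSupport b) : HasCompactSupport (fun y => a y * b y) := hs.mul_left

lemma int_loc {w b : EuclideanSpace ℝ (Fin n) → ℝ} (hw : LocallyIntegrable w)
    (hb : Continuous b) (hs : HasCompactSupport b) : Integrable (fun y => w y * b y) := by
  have := hw.integrable_smul_left_of_hasCompactSupport hb hs
  simpa [mul_comm] using this

lemma loc_mul {w b : EuclideanSpace ℝ (Fin n) → ℝ} (hw : LocallyIntegrable w)
    (hb : Continuous b) : LocallyIntegrable (fun y => w y * b y) := by
  have h := (locallyIntegrableOn_univ.2 hw).mul_continuousOn hb.continuousOn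
    isClosed_univ.isLocallyClosed
  exact locallyIntegrableOn_univ.1 h

lemma M_integrable {η w : EuclideanSpace ℝ (Fin n) → ℝ} (hη : Integrable η) (hw : Integrable w) :
    Integrable (M η w) := by
  rw [M_eq]; exact hw.integrable_convolution _ hη

lemma M_integral {η w : EuclideanSpace ℝ (Fin n) → ℝ} (hη : Integrable η) (hw : Integrable w)
    (h1 : ∫ x, η x = 1) : ∫ x, M η w x = ∫ x, w x := by
  rw [M_eq, integral_convolution _ hw hη]; simp [h1]

lemma jensen {V g η b : EuclideanSpace ℝ (Fin n) → ℝ} (hV : Continuous V)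
    (hw : LocallyIntegrable (fun y => g y * Real.exp (-V y)))
    (hp : Integrable (fun y => g y ^ 2 * Real.exp (-V y)))
    (hη : Continuous η) (hs : HasCompactSupport η) (h0 : ∀ z, 0 ≤ η z) (h1 : ∫ x, η x = 1)
    (hb : Continuous b) {κ : ℝ} {x}
    (hx : ∀ y, η (x - y) ≠ 0 → |b y| ≤ κ ∧ Real.exp (-V y) ≤ 2 * Real.exp (-V x)) :
    (∫ y, b y * (g y * Real.exp (-V y)) * η (x - y)) ^ 2 ≤
      κ ^ 2 * 2 * Real.exp (-V x) * M η (fun y => g y ^ 2 * Real.exp (-V y)) x := by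
  have hηx : Continuous (fun y => η (x - y)) := by fun_prop
  have hηs := cs_shift hs x
  have hint : ∫ y, η (x - y) = 1 := by rw [integral_sub_left_eq_self (fun y => η y)]; exact h1
  set c := ∫ y, b y * (g y * Real.exp (-V y)) * η (x - y) with hc
  have i1 : Integrable (fun y => b y * (g y * Real.exp (-V y)) * η (x - y)) := by
    have := int_loc hw (b := fun y => b y * η (x - y)) (by fun_prop) (cs_mul b hηs)
    refine this.congr (Filter.Eventually.of_forall fun y => ?_)
    simp only; ring
  have i2 : Integrable (fun y => b y ^ 2 * (g y * Real.exp (-V y)) ^ 2 * η (x - y)) := by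
    have := int_loc hp.locallyIntegrable (b := fun y => b y ^ 2 * Real.exp (-V y) * η (x - y))
      (by fun_prop) (cs_mul (fun y => b y ^ 2 * Real.exp (-V y)) hηs)
    refine this.congr (Filter.Eventually.of_forall fun y => ?_)
    simp only; ring
  have i3 : Integrable (fun y => η (x - y)) := hηx.integrable_of_hasCompactSupport hηs
  have i4 : Integrable (fun y => g y ^ 2 * Real.exp (-V y) * η (x - y)) :=
    int_loc hp.locallyIntegrable hηx hηs
  have k1 : 0 ≤ ∫ y, (b y ^ 2 * (g y * Real.exp (-V y)) ^ 2 * η (x - y)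
      - 2 * c * (b y * (g y * Real.exp (-V y)) * η (x - y)) + c ^ 2 * η (x - y)) := by
    refine integral_nonneg fun y => ?_
    have : 0 ≤ (b y * (g y * Real.exp (-V y)) - c) ^ 2 * η (x - y) :=
      mul_nonneg (sq_nonneg _) (h0 _)
    simp only [Pi.zero_apply]
    linarith
  rw [integral_add (f := fun y => b y ^ 2 * (g y * Real.exp (-V y)) ^ 2 * η (x - y)
      - 2 * c * (b y * (g y * Real.exp (-V y)) * η (x - y))) (i2.sub (i1.const_mul _)) (i3.const_mul _), integral_sub i2 (i1.const_mul _),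
    integral_const_mul, integral_const_mul, hint, ← hc] at k1
  have k2 : ∫ y, b y ^ 2 * (g y * Real.exp (-V y)) ^ 2 * η (x - y) ≤
      ∫ y, κ ^ 2 * 2 * Real.exp (-V x) * (g y ^ 2 * Real.exp (-V y) * η (x - y)) := by
    refine integral_mono i2 (i4.const_mul _) fun y => ?_
    by_cases hy : η (x - y) = 0
    · simp [hy]
    · obtain ⟨a1, a2⟩ := hx y hy
      have a3 : b y ^ 2 ≤ κ ^ 2 := by rw [← sq_abs]; gcongr
      have : b y ^ 2 * Real.exp (-V y) ≤ κ ^ 2 * (2 * Real.exp (-V x)) := by gcongr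
      have h4 : 0 ≤ g y ^ 2 * Real.exp (-V y) * η (x - y) := by
        have := h0 (x - y); positivity
      have := mul_le_mul_of_nonneg_right this h4
      simp only
      linarith
  rw [integral_const_mul] at k2
  simp only [M]
  nlinarith

lemma unif {F : EuclideanSpace ℝ (Fin n) → ℝ} (hF : Continuous F) {K : Set (EuclideanSpace ℝ (Fin n))}
    (hK : IsCompact K) {δ : ℝ} (hδ : 0 < δ) :
    ∃ ε > 0, ∀ x ∈ K, ∀ y, ‖x - y‖ < ε → |F x - F y| < δ := by
  have := hK.uniformContinuousAt_of_continuousAt F (fun a _ => hF.continuousAt)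
    (Metric.dist_mem_uniformity hδ)
  obtain ⟨ε, hε, h⟩ := Metric.mem_uniformity_dist.1 this
  refine ⟨ε, hε, fun x hx y hxy => ?_⟩
  have := h (a := x) (b := y) (by rwa [dist_eq_norm]) hx
  simpa [Real.dist_eq] using this

/-- convergence of pairings -/
lemma pair_close {w φ η : EuclideanSpace ℝ (Fin n) → ℝ} (hw : Integrable w) (hφ : Continuous φ)
    (hφs : HasCompactSupport φ)
    (hη : Continuous η) (hs : HasCompactSupport η) (h0 : ∀ z, 0 ≤ η z) (h1 : ∫ x, η x = 1)
    (hc : Continuous (M η w)) {δ : ℝ}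
    (hx : ∀ x y, η (x - y) ≠ 0 → |φ x - φ y| ≤ δ) :
    |(∫ x, M η w x * φ x) - ∫ x, w x * φ x| ≤ δ * ∫ x, |w x| := by
  have iη : Integrable η := hη.integrable_of_hasCompactSupport hs
  have iwφ := int_loc hw.locallyIntegrable hφ hφs
  rw [← M_integral iη iwφ h1, ← M_integral iη hw.abs h1, ← integral_const_mul,
    ← integral_sub (f := fun x => M η w x * φ x)
      ((hc.mul hφ).integrable_of_hasCompactSupport (cs_mul _ hφs)) (M_integrable iη iwφ)]
  rw [← Real.norm_eq_abs]
  refine norm_integral_le_of_norm_le ((M_integrable iη hw.abs).const_mul _)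
    (Filter.Eventually.of_forall fun x => ?_)
  have hηx : Continuous (fun y => η (x - y)) := by fun_prop
  have hηs := cs_shift hs x
  have i1 := int_loc hw.locallyIntegrable hηx hηs
  have i2 := int_loc iwφ.locallyIntegrable hηx hηs
  have i3 := int_loc hw.abs.locallyIntegrable hηx hηs
  simp only [M]
  rw [← integral_mul_const, ← integral_sub (i1.mul_const _) i2, ← integral_const_mul]
  refine norm_integral_le_of_norm_le (i3.const_mul _) (Filter.Eventually.of_forall fun y => ?_)
  have : w y * η (x - y) * φ x - w y * φ y * η (x - y) = (φ x - φ y) * (w y * η (x - y)) := by ring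
  rw [this, Real.norm_eq_abs, abs_mul, abs_mul, abs_of_nonneg (h0 _)]
  by_cases hy : η (x - y) = 0
  · simp [hy]
  · exact mul_le_mul_of_nonneg_right (hx x y hy) (mul_nonneg (abs_nonneg _) (h0 _))




lemma D_shift {F : EuclideanSpace ℝ (Fin n) → ℝ} (hF : Differentiable ℝ F) (i : Fin n) (x y) :
    D i (fun y => F (x - y)) y = - D i F (x - y) := by
  have h := (hF (x - y)).hasFDerivAt.comp y ((hasFDerivAt_id y).const_sub x)
  have h2 : HasFDerivAt (fun y => F (x - y)) _ y := h
  rw [D, h2.fderiv]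
  simp [D]

lemma D_neg {F : EuclideanSpace ℝ (Fin n) → ℝ} (i : Fin n) (x) :
    D i (fun y => - F y) x = - D i F x := by
  simp [D, fderiv_fun_neg]

lemma div_zero {V w η : EuclideanSpace ℝ (Fin n) → ℝ} (hV : ContDiff ℝ 2 V)
    (hw : LocallyIntegrable w)
    (horth : ∀ u : EuclideanSpace ℝ (Fin n) → ℝ, ContDiff ℝ (⊤ : ℕ∞) u → HasCompactSupport u →
      ∫ y, w y * L V u y = 0)
    (hη : ContDiff ℝ (⊤ : ℕ∞) η) (hs : HasCompactSupport η) (x) :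
    ∑ i, (M (D i (D i η)) w x + M (D i η) (fun y => w y * D i V y) x) = 0 := by
  have hd : Differentiable ℝ η := (hη.of_le one_le_inf).differentiable (by norm_num)
  have hdd : ∀ i, Differentiable ℝ (D i η) := fun i =>
    ((smooth_D hη).of_le one_le_inf).differentiable (by norm_num)
  have cV : ∀ i, Continuous (D i V) := fun i => cont_D (hV.of_le (by norm_num))
  have c1 : ∀ i, Continuous (D i η) := fun i => (smooth_D hη).continuous
  have c2 : ∀ i, Continuous (D i (D i η)) := fun i => (smooth_D (smooth_D hη)).continuous
  have h := horth (fun y => η (x - y)) (hη.comp (contDiff_const.sub contDiff_id)) (cs_shift hs x)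
  rw [← h]
  have e1 : ∀ i, D i (fun y => η (x - y)) = fun y => - D i η (x - y) := fun i =>
    funext fun y => D_shift hd i x y
  have e2 : ∀ i y, D i (D i (fun y => η (x - y))) y = D i (D i η) (x - y) := fun i y => by
    rw [e1, D_neg (F := fun y => D i η (x - y)), D_shift (hdd i)]; simp
  have i1 : ∀ i, Integrable (fun y => w y * D i (D i η) (x - y)) := fun i =>
    int_loc hw (by fun_prop) (cs_shift (supp_D (supp_D hs)) x)
  have i2 : ∀ i, Integrable (fun y => w y * D i V y * D i η (x - y)) := fun i =>
    int_loc (loc_mul hw (cV i)) (by fun_prop) (cs_shift (supp_D hs) x)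
  simp only [M]
  rw [Finset.sum_congr rfl fun i _ => (integral_add (i1 i) (i2 i)).symm,
    ← integral_finsetSum (f := fun i y => w y * D i (D i η) (x - y) + w y * D i V y * D i η (x - y))
      _ fun i _ => (i1 i).add (i2 i)]
  refine integral_congr_ae (Filter.Eventually.of_forall fun y => ?_)
  simp only [L, Finset.mul_sum]
  refine Finset.sum_congr rfl fun i _ => ?_
  rw [e2, e1]; ring

lemma alg_pt (χ d g G e Q q : ℝ) (he : 0 < e) (hq : Q = e * q) :
    χ ^ 2 * G ^ 2 * e ≤ 2 * ((2 * χ * d * g + χ ^ 2 * G) * (e * G - Q)) +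
      (4 * χ ^ 2 * (q ^ 2 * e) + 10 * d ^ 2 * (g ^ 2 * e)) := by
  subst hq
  have : 0 ≤ e * ((χ * G / 2 + 2 * (d * g)) ^ 2 * 2 + 2 * (χ * G / 2 - χ * q) ^ 2
    + 2 * (χ * q - d * g) ^ 2) := by positivity
  nlinarith

lemma cacc {V g η χ : EuclideanSpace ℝ (Fin n) → ℝ} (hV : ContDiff ℝ 2 V)
    (hw : LocallyIntegrable (fun y => g y * Real.exp (-V y)))
    (hp : Integrable (fun y => g y ^ 2 * Real.exp (-V y)))
    (horth : ∀ u : EuclideanSpace ℝ (Fin n) → ℝ, ContDiff ℝ (⊤ : ℕ∞) u → HasCompactSupport u →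
      ∫ y, g y * Real.exp (-V y) * L V u y = 0)
    (hη : ContDiff ℝ (⊤ : ℕ∞) η) (hs : HasCompactSupport η) (h0 : ∀ z, 0 ≤ η z)
    (h1 : ∫ x, η x = 1)
    (hχ : ContDiff ℝ (⊤ : ℕ∞) χ) (hχs : HasCompactSupport χ) (hχ1 : ∀ x, |χ x| ≤ 1)
    {δ : ℝ} (hχD : ∀ i x, |D i χ x| ≤ δ)
    (hx : ∀ x ∈ tsupport χ, ∀ y, η (x - y) ≠ 0 → (∀ i, |D i V x - D i V y| ≤ δ) ∧
      Real.exp (-V y) ≤ 2 * Real.exp (-V x)) :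
    ∫ x, ∑ i, χ x ^ 2 * D i (fun x => M η (fun y => g y * Real.exp (-V y)) x * Real.exp (V x)) x ^ 2
      * Real.exp (-V x) ≤ 28 * n * δ ^ 2 * ∫ y, g y ^ 2 * Real.exp (-V y) := by
  have hV1 : ContDiff ℝ 1 V := hV.of_le (by norm_num)
  have dV := hV1.differentiable (by norm_num)
  have cV0 := hV.continuous
  have cV : ∀ i, Continuous (D i V) := fun i => cont_D hV1
  set w := fun y => g y * Real.exp (-V y) with hwdef
  set p := fun y => g y ^ 2 * Real.exp (-V y) with hpdef
  have hwV : ∀ i, LocallyIntegrable (fun y => w y * D i V y) := fun i => loc_mul hw (cV i)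
  have sM : ContDiff ℝ (⊤ : ℕ∞) (M η w) := M_contDiff hη hs hw
  have sB : ∀ i, ContDiff ℝ (⊤ : ℕ∞) (M η (fun y => w y * D i V y)) := fun i =>
    M_contDiff hη hs (hwV i)
  have iη : Integrable η := hη.continuous.integrable_of_hasCompactSupport hs
  have dM := (sM.of_le one_le_inf).differentiable (by norm_num)
  set γ := fun x => M η w x * Real.exp (V x) with hγ
  have sγ : ContDiff ℝ 1 γ := (sM.of_le one_le_inf).mul hV1.exp
  have dγ := sγ.differentiable (by norm_num)
  have Dγ : ∀ i x, D i γ x = (D i (M η w) x + M η w x * D i V x) * Real.exp (V x) := by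
    intro i x
    rw [hγ, D_mul (dM x) (hV1.exp.differentiable (by norm_num) x), D_exp (dV x)]; ring
  -- the divergence free field
  set P : Fin n → EuclideanSpace ℝ (Fin n) → ℝ := fun i x =>
    D i (M η w) x + M η (fun y => w y * D i V y) x with hP
  have sP : ∀ i, ContDiff ℝ 1 (P i) := fun i =>
    ((smooth_D sM).of_le one_le_inf).add ((sB i).of_le one_le_inf)
  have dP := fun i => (sP i).differentiable (by norm_num)
  have hdiv : ∀ x, ∑ i, D i (P i) x = 0 := by
    intro x
    rw [← div_zero hV hw horth hη hs x]
    refine Finset.sum_congr rfl fun i _ => ?_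
    rw [hP, D_add (((smooth_D sM).of_le one_le_inf).differentiable (by norm_num) x)
      (((sB i).of_le one_le_inf).differentiable (by norm_num) x), D_M hη hs (hwV i),
      show D i (M η w) = M (D i η) w from funext fun y => D_M hη hs hw i y,
      D_M (smooth_D hη) (supp_D hs) hw]
  have sχ1 := hχ.of_le one_le_inf
  have dχ := sχ1.differentiable (by norm_num)
  have cχD : ∀ i, Continuous (D i χ) := fun i => cont_D sχ1
  have cγD : ∀ i, Continuous (D i γ) := fun i => cont_D sγ
  have cP := fun i => (sP i).continuous
  have cχ := hχ.continuous
  have cγ := sγ.continuous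
  have cη := hη.continuous
  set Q : Fin n → EuclideanSpace ℝ (Fin n) → ℝ := fun i x => 
    M η w x * D i V x - M η (fun y => w y * D i V y) x with hQ
  have cQ : ∀ i, Continuous (Q i) := fun i => (sM.continuous.mul (cV i)).sub (sB i).continuous
  have PQ : ∀ i x, P i x = Real.exp (-V x) * D i γ x - Q i x := by
    intro i x
    rw [Dγ]
    have : Real.exp (-V x) * Real.exp (V x) = 1 := by rw [← Real.exp_add]; simp
    simp only [hP, hQ]
    linear_combination (-(D i (M η w) x + M η w x * D i V x)) * this
  have Dχγ : ∀ i x, D i (fun x => χ x ^ 2 * γ x) x = 2 * χ x * D i χ x * γ x + χ x ^ 2 * D i γ x := by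
    intro i x
    have : D i (fun x => χ x ^ 2) x = 2 * χ x * D i χ x := by
      simp only [sq]; rw [D_mul (dχ x) (dχ x)]; ring
    rw [D_mul (F := fun x => χ x ^ 2) ((dχ x).pow 2) (dγ x), this]
  have E0 : ∫ x, ∑ i, (2 * χ x * D i χ x * γ x + χ x ^ 2 * D i γ x) * P i x = 0 := by
    have e : ∀ x, ∑ i, (2 * χ x * D i χ x * γ x + χ x ^ 2 * D i γ x) * P i x =
        ∑ i, D i (fun x => χ x ^ 2 * γ x * P i x) x := by
      intro x
      have : ∀ i, D i (fun x => χ x ^ 2 * γ x * P i x) x =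
          (2 * χ x * D i χ x * γ x + χ x ^ 2 * D i γ x) * P i x + (χ x ^ 2 * γ x) * D i (P i) x := by
        intro i
        rw [D_mul (F := fun x => χ x ^ 2 * γ x) (((dχ x).pow 2).mul (dγ x)) (dP i x), Dχγ]
      simp only [this]
      rw [Finset.sum_add_distrib, ← Finset.mul_sum, hdiv]; simp
    have hcd : ∀ i, ContDiff ℝ 1 (fun x => χ x ^ 2 * γ x * P i x) := fun i =>
      ((sχ1.pow 2).mul sγ).mul (sP i)
    have hcs : ∀ i, HasCompactSupport (fun x => χ x ^ 2 * γ x * P i x) := fun i =>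
      HasCompactSupport.intro' hχs (isClosed_tsupport χ) (fun x hx => by
        simp [image_eq_zero_of_notMem_tsupport hx])
    simp only [e]
    rw [integral_finsetSum]
    · exact Finset.sum_eq_zero fun i _ => integral_D (hcd i) (hcs i)
    · exact fun i _ => (cont_D (hcd i)).integrable_of_hasCompactSupport (supp_D (hcs i))
  -- bounds
  have iMp : Integrable (M η p) := M_integrable iη hp
  have Mp0 : ∀ x, 0 ≤ M η p x := fun x => integral_nonneg fun y => by
    have := h0 (x - y); simp only [hpdef]; positivity
  have bγ : ∀ x ∈ tsupport χ, γ x ^ 2 * Real.exp (-V x) ≤ 2 * M η p x := by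
    intro x hxt
    have := jensen (b := fun _ => 1) (κ := 1) cV0 hw hp cη hs h0 h1 continuous_const
      (x := x) (fun y hy => ⟨by simp, (hx x hxt y hy).2⟩)
    simp only [one_mul, one_pow] at this
    have e : M η w x = ∫ y, g y * Real.exp (-V y) * η (x - y) := rfl
    rw [← e] at this
    have e2 : γ x ^ 2 * Real.exp (-V x) = M η w x ^ 2 * Real.exp (V x) := by
      have : Real.exp (-V x) * Real.exp (V x) = 1 := by rw [← Real.exp_add]; simp
      simp only [hγ]
      linear_combination (M η w x ^ 2 * Real.exp (V x)) * this
    rw [e2]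
    calc M η w x ^ 2 * Real.exp (V x) ≤ (2 * Real.exp (-V x) * M η p x) * Real.exp (V x) := by
          gcongr
      _ = 2 * M η p x * (Real.exp (-V x) * Real.exp (V x)) := by ring
      _ = 2 * M η p x := by rw [← Real.exp_add]; simp
  have bQ : ∀ i, ∀ x ∈ tsupport χ, (Q i x * Real.exp (V x)) ^ 2 * Real.exp (-V x) ≤
      2 * δ ^ 2 * M η p x := by
    intro i x hxt
    have := jensen (b := fun y => D i V x - D i V y) (κ := δ) cV0 hw hp cη hs h0 h1
      (continuous_const.sub (cV i)) (x := x) (fun y hy => ⟨(hx x hxt y hy).1 i, (hx x hxt y hy).2⟩)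
    have e : Q i x = ∫ y, (D i V x - D i V y) * (g y * Real.exp (-V y)) * η (x - y) := by
      simp only [hQ, M]
      rw [← integral_mul_const, ← integral_sub
        ((int_loc hw (by fun_prop) (cs_shift hs x)).mul_const _)
        (int_loc (hwV i) (by fun_prop) (cs_shift hs x))]
      refine integral_congr_ae (Filter.Eventually.of_forall fun y => ?_)
      simp only [hwdef]; ring
    rw [← e] at this
    have e2 : (Q i x * Real.exp (V x)) ^ 2 * Real.exp (-V x) = Q i x ^ 2 * Real.exp (V x) := by
      have : Real.exp (-V x) * Real.exp (V x) = 1 := by rw [← Real.exp_add]; simp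
      linear_combination (Q i x ^ 2 * Real.exp (V x)) * this
    rw [e2]
    calc Q i x ^ 2 * Real.exp (V x) ≤ (δ ^ 2 * 2 * Real.exp (-V x) * M η p x) * Real.exp (V x) := by
          gcongr
      _ = 2 * δ ^ 2 * M η p x * (Real.exp (-V x) * Real.exp (V x)) := by ring
      _ = 2 * δ ^ 2 * M η p x := by rw [← Real.exp_add]; simp
  have iE : Integrable (fun x => ∑ i, (2 * χ x * D i χ x * γ x + χ x ^ 2 * D i γ x) * P i x) :=
    intg (by fun_prop) hχs (fun x hx => by simp [image_eq_zero_of_notMem_tsupport hx])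
  have ce : Continuous (fun x => Real.exp (-V x)) := hV1.neg.exp.continuous
  have iL : Integrable (fun x => ∑ i, χ x ^ 2 * D i γ x ^ 2 * Real.exp (-V x)) :=
    intg (by fun_prop) hχs (fun x hx => by simp [image_eq_zero_of_notMem_tsupport hx])
  have pt : ∀ x, ∑ i, χ x ^ 2 * D i γ x ^ 2 * Real.exp (-V x) ≤
      2 * (∑ i, (2 * χ x * D i χ x * γ x + χ x ^ 2 * D i γ x) * P i x) +
      28 * n * δ ^ 2 * M η p x := by
    intro x
    by_cases hxt : x ∈ tsupport χ
    · have : ∀ i ∈ (Finset.univ : Finset (Fin n)), χ x ^ 2 * D i γ x ^ 2 * Real.exp (-V x) ≤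
          2 * ((2 * χ x * D i χ x * γ x + χ x ^ 2 * D i γ x) * P i x) + 28 * δ ^ 2 * M η p x := by
        intro i _
        have a := alg_pt (χ x) (D i χ x) (γ x) (D i γ x) (Real.exp (-V x)) (Q i x)
          (Q i x * Real.exp (V x)) (Real.exp_pos _) (by
            have : Real.exp (-V x) * Real.exp (V x) = 1 := by rw [← Real.exp_add]; simp
            linear_combination (- Q i x) * this)
        rw [← PQ] at a
        have b1 := bQ i x hxt
        have b2 := bγ x hxt
        have c1 : χ x ^ 2 ≤ 1 := by rw [← sq_abs]; exact pow_le_one₀ (abs_nonneg _) (hχ1 x)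
        have c2 : D i χ x ^ 2 ≤ δ ^ 2 := by
          rw [← sq_abs]; exact pow_le_pow_left₀ (abs_nonneg _) (hχD i x) 2
        have d1 : χ x ^ 2 * ((Q i x * Real.exp (V x)) ^ 2 * Real.exp (-V x)) ≤
            1 * (2 * δ ^ 2 * M η p x) := mul_le_mul c1 b1 (by positivity) (by norm_num)
        have d2 : D i χ x ^ 2 * (γ x ^ 2 * Real.exp (-V x)) ≤ δ ^ 2 * (2 * M η p x) :=
          mul_le_mul c2 b2 (by positivity) (by positivity)
        linarith
      refine (Finset.sum_le_sum this).trans (le_of_eq ?_)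
      rw [Finset.sum_add_distrib, ← Finset.mul_sum]
      simp; ring
    · have := Mp0 x
      simp only [image_eq_zero_of_notMem_tsupport hxt]
      simp
      positivity
  calc _ ≤ ∫ x, (2 * (∑ i, (2 * χ x * D i χ x * γ x + χ x ^ 2 * D i γ x) * P i x) +
      28 * n * δ ^ 2 * M η p x) := integral_mono iL ((iE.const_mul 2).add (iMp.const_mul _)) pt
    _ = _ := by
      rw [integral_add (iE.const_mul 2) (iMp.const_mul _), integral_const_mul, integral_const_mul,
        E0, M_integral iη hp h1]
      ring




lemma cutoff {θ : EuclideanSpace ℝ (Fin n) → ℝ} (hθ : HasCompactSupport θ) {δ : ℝ} (hδ : 0 < δ) :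
    ∃ χ : EuclideanSpace ℝ (Fin n) → ℝ, ContDiff ℝ (⊤ : ℕ∞) χ ∧ HasCompactSupport χ ∧
      (∀ x, |χ x| ≤ 1) ∧ (∀ i x, |D i χ x| ≤ δ) ∧ ∀ x ∈ tsupport θ, χ x = 1 := by
  let b : ContDiffBump (0 : EuclideanSpace ℝ (Fin n)) := ⟨1, 2, by norm_num, by norm_num⟩
  have sb : ContDiff ℝ (⊤ : ℕ∞) (b : EuclideanSpace ℝ (Fin n) → ℝ) := b.contDiff
  have cb : HasCompactSupport (b : EuclideanSpace ℝ (Fin n) → ℝ) := b.hasCompactSupport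
  have hC : ∀ i : Fin n, ∃ C, ∀ x, ‖D i b x‖ ≤ C := fun i =>
    (supp_D (i := i) cb).exists_bound_of_continuous (smooth_D sb).continuous
  choose C hC using hC
  obtain ⟨R0, hR0⟩ := hθ.isBounded.exists_norm_le
  set S := ∑ i, |C i| with hS
  have hS0 : 0 ≤ S := Finset.sum_nonneg fun i _ => abs_nonneg _
  set R := 1 + |R0| + S / δ with hR
  have hRpos : 0 < R := by positivity
  refine ⟨fun x => b (R⁻¹ • x), sb.comp (contDiff_const_smul R⁻¹), ?_, ?_, ?_, ?_⟩
  · exact cb.comp_smul (inv_ne_zero hRpos.ne')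
  · intro x
    rw [abs_of_nonneg b.nonneg]
    exact b.le_one
  · intro i x
    have h := ((sb.of_le one_le_inf).differentiable (by norm_num) (R⁻¹ • x)).hasFDerivAt.comp x
      ((hasFDerivAt_id x).const_smul R⁻¹)
    have h2 : HasFDerivAt (fun x => b (R⁻¹ • x)) _ x := h
    have e : D i (fun x => b (R⁻¹ • x)) x = R⁻¹ * D i b (R⁻¹ • x) := by
      rw [D, h2.fderiv]; simp [D]
    rw [e, abs_mul, abs_of_pos (inv_pos.2 hRpos), inv_mul_le_iff₀ hRpos]
    have h3 : |D i b (R⁻¹ • x)| ≤ S := (hC i _).trans ((le_abs_self _).trans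
      (Finset.single_le_sum (f := fun i => |C i|) (fun i _ => abs_nonneg _) (Finset.mem_univ i)))
    refine h3.trans ?_
    have : S = S / δ * δ := by field_simp
    rw [this]
    gcongr
    have := abs_nonneg R0
    linarith
  · intro x hx
    apply b.one_of_mem_closedBall
    simp only [Metric.mem_closedBall, dist_zero_right, norm_smul, norm_inv, Real.norm_eq_abs,
      abs_of_pos hRpos]
    show R⁻¹ * ‖x‖ ≤ 1
    rw [inv_mul_le_iff₀ hRpos]
    have := hR0 x hx
    have := le_abs_self R0
    have : 0 ≤ S / δ := by positivity
    linarith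

lemma g_D {V g : EuclideanSpace ℝ (Fin n) → ℝ} (hV : ContDiff ℝ 2 V)
    (hw : Integrable (fun y => g y * Real.exp (-V y)))
    (hp : Integrable (fun y => g y ^ 2 * Real.exp (-V y)))
    (horth : ∀ u : EuclideanSpace ℝ (Fin n) → ℝ, ContDiff ℝ (⊤ : ℕ∞) u → HasCompactSupport u →
      ∫ y, g y * Real.exp (-V y) * L V u y = 0)
    {θ : EuclideanSpace ℝ (Fin n) → ℝ} (hθ : ContDiff ℝ (⊤ : ℕ∞) θ) (hθs : HasCompactSupport θ)
    (i : Fin n) : ∫ y, g y * D i θ y = 0 := by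
  have hV1 : ContDiff ℝ 1 V := hV.of_le (by norm_num)
  have cV0 := hV.continuous
  have cV : ∀ i, Continuous (D i V) := fun i => cont_D hV1
  have ce : Continuous (fun x => Real.exp (-V x)) := by fun_prop
  have ce' : Continuous (fun x => Real.exp (V x)) := by fun_prop
  have cθ := hθ.continuous
  have cDθ : Continuous (D i θ) := (smooth_D hθ).continuous
  set N := ∫ y, g y ^ 2 * Real.exp (-V y) with hN
  set B := ∫ y, θ y ^ 2 * Real.exp (V y) with hB
  set A := ∫ y, |g y * Real.exp (-V y)| with hA
  have ee : ∀ x, Real.exp (-V x) * Real.exp (V x) = 1 := fun x => by rw [← Real.exp_add]; simp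
  have key : ∀ δ > 0, |∫ y, g y * D i θ y| ≤ δ * (14 * n * N + B / 2 + A) := by
    intro δ hδ
    obtain ⟨χ, hχ, hχs, hχ1, hχD, hχθ⟩ := cutoff hθs hδ
    set φ := fun x => Real.exp (V x) * D i θ x with hφ
    have cφ : Continuous φ := ce'.mul cDθ
    have sφ : HasCompactSupport φ := cs_mul _ (supp_D hθs)
    obtain ⟨ε1, hε1, h1⟩ := Metric.uniformContinuous_iff.1
      (sφ.uniformContinuous_of_continuous cφ) δ hδ
    obtain ⟨ε2, hε2, h2⟩ := unif cV0 hχs (Real.log_pos one_lt_two)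
    have h3 := fun i => unif (cV i) hχs hδ
    choose ε3 hε3 h3 using h3
    obtain ⟨ε4, hε4, h4⟩ : ∃ ε > 0, ∀ i, ε ≤ ε3 i := by
      obtain hemp | hne := isEmpty_or_nonempty (Fin n)
      · exact ⟨1, one_pos, fun i => (hemp.false i).elim⟩
      · obtain ⟨j, hj⟩ := Finite.exists_min ε3
        exact ⟨ε3 j, hε3 j, hj⟩
    set ε := min ε1 (min ε2 ε4) with hε
    have hεpos : 0 < ε := by positivity
    let b : ContDiffBump (0 : EuclideanSpace ℝ (Fin n)) := ⟨ε / 2, ε, by positivity, by linarith⟩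
    set η := b.normed volume with hη
    have sη : ContDiff ℝ (⊤ : ℕ∞) η := b.contDiff_normed
    have csη : HasCompactSupport η := b.hasCompactSupport_normed
    have η0 : ∀ z, 0 ≤ η z := fun z => b.nonneg_normed z
    have η1 : ∫ x, η x = 1 := b.integral_normed
    have ηs : ∀ z, η z ≠ 0 → ‖z‖ < ε := by
      intro z hz
      have : z ∈ Function.support (b.normed volume) := hz
      rw [b.support_normed_eq] at this
      simpa using this
    set w := fun y => g y * Real.exp (-V y) with hwdef
    have sM : ContDiff ℝ (⊤ : ℕ∞) (M η w) := M_contDiff sη csη hw.locallyIntegrable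
    have pc := pair_close hw cφ sφ sη.continuous csη η0 η1 sM.continuous (δ := δ)
      (fun x y hxy => by
        have := h1 (a := x) (b := y) (by
          rw [dist_eq_norm]; exact (ηs _ hxy).trans_le (min_le_left _ _))
        exact this.le)
    have cc := cacc (δ := δ) hV hw.locallyIntegrable hp horth sη csη η0 η1 hχ hχs hχ1 hχD
      (fun x hx y hxy => by
        have hd := ηs _ hxy
        refine ⟨fun i => (h3 i x hx y (hd.trans_le ?_)).le, ?_⟩
        · exact (min_le_right _ _).trans ((min_le_right _ _).trans (h4 i))
        · have := h2 x hx y (hd.trans_le ((min_le_right _ _).trans (min_le_left _ _)))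
          calc Real.exp (-V y) ≤ Real.exp (Real.log 2 + -V x) := by
                apply Real.exp_le_exp.2
                have := (abs_lt.1 this).2
                linarith
            _ = 2 * Real.exp (-V x) := by rw [Real.exp_add, Real.exp_log two_pos])
    have ewφ : ∀ x, w x * φ x = g x * D i θ x := fun x => by
      simp only [hwdef, hφ]; linear_combination (g x * D i θ x) * ee x
    simp only [ewφ] at pc
    set γ := fun x => M η w x * Real.exp (V x) with hγ
    have sγ : ContDiff ℝ 1 γ := (sM.of_le one_le_inf).mul hV1.exp
    have cγ := sγ.continuous
    have cDγ : ∀ i, Continuous (D i γ) := fun i => cont_D sγ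
    have cχ := hχ.continuous
    have sθ1 := hθ.of_le one_le_inf
    have I1 : Integrable (fun x => D i γ x * θ x) :=
      intg (by fun_prop) hθs (fun x hx => by simp [image_eq_zero_of_notMem_tsupport hx])
    have I2 : Integrable (fun x => γ x * D i θ x) :=
      intg (by fun_prop) hθs (fun x hx => by simp [D_zero hx])
    have hi : (∫ x, D i γ x * θ x) + ∫ x, γ x * D i θ x = 0 := by
      have := integral_D (i := i) (sγ.mul sθ1) (cs_mul γ hθs)
      rw [← integral_add I1 I2, ← this]
      refine integral_congr_ae (Filter.Eventually.of_forall fun x => ?_)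
      exact (D_mul (sγ.differentiable (by norm_num) x) (sθ1.differentiable (by norm_num) x)).symm
    have eMφ : ∫ x, M η w x * φ x = ∫ x, γ x * D i θ x := by
      refine integral_congr_ae (Filter.Eventually.of_forall fun x => ?_)
      simp only [hγ, hφ]; ring
    have J1 : Integrable (fun x => ∑ i, χ x ^ 2 * D i γ x ^ 2 * Real.exp (-V x)) :=
      intg (by fun_prop) hχs (fun x hx => by simp [image_eq_zero_of_notMem_tsupport hx])
    have J2 : Integrable (fun x => θ x ^ 2 * Real.exp (V x)) :=
      intg (by fun_prop) hθs (fun x hx => by simp [image_eq_zero_of_notMem_tsupport hx])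
    have pt : ∀ x, |D i γ x * θ x| ≤ 1 / (2 * δ) * (∑ i, χ x ^ 2 * D i γ x ^ 2 * Real.exp (-V x))
        + δ / 2 * (θ x ^ 2 * Real.exp (V x)) := by
      intro x
      have hsum : χ x ^ 2 * D i γ x ^ 2 * Real.exp (-V x) ≤
          ∑ i, χ x ^ 2 * D i γ x ^ 2 * Real.exp (-V x) :=
        Finset.single_le_sum (f := fun i => χ x ^ 2 * D i γ x ^ 2 * Real.exp (-V x))
          (fun i _ => by positivity) (Finset.mem_univ i)
      have h5 : |D i γ x * θ x| ≤ 1 / (2 * δ) * (χ x ^ 2 * D i γ x ^ 2 * Real.exp (-V x))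
        + δ / 2 * (θ x ^ 2 * Real.exp (V x)) := by
        by_cases hx : x ∈ tsupport θ
        · rw [hχθ x hx]
          have e1 := ee x
          have p1 := Real.exp_pos (-V x)
          set p := Real.exp (-V x)
          set q := Real.exp (V x)
          rw [show 1 / (2 * δ) * (1 ^ 2 * D i γ x ^ 2 * p) + δ / 2 * (θ x ^ 2 * q) =
            (D i γ x ^ 2 * p + δ ^ 2 * θ x ^ 2 * q) / (2 * δ) by field_simp]
          rw [le_div_iff₀ (by positivity)]
          have hab : |D i γ x * θ x| * (2 * δ) = 2 * (|D i γ x| * p) * (δ * |θ x|) * q := by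
            rw [abs_mul]; linear_combination (-2 * |D i γ x| * |θ x| * δ) * e1
          have hq : 0 < q := Real.exp_pos _
          have sqn : 0 ≤ (|D i γ x| * p - δ * |θ x|) ^ 2 * q := by positivity
          have s1 := sq_abs (D i γ x)
          have s2 := sq_abs (θ x)
          have : (|D i γ x| * p) ^ 2 * q = D i γ x ^ 2 * p := by
            rw [← s1]; linear_combination (|D i γ x| ^ 2 * p) * e1
          have : (δ * |θ x|) ^ 2 * q = δ ^ 2 * θ x ^ 2 * q := by rw [← s2]; ring
          rw [hab]
          nlinarith
        · rw [image_eq_zero_of_notMem_tsupport hx]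
          simp only [mul_zero, abs_zero]
          positivity
      refine h5.trans ?_
      gcongr
    have bd : |∫ x, D i γ x * θ x| ≤ δ * (14 * n * N + B / 2) := by
      calc |∫ x, D i γ x * θ x| ≤ ∫ x, |D i γ x * θ x| := abs_integral_le_integral_abs
        _ ≤ ∫ x, (1 / (2 * δ) * (∑ i, χ x ^ 2 * D i γ x ^ 2 * Real.exp (-V x))
            + δ / 2 * (θ x ^ 2 * Real.exp (V x))) :=
          integral_mono I1.abs ((J1.const_mul _).add (J2.const_mul _)) pt
        _ = 1 / (2 * δ) * (∫ x, ∑ i, χ x ^ 2 * D i γ x ^ 2 * Real.exp (-V x)) + δ / 2 * B := by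
          rw [integral_add (J1.const_mul _) (J2.const_mul _), integral_const_mul,
            integral_const_mul]
        _ ≤ 1 / (2 * δ) * (28 * n * δ ^ 2 * N) + δ / 2 * B := by gcongr
        _ = _ := by field_simp; ring
    rw [eMφ, show ∫ x, γ x * D i θ x = - ∫ x, D i γ x * θ x by linarith] at pc
    have a1 := abs_le.1 pc
    have a2 := abs_le.1 bd
    rw [abs_le]
    constructor <;> linarith
  set T := 14 * n * N + B / 2 + A
  by_contra hne
  have hpos : 0 < |∫ y, g y * D i θ y| := abs_pos.2 hne
  set I := |∫ y, g y * D i θ y|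
  have h1 := key (I / (2 * (|T| + 1))) (by positivity)
  have h2 : I / (2 * (|T| + 1)) * T ≤ I / (2 * (|T| + 1)) * (|T| + 1) := by
    gcongr; linarith [le_abs_self T]
  have h3 : I / (2 * (|T| + 1)) * (|T| + 1) = I / 2 := by
    have : |T| + 1 ≠ 0 := by positivity
    field_simp
  linarith

lemma D_all_zero {F : EuclideanSpace ℝ (Fin n) → ℝ} (hF : Differentiable ℝ F)
    (h : ∀ i x, D i F x = 0) (x y) : F x = F y := by
  refine is_const_of_fderiv_eq_zero hF (fun x => ?_) x y
  apply ContinuousLinearMap.coe_injective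
  refine (EuclideanSpace.basisFun (Fin n) ℝ).toBasis.ext fun i => ?_
  have := h i x
  simpa [D] using this

lemma g_const {V g : EuclideanSpace ℝ (Fin n) → ℝ} (hV : ContDiff ℝ 2 V)
    (hw : Integrable (fun y => g y * Real.exp (-V y)))
    (hp : Integrable (fun y => g y ^ 2 * Real.exp (-V y)))
    (horth : ∀ u : EuclideanSpace ℝ (Fin n) → ℝ, ContDiff ℝ (⊤ : ℕ∞) u → HasCompactSupport u →
      ∫ y, g y * Real.exp (-V y) * L V u y = 0) : ∃ c, ∀ᵐ x, g x = c := by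
  have cV0 := hV.continuous
  have hg : LocallyIntegrable g := by
    have := loc_mul hw.locallyIntegrable (b := fun x => Real.exp (V x)) (by fun_prop)
    refine this.congr (Filter.Eventually.of_forall fun x => ?_)
    simp [mul_assoc, ← Real.exp_add]
  let b : ℕ → ContDiffBump (0 : EuclideanSpace ℝ (Fin n)) := fun k =>
    ⟨1 / (k + 1) / 2, 1 / (k + 1), by positivity, by
      have : (0:ℝ) < 1 / (k + 1) := by positivity
      linarith⟩
  have hb : Filter.Tendsto (fun k => (b k).rOut) Filter.atTop (nhds 0) :=
    tendsto_one_div_add_atTop_nhds_zero_nat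
  have hb2 : ∀ᶠ k in Filter.atTop, (b k).rOut ≤ 2 * (b k).rIn :=
    Filter.Eventually.of_forall fun k => by
      show (1 : ℝ) / (k + 1) ≤ 2 * (1 / (k + 1) / 2)
      linarith
  have ht := ContDiffBump.ae_convolution_tendsto_right_of_locallyIntegrable (μ := volume) hb hb2 hg
  have hM : ∀ k x, ((b k).normed volume ⋆[ContinuousLinearMap.lsmul ℝ ℝ, volume] g) x =
      M ((b k).normed volume) g x := by
    intro k x
    rw [convolution_eq_swap]
    simp [M, mul_comm]
  have hc : ∀ k x, M ((b k).normed volume) g x = M ((b k).normed volume) g 0 := by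
    intro k x
    have sη : ContDiff ℝ (⊤ : ℕ∞) ((b k).normed volume) := (b k).contDiff_normed
    have csη : HasCompactSupport ((b k).normed volume) := (b k).hasCompactSupport_normed
    have sM := M_contDiff sη csη hg
    refine D_all_zero ((sM.of_le one_le_inf).differentiable (by norm_num)) (fun i x => ?_) x 0
    rw [D_M sη csη hg, M]
    have h := g_D hV hw hp horth (θ := fun y => (b k).normed volume (x - y))
      (sη.comp (contDiff_const.sub contDiff_id)) (cs_shift csη x) i
    simp only [D_shift ((sη.of_le one_le_inf).differentiable (by norm_num))] at h
    simp only [mul_neg, integral_neg, neg_eq_zero] at h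
    exact h
  simp only [hM] at ht
  obtain ⟨x0, hx0⟩ := ht.exists
  refine ⟨g x0, ?_⟩
  filter_upwards [ht] with x hx
  simp only [hc _ x] at hx
  simp only [hc _ x0] at hx0
  exact tendsto_nhds_unique hx hx0




/-- weighted measure -/
noncomputable def nu (V : EuclideanSpace ℝ (Fin n) → ℝ) : Measure (EuclideanSpace ℝ (Fin n)) :=
  volume.withDensity (fun x => ENNReal.ofReal (Real.exp (-V x)))

lemma nu_int {V : EuclideanSpace ℝ (Fin n) → ℝ} (hV : Continuous V)
    (F : EuclideanSpace ℝ (Fin n) → ℝ) : ∫ x, F x ∂(nu V) = ∫ x, F x * Real.exp (-V x) := by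
  rw [nu, integral_withDensity_eq_integral_toReal_smul (by fun_prop) (by simp)]
  refine integral_congr_ae (Filter.Eventually.of_forall fun x => ?_)
  simp [ENNReal.toReal_ofReal (Real.exp_pos _).le, mul_comm]

lemma nu_integrable {V : EuclideanSpace ℝ (Fin n) → ℝ} (hV : Continuous V)
    (F : EuclideanSpace ℝ (Fin n) → ℝ) :
    Integrable F (nu V) ↔ Integrable (fun x => F x * Real.exp (-V x)) := by
  rw [nu, integrable_withDensity_iff (by fun_prop) (by simp)]
  simp [ENNReal.toReal_ofReal (Real.exp_pos _).le]

lemma nu_prob {V : EuclideanSpace ℝ (Fin n) → ℝ} (hVi : Integrable (fun x => Real.exp (-V x)))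
    (h1 : ∫ x, Real.exp (-V x) = 1) : IsProbabilityMeasure (nu V) := by
  constructor
  rw [nu, withDensity_apply _ MeasurableSet.univ, Measure.restrict_univ,
    ← ofReal_integral_eq_lintegral_ofReal hVi
      (Filter.Eventually.of_forall fun x => (Real.exp_pos _).le), h1]
  simp

lemma L_add {V u v : EuclideanSpace ℝ (Fin n) → ℝ} (hu : ContDiff ℝ (⊤ : ℕ∞) u)
    (hv : ContDiff ℝ (⊤ : ℕ∞) v) (x) : L V (fun y => u y + v y) x = L V u x + L V v x := by
  have du := (hu.of_le one_le_inf).differentiable (by norm_num)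
  have dv := (hv.of_le one_le_inf).differentiable (by norm_num)
  have e : ∀ i, D i (fun y => u y + v y) = fun y => D i u y + D i v y := fun i =>
    funext fun y => D_add (du y) (dv y)
  simp only [L]
  rw [← Finset.sum_add_distrib]
  refine Finset.sum_congr rfl fun i _ => ?_
  rw [e, D_add (((smooth_D hu).of_le one_le_inf).differentiable (by norm_num) x)
    (((smooth_D hv).of_le one_le_inf).differentiable (by norm_num) x)]
  ring

lemma L_smul {V u : EuclideanSpace ℝ (Fin n) → ℝ} (hu : ContDiff ℝ (⊤ : ℕ∞) u) (c : ℝ)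
    (x) : L V (fun y => c * u y) x = c * L V u x := by
  have du := (hu.of_le one_le_inf).differentiable (by norm_num)
  have e : ∀ i, D i (fun y => c * u y) = fun y => c * D i u y := fun i =>
    funext fun y => D_const_mul c (du y)
  simp only [L]
  rw [Finset.mul_sum]
  refine Finset.sum_congr rfl fun i _ => ?_
  rw [e, D_const_mul c (((smooth_D hu).of_le one_le_inf).differentiable (by norm_num) x)]
  ring

lemma memLp_bdd {V F : EuclideanSpace ℝ (Fin n) → ℝ} [IsFiniteMeasure (nu V)]
    (hF : Continuous F) {C : ℝ} (hC : ∀ x, ‖F x‖ ≤ C) : MemLp F 2 (nu V) :=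
  MemLp.of_bound hF.aestronglyMeasurable C (Filter.Eventually.of_forall hC)

lemma dense {V F : EuclideanSpace ℝ (Fin n) → ℝ} (hV : ContDiff ℝ 2 V)
    (hVi : Integrable (fun x => Real.exp (-V x))) (h1 : ∫ x, Real.exp (-V x) = 1)
    (hF : Continuous F) {C : ℝ} (hC : ∀ x, ‖F x‖ ≤ C) (hF0 : ∫ x, F x * Real.exp (-V x) = 0)
    {δ : ℝ} (hδ : 0 < δ) :
    ∃ u : EuclideanSpace ℝ (Fin n) → ℝ, ContDiff ℝ (⊤ : ℕ∞) u ∧ HasCompactSupport u ∧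
      ∫ x, (F x - L V u x) ^ 2 * Real.exp (-V x) ≤ δ ^ 2 := by
  have := nu_prob hVi h1
  have cV := hV.continuous
  have hz : ∀ x, L V (fun _ => 0) x = 0 := fun x => L_zero (by simp [tsupport])
  let S : Submodule ℝ (Lp ℝ 2 (nu V)) :=
    { carrier := {v | ∃ u : EuclideanSpace ℝ (Fin n) → ℝ, ContDiff ℝ (⊤ : ℕ∞) u ∧
        HasCompactSupport u ∧ v =ᵐ[nu V] L V u}
      zero_mem' := ⟨fun _ => 0, contDiff_const, HasCompactSupport.zero, by
        filter_upwards [Lp.coeFn_zero ℝ 2 (nu V)] with x hx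
        rw [hx, hz]; rfl⟩
      add_mem' := by
        rintro a b ⟨u, hu, hus, hu2⟩ ⟨v, hv, hvs, hv2⟩
        refine ⟨fun y => u y + v y, hu.add hv, hus.add hvs, ?_⟩
        filter_upwards [Lp.coeFn_add a b, hu2, hv2] with x h h' h''
        rw [h, L_add hu hv, ← h', ← h'']; rfl
      smul_mem' := by
        rintro c a ⟨u, hu, hus, hu2⟩
        refine ⟨fun y => c * u y, contDiff_const.mul hu, cs_mul _ hus, ?_⟩
        filter_upwards [Lp.coeFn_smul c a, hu2] with x h h'
        rw [h, L_smul hu, ← h']; rfl }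
  have mF := memLp_bdd (V := V) hF hC
  have hmem : mF.toLp F ∈ Sᗮᗮ := by
    rw [Submodule.mem_orthogonal]
    intro g hg
    rw [Submodule.mem_orthogonal] at hg
    have mg := Lp.memLp g
    have i2 := mg.integrable_sq
    have i1 := mg.integrable (by norm_num)
    rw [nu_integrable cV] at i1 i2
    obtain ⟨c, hc⟩ := g_const hV i1 i2 (by
      intro u hu hus
      obtain ⟨K, hK⟩ := (supp_L (V := V) hus).exists_bound_of_continuous (cont_L hV hu).continuous
      have mL := memLp_bdd (V := V) (cont_L hV hu).continuous hK
      have h := hg (mL.toLp _) ⟨u, hu, hus, mL.coeFn_toLp⟩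
      rw [L2.inner_def] at h
      have h2 : ∫ x, L V u x * g x ∂(nu V) = 0 := by
        rw [← h]
        refine integral_congr_ae ?_
        filter_upwards [mL.coeFn_toLp] with x hx
        simp [hx, mul_comm]
      rw [nu_int cV] at h2
      rw [← h2]
      refine integral_congr_ae (Filter.Eventually.of_forall fun x => ?_)
      simp only; ring)
    have hc' : ∀ᵐ x ∂(nu V), g x = c :=
      (withDensity_absolutelyContinuous _ _).ae_le hc
    rw [L2.inner_def]
    have : ∫ x, c * F x ∂(nu V) = 0 := by
      rw [integral_const_mul, nu_int cV, hF0, mul_zero]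
    rw [← this]
    refine integral_congr_ae ?_
    filter_upwards [hc', mF.coeFn_toLp] with x h h'
    simp [h, h', mul_comm]
  rw [Submodule.orthogonal_orthogonal_eq_closure, ← SetLike.mem_coe,
    Submodule.topologicalClosure_coe, Metric.mem_closure_iff] at hmem
  obtain ⟨s, ⟨u, hu, hus, hu2⟩, hs⟩ := hmem δ hδ
  refine ⟨u, hu, hus, ?_⟩
  rw [dist_eq_norm] at hs
  have h3 : ‖mF.toLp F - s‖ ^ 2 ≤ δ ^ 2 := by gcongr
  refine le_trans (le_of_eq ?_) h3
  rw [← real_inner_self_eq_norm_sq, L2.inner_def, ← nu_int cV (fun x => (F x - L V u x) ^ 2)]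
  refine integral_congr_ae ?_
  filter_upwards [Lp.coeFn_sub (mF.toLp F) s, hu2, mF.coeFn_toLp] with x h h' h''
  rw [h]
  simp [h', h'', sq]

lemma thmT {V ρ : EuclideanSpace ℝ (Fin n) → ℝ} (hV : ContDiff ℝ 2 V) (hρ : Continuous ρ)
    (hVi : Integrable (fun x => Real.exp (-V x))) (h1 : ∫ x, Real.exp (-V x) = 1)
    (hH : ∀ x (a : Fin n → ℝ), ρ x * ∑ i, a i ^ 2 ≤ ∑ i, ∑ j, a i * a j * D i (D j V) x)
    {Λ : ℝ} (hΛ : 0 < Λ)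
    (hS : ∀ h : EuclideanSpace ℝ (Fin n) → ℝ, ContDiff ℝ (⊤ : ℕ∞) h → HasCompactSupport h →
      Λ * ∫ x, h x ^ 2 * Real.exp (-V x) ≤ (∫ x, (∑ i, D i h x ^ 2) * Real.exp (-V x))
        + ∫ x, ρ x * h x ^ 2 * Real.exp (-V x))
    {f : EuclideanSpace ℝ (Fin n) → ℝ} (hf : ContDiff ℝ (⊤ : ℕ∞) f) (hs : HasCompactSupport f) :
    (∫ x, f x ^ 2 * Real.exp (-V x)) - (∫ x, f x * Real.exp (-V x)) ^ 2 ≤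
      (1 / Λ) * ∫ x, (∑ i, D i f x ^ 2) * Real.exp (-V x) := by
  have cV := hV.continuous
  have cf := hf.continuous
  have ce : Continuous (fun x => Real.exp (-V x)) := by fun_prop
  set c := ∫ x, f x * Real.exp (-V x) with hc
  set A := ∫ x, (∑ i, D i f x ^ 2) * Real.exp (-V x) with hA
  have If : Integrable (fun x => f x * Real.exp (-V x)) :=
    intg (by fun_prop) hs (fun x hx => by simp [image_eq_zero_of_notMem_tsupport hx])
  have If2 : Integrable (fun x => f x ^ 2 * Real.exp (-V x)) :=
    intg (by fun_prop) hs (fun x hx => by simp [image_eq_zero_of_notMem_tsupport hx])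
  set F := fun x => f x - c with hF
  have cF : Continuous F := by fun_prop
  obtain ⟨K, hK⟩ := hs.exists_bound_of_continuous cf
  have bF : ∀ x, ‖F x‖ ≤ K + ‖c‖ := fun x => (norm_sub_le _ _).trans (by gcongr; exact hK x)
  have hF0 : ∫ x, F x * Real.exp (-V x) = 0 := by
    simp only [hF, sub_mul]
    rw [integral_sub If (hVi.const_mul c), integral_const_mul, h1, ← hc]; ring
  have eF2 : ∀ x, F x ^ 2 * Real.exp (-V x) = (f x ^ 2 * Real.exp (-V x) -
      2 * c * (f x * Real.exp (-V x))) + c ^ 2 * Real.exp (-V x) := fun x => by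
    simp only [hF]; ring
  have iF2 : Integrable (fun x => F x ^ 2 * Real.exp (-V x)) := by
    simp only [eF2]
    exact (If2.sub (If.const_mul _)).add (hVi.const_mul _)
  have hF2 : ∫ x, F x ^ 2 * Real.exp (-V x) = (∫ x, f x ^ 2 * Real.exp (-V x)) - c ^ 2 := by
    simp only [eF2]
    rw [integral_add (f := fun x => f x ^ 2 * Real.exp (-V x) - 2 * c * (f x * Real.exp (-V x)))
      (If2.sub (If.const_mul _)) (hVi.const_mul _), integral_sub If2 (If.const_mul _),
      integral_const_mul, integral_const_mul, h1, ← hc]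
    ring
  rw [← hF2]
  apply le_of_forall_pos_le_add
  intro δ hδ
  obtain ⟨u, hu, hus, hd⟩ := dense hV hVi h1 cF bF hF0 (Real.sqrt_pos.2 hδ)
  rw [Real.sq_sqrt hδ.le] at hd
  have cL := (cont_L hV hu).continuous
  have cDu : ∀ i, Continuous (D i u) := fun i => (smooth_D hu).continuous
  have cDf : ∀ i, Continuous (D i f) := fun i => (smooth_D hf).continuous
  have bo := bochner hV hρ hH hS hu hus
  have sF : ContDiff ℝ 1 F := (hf.of_le one_le_inf).sub contDiff_const
  have ib := L_ibp hV hu sF hus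
  have DF : ∀ i x, D i F x = D i f x := fun i x => by
    simp [hF, D, fderiv_sub_const]
  simp only [DF] at ib
  have iL2 : Integrable (fun x => L V u x ^ 2 * Real.exp (-V x)) :=
    intg (by fun_prop) hus (fun x hx => by simp [L_zero hx])
  have iLF : Integrable (fun x => L V u x * F x * Real.exp (-V x)) :=
    intg (by fun_prop) hus (fun x hx => by simp [L_zero hx])
  have iuu : Integrable (fun x => (∑ i, D i u x ^ 2) * Real.exp (-V x)) :=
    intg (by fun_prop) hus (fun x hx => by simp [D_zero hx])
  have iff' : Integrable (fun x => (∑ i, D i f x ^ 2) * Real.exp (-V x)) :=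
    intg (by fun_prop) hs (fun x hx => by simp [D_zero hx])
  have iuf : Integrable (fun x => (∑ i, D i u x * D i f x) * Real.exp (-V x)) :=
    intg (by fun_prop) hus (fun x hx => by simp [D_zero hx])
  have eq1 : ∫ x, (F x - L V u x) ^ 2 * Real.exp (-V x) = (∫ x, F x ^ 2 * Real.exp (-V x)) -
      2 * (∫ x, L V u x * F x * Real.exp (-V x)) + ∫ x, L V u x ^ 2 * Real.exp (-V x) := by
    rw [← integral_const_mul, ← integral_sub iF2 (iLF.const_mul 2),
      ← integral_add (f := fun x => F x ^ 2 * Real.exp (-V x) -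
        2 * (L V u x * F x * Real.exp (-V x))) (iF2.sub (iLF.const_mul 2)) iL2]
    refine integral_congr_ae (Filter.Eventually.of_forall fun x => ?_)
    simp only; ring
  have cs : - 2 * ∫ x, (∑ i, D i u x * D i f x) * Real.exp (-V x) ≤
      (1 / Λ) * A + Λ * ∫ x, (∑ i, D i u x ^ 2) * Real.exp (-V x) := by
    rw [hA, ← integral_const_mul, ← integral_const_mul, ← integral_const_mul,
      ← integral_add (iff'.const_mul _) (iuu.const_mul _)]
    refine integral_mono (iuf.const_mul _) ((iff'.const_mul _).add (iuu.const_mul _)) fun x => ?_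
    simp only
    have : ∀ i ∈ (Finset.univ : Finset (Fin n)), -2 * (D i u x * D i f x) ≤
        1 / Λ * D i f x ^ 2 + Λ * D i u x ^ 2 := by
      intro i _
      have : 0 ≤ (D i f x + Λ * D i u x) ^ 2 / Λ := by positivity
      have e : (D i f x + Λ * D i u x) ^ 2 / Λ =
        1 / Λ * D i f x ^ 2 + Λ * D i u x ^ 2 + 2 * (D i u x * D i f x) := by field_simp; ring
      linarith
    have := Finset.sum_le_sum this
    rw [Finset.sum_add_distrib, ← Finset.mul_sum, ← Finset.mul_sum, ← Finset.mul_sum] at this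
    have p := Real.exp_pos (-V x)
    calc _ = (-2 * ∑ i, D i u x * D i f x) * Real.exp (-V x) := by ring
      _ ≤ (1 / Λ * ∑ i, D i f x ^ 2 + Λ * ∑ i, D i u x ^ 2) * Real.exp (-V x) := by gcongr
      _ = _ := by ring
  linarith




lemma scal {V ρ h : EuclideanSpace ℝ (Fin n) → ℝ} (hV : Continuous V) (hρ : Continuous ρ)
    (hVi : Integrable (fun x => Real.exp (-V x))) (h1 : ∫ x, Real.exp (-V x) = 1)
    (hρi : Integrable (fun x => ρ x * Real.exp (-V x)))
    {r O a ε G : ℝ} (hr : 0 < r) (hlo : ∀ x, r ≤ ρ x) (hhi : ∀ x, ρ x ≤ r + O)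
    (ha : ∫ x, ρ x * Real.exp (-V x) = r + a) (ha0 : 0 ≤ a) (hO : 0 < O) (hε : 0 ≤ ε)
    (hεa : ε * (r + a + O) ≤ a * r) (ch : Continuous h) (hs : HasCompactSupport h)
    (hG : r * ((∫ x, h x ^ 2 * Real.exp (-V x)) - (∫ x, h x * Real.exp (-V x)) ^ 2) ≤ G)
    (hG0 : 0 ≤ G) :
    (r + ε) * ∫ x, h x ^ 2 * Real.exp (-V x) ≤ G + ∫ x, ρ x * h x ^ 2 * Real.exp (-V x) := by
  have ce : Continuous (fun x => Real.exp (-V x)) := by fun_prop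
  have I1 : Integrable (fun x => h x * Real.exp (-V x)) :=
    intg (by fun_prop) hs (fun x hx => by simp [image_eq_zero_of_notMem_tsupport hx])
  have I2 : Integrable (fun x => h x ^ 2 * Real.exp (-V x)) :=
    intg (by fun_prop) hs (fun x hx => by simp [image_eq_zero_of_notMem_tsupport hx])
  have I3 : Integrable (fun x => ρ x * h x * Real.exp (-V x)) :=
    intg (by fun_prop) hs (fun x hx => by simp [image_eq_zero_of_notMem_tsupport hx])
  have I4 : Integrable (fun x => ρ x * h x ^ 2 * Real.exp (-V x)) :=
    intg (by fun_prop) hs (fun x hx => by simp [image_eq_zero_of_notMem_tsupport hx])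
  set H := ∫ x, h x ^ 2 * Real.exp (-V x) with hH
  set c := ∫ x, h x * Real.exp (-V x) with hc
  set R2 := ∫ x, ρ x * h x ^ 2 * Real.exp (-V x) with hR2
  set R1 := ∫ x, ρ x * h x * Real.exp (-V x) with hR1
  have hT : r * H ≤ R2 := by
    rw [hH, hR2, ← integral_const_mul]
    refine integral_mono (I2.const_mul r) I4 fun x => ?_
    have := mul_le_mul_of_nonneg_right (hlo x) (show 0 ≤ h x ^ 2 * Real.exp (-V x) by positivity)
    simp only; linarith
  rcases hε.eq_or_lt with h0 | hεp
  · rw [← h0]; linarith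
  have hap : 0 < a := by
    rcases ha0.eq_or_lt with h0 | h0
    · rw [← h0] at hεa
      have : 0 < ε * (r + 0 + O) := by positivity
      linarith
    · exact h0
  have hlt : ε < a := by
    by_contra hge
    push Not at hge
    have : a * (r + a + O) ≤ ε * (r + a + O) := by gcongr
    nlinarith
  -- sigma
  have hσ : 0 ≤ H - c ^ 2 ∧ R2 - 2 * c * R1 + c ^ 2 * (r + a) - r * (H - c ^ 2) ≤ O * (H - c ^ 2) := by
    have eσ : ∫ x, (h x - c) ^ 2 * Real.exp (-V x) = H - c ^ 2 := by
      have e : ∀ x, (h x - c) ^ 2 * Real.exp (-V x) = (h x ^ 2 * Real.exp (-V x) -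
        2 * c * (h x * Real.exp (-V x))) + c ^ 2 * Real.exp (-V x) := fun x => by ring
      simp only [e]
      rw [integral_add (f := fun x => h x ^ 2 * Real.exp (-V x) - 2 * c * (h x * Real.exp (-V x)))
        (I2.sub (I1.const_mul _)) (hVi.const_mul _), integral_sub I2 (I1.const_mul _),
        integral_const_mul, integral_const_mul, h1, ← hc, ← hH]
      ring
    have iσ : Integrable (fun x => (h x - c) ^ 2 * Real.exp (-V x)) := by
      have e : (fun x => (h x - c) ^ 2 * Real.exp (-V x)) = fun x => (h x ^ 2 * Real.exp (-V x) -
        2 * c * (h x * Real.exp (-V x))) + c ^ 2 * Real.exp (-V x) := by ext x; ring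
      rw [e]
      exact (I2.sub (I1.const_mul _)).add (hVi.const_mul _)
    have eρ : ∫ x, ρ x * (h x - c) ^ 2 * Real.exp (-V x) = R2 - 2 * c * R1 + c ^ 2 * (r + a) := by
      have e : ∀ x, ρ x * (h x - c) ^ 2 * Real.exp (-V x) = (ρ x * h x ^ 2 * Real.exp (-V x) -
        2 * c * (ρ x * h x * Real.exp (-V x))) + c ^ 2 * (ρ x * Real.exp (-V x)) := fun x => by ring
      simp only [e]
      rw [integral_add (f := fun x => ρ x * h x ^ 2 * Real.exp (-V x) -
          2 * c * (ρ x * h x * Real.exp (-V x)))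
        (I4.sub (I3.const_mul _)) (hρi.const_mul _), integral_sub I4 (I3.const_mul _),
        integral_const_mul, integral_const_mul, ha]
    have iρ : Integrable (fun x => ρ x * (h x - c) ^ 2 * Real.exp (-V x)) := by
      have e : (fun x => ρ x * (h x - c) ^ 2 * Real.exp (-V x)) = fun x =>
        (ρ x * h x ^ 2 * Real.exp (-V x) -
        2 * c * (ρ x * h x * Real.exp (-V x))) + c ^ 2 * (ρ x * Real.exp (-V x)) := by ext x; ring
      rw [e]
      exact (I4.sub (I3.const_mul _)).add (hρi.const_mul _)
    constructor
    · rw [← eσ]; exact integral_nonneg fun x => by positivity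
    · have : ∫ x, ρ x * (h x - c) ^ 2 * Real.exp (-V x) ≤
          ∫ x, (r + O) * ((h x - c) ^ 2 * Real.exp (-V x)) := by
        refine integral_mono iρ (iσ.const_mul _) fun x => ?_
        have := mul_le_mul_of_nonneg_right (hhi x)
          (show 0 ≤ (h x - c) ^ 2 * Real.exp (-V x) by positivity)
        simp only; linarith
      rw [integral_const_mul, eσ, eρ] at this
      linarith
  obtain ⟨hσ0, hZ⟩ := hσ
  -- the square
  have hsq : 0 ≤ (a ^ 2 * R2 - 2 * a * ε * c * R1 + ε ^ 2 * c ^ 2 * (r + a)) -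
      r * (a ^ 2 * H - 2 * a * ε * c * c + ε ^ 2 * c ^ 2) := by
    have e : (a ^ 2 * R2 - 2 * a * ε * c * R1 + ε ^ 2 * c ^ 2 * (r + a)) -
      r * (a ^ 2 * H - 2 * a * ε * c * c + ε ^ 2 * c ^ 2) =
      ∫ x, ((a ^ 2 * (ρ x * h x ^ 2 * Real.exp (-V x)) - 2 * a * ε * c * (ρ x * h x * Real.exp (-V x)))
        + ε ^ 2 * c ^ 2 * (ρ x * Real.exp (-V x))) -
        ((r * a ^ 2 * (h x ^ 2 * Real.exp (-V x)) - r * (2 * a * ε * c) * (h x * Real.exp (-V x)))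
        + r * ε ^ 2 * c ^ 2 * Real.exp (-V x)) := by
      rw [integral_sub
        (f := fun x => (a ^ 2 * (ρ x * h x ^ 2 * Real.exp (-V x)) - 2 * a * ε * c * (ρ x * h x * Real.exp (-V x)))
        + ε ^ 2 * c ^ 2 * (ρ x * Real.exp (-V x)))
        (g := fun x => (r * a ^ 2 * (h x ^ 2 * Real.exp (-V x)) - r * (2 * a * ε * c) * (h x * Real.exp (-V x)))
        + r * ε ^ 2 * c ^ 2 * Real.exp (-V x))
        (((I4.const_mul _).sub (I3.const_mul _)).add (hρi.const_mul _))
        (((I2.const_mul _).sub (I1.const_mul _)).add (hVi.const_mul _)),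
        integral_add (f := fun x => a ^ 2 * (ρ x * h x ^ 2 * Real.exp (-V x)) - 2 * a * ε * c * (ρ x * h x * Real.exp (-V x)))
         ((I4.const_mul _).sub (I3.const_mul _)) (hρi.const_mul _),
        integral_add (f := fun x => r * a ^ 2 * (h x ^ 2 * Real.exp (-V x)) - r * (2 * a * ε * c) * (h x * Real.exp (-V x)))
         ((I2.const_mul _).sub (I1.const_mul _)) (hVi.const_mul _),
        integral_sub (I4.const_mul _) (I3.const_mul _), integral_sub (I2.const_mul _) (I1.const_mul _)]
      simp only [integral_const_mul]
      rw [ha, h1, ← hc, ← hH, ← hR2, ← hR1]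
      ring
    rw [e]
    refine integral_nonneg fun x => ?_
    have : 0 ≤ (ρ x - r) * ((a * h x - ε * c) ^ 2 * Real.exp (-V x)) :=
      mul_nonneg (sub_nonneg.2 (hlo x)) (by positivity)
    simp only [Pi.zero_apply]
    linarith
  set σ := H - c ^ 2 with hσd
  have hHe : H = σ + c ^ 2 := by rw [hσd]; ring
  set T := R2 - r * H with hTd
  have hR2e : R2 = T + r * H := by rw [hTd]; ring
  -- eps (a-eps) c^2 <= (a-eps) T + eps O sigma
  have k1 : ε * (a - ε) * c ^ 2 ≤ (a - ε) * T + ε * O * σ := by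
    have q : 0 ≤ a * ((a - ε) * T + ε * (O * σ) - ε * (a - ε) * c ^ 2) := by
      have := mul_le_mul_of_nonneg_left hZ (show 0 ≤ a * ε by positivity)
      rw [hR2e, hHe] at this hsq
      linarith
    have := nonneg_of_mul_nonneg_right q hap
    linarith
  have k2 : ε * O ≤ (r - ε) * (a - ε) := by nlinarith
  have k3 : ε * O * σ ≤ (r - ε) * (a - ε) * σ := by gcongr
  have k4 : (a - ε) * (ε * c ^ 2) ≤ (a - ε) * (T + (r - ε) * σ) := by linarith
  have k5 := le_of_mul_le_mul_left k4 (sub_pos.2 hlt)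
  rw [hR2e, hHe]
  linarith

lemma final_alg {ρ₀ r a O m ε' : ℝ} (h0 : 0 < ρ₀) (hr : ρ₀ ≤ r) (ha : 0 ≤ a) (haO : a ≤ O)
    (hO : 0 < O) (hm : m = r + a)
    (hε' : ε' = ((m - ρ₀) + O ^ 2 / ρ₀) *
      (1 - Real.sqrt (1 - (m - ρ₀) ^ 2 / ((m - ρ₀) + O ^ 2 / ρ₀) ^ 2))) :
    0 ≤ ε' ∧ ρ₀ + ε' ≤ r + a * r / (r + a + O) := by
  have hr0 : 0 < r := by linarith
  set x := m - ρ₀ with hx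
  have hxe : x = a + (r - ρ₀) := by rw [hx, hm]; ring
  have hx0 : 0 ≤ x := by linarith
  set B := O ^ 2 / ρ₀ with hB
  have hB0 : 0 < B := by positivity
  set A := x + B with hA
  have hA0 : 0 < A := by positivity
  have hle : x ^ 2 / A ^ 2 ≤ 1 := by
    rw [div_le_one (by positivity)]; gcongr; linarith
  set q := Real.sqrt (1 - x ^ 2 / A ^ 2) with hq
  have q0 : 0 ≤ q := Real.sqrt_nonneg _
  have q2 : q ^ 2 = 1 - x ^ 2 / A ^ 2 := Real.sq_sqrt (by linarith)
  have q1 : q ≤ 1 := by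
    rw [hq]; apply Real.sqrt_le_one.2
    have : 0 ≤ x ^ 2 / A ^ 2 := by positivity
    linarith
  set y := A * q with hy
  have y2 : y ^ 2 = A ^ 2 - x ^ 2 := by
    rw [hy, mul_pow, q2]; field_simp
  have y0 : 0 ≤ y := by positivity
  have yB : B ≤ y := by
    apply le_of_sq_le_sq _ y0
    rw [y2, hA]; nlinarith
  have e1 : ε' = A - y := by rw [hε', hy]; ring
  have e0 : 0 ≤ ε' := by rw [hε']; apply mul_nonneg hA0.le; linarith
  refine ⟨e0, ?_⟩
  have e2 : ε' * (x + 2 * B) ≤ x ^ 2 := by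
    have : ε' * (A + y) = x ^ 2 := by rw [e1]; linear_combination -y2
    have : ε' * (x + 2 * B) ≤ ε' * (A + y) := mul_le_mul_of_nonneg_left (by linarith) e0
    linarith
  set t := 2 * O ^ 2 / r with ht
  have t0 : 0 < t := by positivity
  have tB : t ≤ 2 * B := by
    rw [ht, hB, mul_div_assoc]; gcongr
  set E := a * r / (r + a + O) with hE
  have E0 : 0 ≤ E := by positivity
  have E1 : a ^ 2 ≤ E * (a + t) := by
    have e : E * (a + t) = a * (a * r + 2 * O ^ 2) / (r + a + O) := by
      rw [hE, ht]; field_simp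
    rw [e, le_div_iff₀ (by positivity)]
    have i1 := mul_le_mul haO haO ha hO.le
    have i2 := mul_le_mul_of_nonneg_right haO hO.le
    have : a * (r + a + O) ≤ a * r + 2 * O ^ 2 := by linarith
    have := mul_le_mul_of_nonneg_left this ha
    linarith
  have E2 : a ≤ t + E := by
    by_contra hc
    push Not at hc
    have : E * (a + t) ≤ (a - t) * (a + t) :=
      mul_le_mul_of_nonneg_right (by linarith) (by linarith)
    have : 0 < t ^ 2 := by positivity
    linarith
  have e3 : x ^ 2 ≤ ((r - ρ₀) + E) * (x + t) := by
    rw [hxe]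
    have := mul_le_mul_of_nonneg_left E2 (sub_nonneg.2 hr)
    linarith
  have e4 : ε' * (x + t) ≤ ((r - ρ₀) + E) * (x + t) := by
    have : ε' * (x + t) ≤ ε' * (x + 2 * B) := by gcongr
    linarith
  have := le_of_mul_le_mul_right e4 (by positivity)
  linarith

lemma main_norm {V ρ : EuclideanSpace ℝ (Fin n) → ℝ} (hV : ContDiff ℝ 2 V) (hρ : Continuous ρ)
    (hVi : Integrable (fun x => Real.exp (-V x))) (h1 : ∫ x, Real.exp (-V x) = 1)
    (hρi : Integrable (fun x => ρ x * Real.exp (-V x)))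
    (hH : ∀ x (a : Fin n → ℝ), ρ x * ∑ i, a i ^ 2 ≤ ∑ i, ∑ j, a i * a j * D i (D j V) x)
    {r O a ε : ℝ} (hr : 0 < r) (hlo : ∀ x, r ≤ ρ x) (hhi : ∀ x, ρ x ≤ r + O)
    (ha : ∫ x, ρ x * Real.exp (-V x) = r + a) (ha0 : 0 ≤ a) (hO : 0 < O) (hε : 0 ≤ ε)
    (hεa : ε * (r + a + O) ≤ a * r)
    {f : EuclideanSpace ℝ (Fin n) → ℝ} (hf : ContDiff ℝ (⊤ : ℕ∞) f) (hs : HasCompactSupport f) :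
    (∫ x, f x ^ 2 * Real.exp (-V x)) - (∫ x, f x * Real.exp (-V x)) ^ 2 ≤
      (1 / (r + ε)) * ∫ x, (∑ i, D i f x ^ 2) * Real.exp (-V x) := by
  have g0 : ∀ h : EuclideanSpace ℝ (Fin n) → ℝ,
      0 ≤ ∫ x, (∑ i, D i h x ^ 2) * Real.exp (-V x) := fun h => integral_nonneg fun x => by
    have : 0 ≤ ∑ i, D i h x ^ 2 := Finset.sum_nonneg fun i _ => sq_nonneg _
    simp only [Pi.zero_apply]; positivity
  refine thmT hV hρ hVi h1 hH (by positivity) (fun h hh hhs => ?_) hf hs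
  refine scal hV.continuous hρ hVi h1 hρi hr hlo hhi ha ha0 hO hε hεa hh.continuous hhs ?_ (g0 h)
  have := thmT (ρ := fun _ => r) hV continuous_const hVi h1 (fun x a => by
      refine le_trans ?_ (hH x a)
      gcongr
      exact hlo x) hr (fun h hh hhs => by
      have := g0 h
      have e : ∫ x, r * h x ^ 2 * Real.exp (-V x) = r * ∫ x, h x ^ 2 * Real.exp (-V x) := by
        rw [← integral_const_mul]; simp only [mul_assoc]
      rw [e]; linarith) hh hhs
  rw [one_div, le_inv_mul_iff₀ hr] at this
  exact this


end PoinAux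

/-- Self-improved Bakry–Émery bound for the Poincaré constant under a
variable positive curvature lower bound, oscillation version. -/
theorem stmt_0 {n : ℕ} (V ρ : EuclideanSpace ℝ (Fin n) → ℝ)
    (hV : ContDiff ℝ 2 V)
    (hVint : Integrable (fun x => Real.exp (-V x)))
    (μ : Measure (EuclideanSpace ℝ (Fin n)))
    (hμ : μ = volume.withDensity
      (fun x => ENNReal.ofReal (Real.exp (-V x) / ∫ y, Real.exp (-V y))))
    (hρcont : Continuous ρ) (hρbdd : ∃ M, ∀ x, |ρ x| ≤ M)
    (hHess : ∀ x u, ρ x * ‖u‖ ^ 2 ≤ iteratedFDeriv ℝ 2 V x ![u, u])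
    (ρ₀ : ℝ) (hρ₀pos : 0 < ρ₀) (hρ₀ : ∀ x, ρ₀ ≤ ρ x)
    (Osc : ℝ) (hOscdef : Osc = (⨆ x, ρ x) - (⨅ x, ρ x)) (hOscpos : 0 < Osc)
    (m : ℝ) (hm : m = ∫ x, ρ x ∂μ)
    (ε' : ℝ)
    (hε' : ε' = ((m - ρ₀) + Osc ^ 2 / ρ₀) *
      (1 - Real.sqrt (1 - (m - ρ₀) ^ 2 / ((m - ρ₀) + Osc ^ 2 / ρ₀) ^ 2))) :
    ∀ f : EuclideanSpace ℝ (Fin n) → ℝ, ContDiff ℝ (⊤ : ℕ∞) f → HasCompactSupport f →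
      ∫ x, f x ^ 2 ∂μ - (∫ x, f x ∂μ) ^ 2 ≤
        (1 / (ρ₀ + ε')) * ∫ x, ‖gradient f x‖ ^ 2 ∂μ := by
  intro f hf hs
  set Z := ∫ y, Real.exp (-V y) with hZ
  have hZ0 : 0 < Z := integral_exp_pos hVint
  set V' : EuclideanSpace ℝ (Fin n) → ℝ := fun x => V x + Real.log Z with hV'
  have hexp : ∀ x, Real.exp (-V' x) = Real.exp (-V x) / Z := fun x => by
    simp only [hV', neg_add, Real.exp_add, Real.exp_neg (Real.log Z), Real.exp_log hZ0]
    rfl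
  have hμ' : μ = PoinAux.nu V' := by
    rw [hμ, PoinAux.nu]
    simp only [hexp]
  have hV'2 : ContDiff ℝ 2 V' := hV.add contDiff_const
  have cV' := hV'2.continuous
  have hVi : Integrable (fun x => Real.exp (-V' x)) := by
    simp only [hexp]; exact hVint.div_const Z
  have h1 : ∫ x, Real.exp (-V' x) = 1 := by
    simp only [hexp]; rw [integral_div, ← hZ, div_self hZ0.ne']
  have hD : ∀ j, PoinAux.D j V' = PoinAux.D j V := fun j => by
    ext x; simp [PoinAux.D, hV', fderiv_add_const]
  obtain ⟨K, hK⟩ := hρbdd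
  have bb : BddBelow (Set.range ρ) := ⟨ρ₀, by rintro _ ⟨x, rfl⟩; exact hρ₀ x⟩
  have ba : BddAbove (Set.range ρ) := ⟨K, by rintro _ ⟨x, rfl⟩; exact (le_abs_self _).trans (hK x)⟩
  set r := ⨅ x, ρ x with hr
  have hlo : ∀ x, r ≤ ρ x := fun x => ciInf_le bb x
  have hhi : ∀ x, ρ x ≤ r + Osc := fun x => by
    have := le_ciSup ba x
    linarith
  have hr0 : ρ₀ ≤ r := le_ciInf hρ₀
  have hrp : 0 < r := by linarith
  have hρi : Integrable (fun x => ρ x * Real.exp (-V' x)) :=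
    hVi.bdd_mul hρcont.aestronglyMeasurable (Filter.Eventually.of_forall hK)
  rw [hμ', PoinAux.nu_int cV'] at hm
  have hmr : r ≤ m := by
    have : ∫ x, r * Real.exp (-V' x) ≤ ∫ x, ρ x * Real.exp (-V' x) :=
      integral_mono (hVi.const_mul r) hρi fun x =>
        mul_le_mul_of_nonneg_right (hlo x) (Real.exp_pos _).le
    rw [integral_const_mul, h1] at this
    linarith
  have hmO : m ≤ r + Osc := by
    have : ∫ x, ρ x * Real.exp (-V' x) ≤ ∫ x, (r + Osc) * Real.exp (-V' x) :=
      integral_mono hρi (hVi.const_mul _) fun x =>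
        mul_le_mul_of_nonneg_right (hhi x) (Real.exp_pos _).le
    rw [integral_const_mul, h1] at this
    linarith
  obtain ⟨e0, e1⟩ := PoinAux.final_alg (a := m - r) hρ₀pos hr0 (by linarith) (by linarith) hOscpos
    (by ring) hε'
  have ha0 : 0 ≤ m - r := by linarith
  have hpos : 0 < r + (m - r) + Osc := by linarith
  have hmain := PoinAux.main_norm (a := m - r) (ε := (m - r) * r / (r + (m - r) + Osc))
    hV'2 hρcont hVi h1 hρi (fun x a => by
      have := hHess x (WithLp.toLp 2 a)
      rw [PoinAux.hess_coord hV, EuclideanSpace.norm_sq_eq] at this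
      simpa [hD] using this) hrp hlo hhi (by rw [← hm]; ring) ha0 hOscpos
    (div_nonneg (mul_nonneg ha0 hrp.le) hpos.le)
    (by rw [div_mul_cancel₀ _ hpos.ne']) hf hs
  rw [hμ', PoinAux.nu_int cV', PoinAux.nu_int cV', PoinAux.nu_int cV']
  simp only [PoinAux.grad_coord]
  refine hmain.trans ?_
  refine mul_le_mul_of_nonneg_right ?_ (integral_nonneg fun x => ?_)
  · exact one_div_le_one_div_of_le (by linarith) e1
  · have : 0 ≤ ∑ i, PoinAux.D i f x ^ 2 := Finset.sum_nonneg fun i _ => sq_nonneg _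
    simp only [Pi.zero_apply]; positivity
end

section
/- Let V : ℝⁿ → ℝ be C² with e^{-V} integrable, and let μ be the probability measure with density proportional to e^{-V}. Let ρ : ℝⁿ → ℝ be Lipschitz with Lipschitz constant ‖ρ‖_Lip > 0 such that ⟨u, Hess V(x) u⟩ ≥ ρ(x)‖u‖² for all x, u ∈ ℝⁿ, and suppose ρ(x) ≥ ρ₀ > 0 for all x. Set m = ∫ρ dμ and ε' = ((m − ρ₀) + 4‖ρ‖²_Lip/ρ₀²)·(1 − √(1 − (m − ρ₀)²/((m − ρ₀) + 4‖ρ‖²_Lip/ρ₀²)²)). Then for every smooth compactly supported f : ℝⁿ → ℝ, Var_μ(f) ≤ (1/(ρ₀ + ε')) ∫‖∇f‖² dμ. -/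
open MeasureTheory Real Set
open scoped ENNReal RealInnerProductSpace

section helpers
open Filter
open scoped ContDiff Topology


abbrev EE (n : ℕ) := EuclideanSpace ℝ (Fin n)

/-- partial derivative -/
noncomputable def pd {n : ℕ} (i : Fin n) (f : EE n → ℝ) (x : EE n) : ℝ :=
  fderiv ℝ f x (EuclideanSpace.single i 1)

/-- minus the generator -/
noncomputable def Lg {n : ℕ} (V u : EE n → ℝ) (x : EE n) : ℝ :=
  ∑ i, (pd i V x * pd i u x - pd i (pd i u) x)

def Tst {n : ℕ} (f : EE n → ℝ) : Prop := ContDiff ℝ ∞ f ∧ HasCompactSupport f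

variable {n : ℕ}

lemma pd_contDiff {f : EE n → ℝ} {k m : ℕ∞ω} (i : Fin n) (hf : ContDiff ℝ m f)
    (h : k + 1 ≤ m) : ContDiff ℝ k (pd i f) :=
  (hf.fderiv_right h).clm_apply contDiff_const

lemma pd_continuous {f : EE n → ℝ} (i : Fin n) (hf : ContDiff ℝ 1 f) : Continuous (pd i f) :=
  (pd_contDiff (k := 0) i hf (by simp)).continuous

lemma pd_compact {f : EE n → ℝ} (i : Fin n) (hf : HasCompactSupport f) :
    HasCompactSupport (pd i f) := hf.fderiv_apply (𝕜 := ℝ) _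

lemma Tst.pd {f : EE n → ℝ} (hf : Tst f) (i : Fin n) : Tst (pd i f) :=
  ⟨pd_contDiff i hf.1 (by simp), pd_compact i hf.2⟩

lemma Tst.c1 {f : EE n → ℝ} (hf : Tst f) : ContDiff ℝ 1 f := hf.1.of_le (by norm_cast)
lemma Tst.c2 {f : EE n → ℝ} (hf : Tst f) : ContDiff ℝ 2 f := hf.1.of_le (by norm_cast)

lemma pd_mul {f g : EE n → ℝ} (i : Fin n) (hf : ContDiff ℝ 1 f) (hg : ContDiff ℝ 1 g) (x : EE n) :
    pd i (fun y => f y * g y) x = pd i f x * g x + f x * pd i g x := by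
  unfold pd
  rw [fderiv_fun_mul (hf.differentiable one_ne_zero x) (hg.differentiable one_ne_zero x)]
  simp; ring

lemma pd_sub {f g : EE n → ℝ} (i : Fin n) (hf : ContDiff ℝ 1 f) (hg : ContDiff ℝ 1 g) (x : EE n) :
    pd i (fun y => f y - g y) x = pd i f x - pd i g x := by
  unfold pd
  rw [fderiv_fun_sub (hf.differentiable one_ne_zero x) (hg.differentiable one_ne_zero x)]
  simp

lemma pd_exp_neg {V : EE n → ℝ} (i : Fin n) (hV : ContDiff ℝ 1 V) (x : EE n) :
    pd i (fun y => exp (-V y)) x = - pd i V x * exp (-V x) := by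
  unfold pd
  have := ((hV.differentiable one_ne_zero x).hasFDerivAt.neg.exp).fderiv
  simp only [Pi.neg_apply] at this
  rw [this]; simp; ring

lemma pd_exp {V : EE n → ℝ} (i : Fin n) (hV : ContDiff ℝ 1 V) (x : EE n) :
    pd i (fun y => exp (V y)) x = pd i V x * exp (V x) := by
  unfold pd
  rw [((hV.differentiable one_ne_zero x).hasFDerivAt.exp).fderiv]; simp; ring

lemma pd_comm {f : EE n → ℝ} (i j : Fin n) (hf : ContDiff ℝ 2 f) (x : EE n) :
    pd i (pd j f) x = pd j (pd i f) x := by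
  have h1 : ContDiff ℝ 1 (fderiv ℝ f) := hf.fderiv_right (by norm_num)
  have key : ∀ a b : Fin n, pd a (pd b f) x =
      fderiv ℝ (fderiv ℝ f) x (EuclideanSpace.single a 1) (EuclideanSpace.single b 1) := by
    intro a b
    have h2 := (h1.differentiable one_ne_zero x).hasFDerivAt
    have := (h2.clm_apply (hasFDerivAt_const (EuclideanSpace.single b (1:ℝ)) x)).fderiv
    simp only [pd]
    change fderiv ℝ (fun y => (fderiv ℝ f y) (EuclideanSpace.single b 1)) x _ = _
    rw [this]; simp
  rw [key, key]
  exact (hf.contDiffAt.isSymmSndFDerivAt (by simp)) _ _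

/-- integrability of continuous compactly supported -/
lemma int_cc {f : EE n → ℝ} (hf : Continuous f) (hc : HasCompactSupport f) : Integrable f :=
  hf.integrable_of_hasCompactSupport hc

/-- plain integration by parts -/
lemma ibp0 {f g : EE n → ℝ} (i : Fin n) (hf : ContDiff ℝ 1 f) (hg : ContDiff ℝ 1 g)
    (hc : HasCompactSupport f) :
    ∫ x, f x * pd i g x = - ∫ x, pd i f x * g x := by
  refine integral_mul_fderiv_eq_neg_fderiv_mul_of_integrable ?_ ?_ ?_ ?_ ?_
  · exact int_cc ((pd_continuous i hf).mul hg.continuous) ((pd_compact i hc).mul_right)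
  · exact int_cc (hf.continuous.mul (pd_continuous i hg)) hc.mul_right
  · exact int_cc (hf.continuous.mul hg.continuous) hc.mul_right
  · exact fun x _ => hf.differentiable one_ne_zero x
  · exact fun x _ => hg.differentiable one_ne_zero x

/-- weighted integration by parts -/
lemma ibp {V f g : EE n → ℝ} (i : Fin n) (hV : ContDiff ℝ 1 V) (hf : ContDiff ℝ 1 f)
    (hg : ContDiff ℝ 1 g) (hc : HasCompactSupport f) :
    ∫ x, (pd i V x * f x - pd i f x) * g x * exp (-V x) = ∫ x, f x * pd i g x * exp (-V x) := by
  have hE : ContDiff ℝ 1 (fun x => exp (-V x)) := hV.neg.exp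
  have := ibp0 (f := fun x => f x * exp (-V x)) i (hf.mul hE) hg hc.mul_right
  have e1 : ∫ x, f x * pd i g x * exp (-V x) = ∫ x, f x * exp (-V x) * pd i g x := by
    congr 1; ext x; ring
  rw [e1, this, ← integral_neg]
  congr 1; ext x
  rw [pd_mul i hf hE, pd_exp_neg i hV]; ring

lemma ibp' {V f g : EE n → ℝ} (i : Fin n) (hV : ContDiff ℝ 1 V) (hf : ContDiff ℝ 1 f)
    (hg : ContDiff ℝ 1 g) (hc : HasCompactSupport g) :
    ∫ x, (pd i V x * f x - pd i f x) * g x * exp (-V x) = ∫ x, f x * pd i g x * exp (-V x) := by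
  have hE : ContDiff ℝ 1 (fun x => exp (-V x)) := hV.neg.exp
  have := ibp0 (f := g) (g := fun x => f x * exp (-V x)) i hg (hf.mul hE) hc
  have e1 : ∫ x, f x * pd i g x * exp (-V x) = ∫ x, pd i g x * (f x * exp (-V x)) := by
    congr 1; ext x; ring
  rw [e1, ← neg_eq_iff_eq_neg.mpr this, ← integral_neg]
  congr 1; ext x
  rw [pd_mul i hf hE, pd_exp_neg i hV]; ring

lemma Lg_continuous {V u : EE n → ℝ} (hV : ContDiff ℝ 1 V) (hu : Tst u) : Continuous (Lg V u) := by
  unfold Lg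
  refine continuous_finsetSum _ fun i _ => ?_
  exact ((pd_continuous i hV).mul (hu.pd i).1.continuous).sub ((hu.pd i).pd i).1.continuous

lemma Lg_compact {V u : EE n → ℝ} (hu : Tst u) : HasCompactSupport (Lg V u) := by
  have h : HasCompactSupport (∑ i, (fun x => pd i V x * pd i u x - pd i (pd i u) x)) := by
    refine HasCompactSupport.finset_sum ?_
    intro i _
    exact (((hu.pd i).2).mul_left (f := pd i V)).sub ((hu.pd i).pd i).2
  convert h using 1
  ext x; simp [Lg]

/-- `∫ f (-L u) dμ = ∫ ∇f ∇u dμ` -/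
lemma Lg_ibp {V f u : EE n → ℝ} (hV : ContDiff ℝ 1 V) (hf : ContDiff ℝ 1 f) (hu : Tst u) :
    ∫ x, f x * Lg V u x * exp (-V x) = ∫ x, (∑ i, pd i f x * pd i u x) * exp (-V x) := by
  have hE : Continuous (fun x => exp (-V x)) := hV.continuous.neg.rexp
  have e1 : ∀ x, f x * Lg V u x * exp (-V x) =
      ∑ i, (pd i V x * pd i u x - pd i (pd i u) x) * f x * exp (-V x) := by
    intro x; simp only [Lg, Finset.mul_sum, Finset.sum_mul]
    exact Finset.sum_congr rfl fun i _ => by ring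
  simp_rw [e1, Finset.sum_mul]
  rw [integral_finsetSum, integral_finsetSum]
  · refine Finset.sum_congr rfl fun i _ => ?_
    rw [ibp i hV (hu.pd i).c1 hf (hu.pd i).2]
    congr 1; ext x; ring
  · intro i _
    exact int_cc (((pd_continuous i hf).mul (hu.pd i).1.continuous).mul hE)
      (((hu.pd i).2.mul_left).mul_right)
  · intro i _
    refine int_cc (((((pd_continuous i hV).mul (hu.pd i).1.continuous).sub
      ((hu.pd i).pd i).1.continuous).mul hf.continuous).mul hE) (HasCompactSupport.mul_right
      (HasCompactSupport.mul_right ?_))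
    exact (((hu.pd i).2).mul_left (f := pd i V)).sub ((hu.pd i).pd i).2

lemma sum_int_swap {ι : Type*} (s : Finset ι) (F : ι → EE n → ℝ) (hF : ∀ i ∈ s, Integrable (F i)) :
  ∫ x, ∑ i ∈ s, F i x = ∑ i ∈ s, ∫ x, F i x := integral_finsetSum s hF

/-- Bochner identity -/
lemma bochner {V u : EE n → ℝ} (hV : ContDiff ℝ 2 V) (hu : Tst u) :
    ∫ x, Lg V u x ^ 2 * exp (-V x) =
      ∫ x, ((∑ i, ∑ j, pd j (pd i u) x ^ 2) +
        ∑ i, ∑ j, pd i (pd j V) x * pd i u x * pd j u x) * exp (-V x) := by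
  have hV1 : ContDiff ℝ 1 V := hV.of_le (by norm_num)
  have hE : Continuous (fun x => exp (-V x)) := hV.continuous.neg.rexp
  have hpV : ∀ j, ContDiff ℝ 1 (pd j V) := fun j => pd_contDiff j hV (by norm_num)
  set D : Fin n → EE n → ℝ := fun j x => pd j V x * pd j u x - pd j (pd j u) x with hD
  have hD1 : ∀ j, ContDiff ℝ 1 (D j) := fun j =>
    ((hpV j).mul (hu.pd j).c1).sub ((hu.pd j).pd j).c1
  have hDc : ∀ j, HasCompactSupport (D j) := fun j =>
    (((hu.pd j).2).mul_left (f := pd j V)).sub ((hu.pd j).pd j).2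
  have step1 : ∫ x, Lg V u x ^ 2 * exp (-V x) = ∑ i, ∑ j, ∫ x, D i x * D j x * exp (-V x) := by
    have : ∀ x, Lg V u x ^ 2 * exp (-V x) = ∑ i, ∑ j, D i x * D j x * exp (-V x) := by
      intro x
      have : Lg V u x = ∑ i, D i x := rfl
      rw [this, sq, Finset.sum_mul_sum, Finset.sum_mul]
      simp_rw [Finset.sum_mul]
    simp_rw [this]
    have hi : ∀ i j, Integrable (fun x => D i x * D j x * exp (-V x)) := fun i j =>
      int_cc (((hD1 i).continuous.mul (hD1 j).continuous).mul hE) ((hDc i).mul_right.mul_right)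
    rw [sum_int_swap]
    · exact Finset.sum_congr rfl fun i _ => sum_int_swap _ _ fun j _ => hi i j
    · exact fun i _ => integrable_finsetSum _ fun j _ => hi i j
  have hc2 : ∀ i j, Integrable (fun x => pd j (pd i u) x ^ 2 * exp (-V x)) := fun i j => by
    simp_rw [sq]
    exact int_cc ((((hu.pd i).pd j).1.continuous.mul ((hu.pd i).pd j).1.continuous).mul hE)
      (((hu.pd i).pd j).2.mul_right.mul_right)
  have hc3 : ∀ i j, Integrable (fun x => pd i (pd j V) x * pd i u x * pd j u x * exp (-V x)) :=
    fun i j => int_cc ((((pd_continuous i (hpV j)).mul (hu.pd i).1.continuous).mul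
      (hu.pd j).1.continuous).mul hE) ((hu.pd j).2.mul_left.mul_right)
  have step2 : ∀ i j, ∫ x, D i x * D j x * exp (-V x) =
      ∫ x, (pd j (pd i u) x ^ 2 * exp (-V x) + pd i (pd j V) x * pd i u x * pd j u x * exp (-V x)) := by
    intro i j
    rw [ibp i hV1 (hu.pd i).c1 (hD1 j) (hu.pd i).2]
    have e : ∀ x, pd i (D j) x = pd i (pd j V) x * pd j u x +
        (pd j V x * pd j (pd i u) x - pd j (pd j (pd i u)) x) := by
      intro x
      have hfun : pd i (pd j u) = pd j (pd i u) := by ext y; exact pd_comm i j hu.c2 y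
      rw [hD]
      simp only
      rw [pd_sub i ((hpV j).mul (hu.pd j).c1) ((hu.pd j).pd j).c1, pd_mul i (hpV j) (hu.pd j).c1,
        pd_comm i j (hu.pd j).c2, hfun]
      ring
    simp_rw [e]
    have e2 : ∀ x, pd i u x * (pd i (pd j V) x * pd j u x +
        (pd j V x * pd j (pd i u) x - pd j (pd j (pd i u)) x)) * exp (-V x) =
        (pd j V x * pd j (pd i u) x - pd j (pd j (pd i u)) x) * pd i u x * exp (-V x) +
        pd i (pd j V) x * pd i u x * pd j u x * exp (-V x) := by intro x; ring
    simp_rw [e2]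
    rw [integral_add _ (hc3 i j), integral_add (hc2 i j) (hc3 i j),
      ibp j hV1 ((hu.pd i).pd j).c1 (hu.pd i).c1 ((hu.pd i).pd j).2]
    · simp_rw [sq]
    · refine int_cc (((((pd_continuous j hV1).mul ((hu.pd i).pd j).1.continuous).sub
        (((hu.pd i).pd j).pd j).1.continuous).mul (hu.pd i).1.continuous).mul hE)
        ((hu.pd i).2.mul_left.mul_right)
  rw [step1]
  simp_rw [step2]
  have : ∀ x, ((∑ i, ∑ j, pd j (pd i u) x ^ 2) +
        ∑ i, ∑ j, pd i (pd j V) x * pd i u x * pd j u x) * exp (-V x) =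
      ∑ i, ∑ j, (pd j (pd i u) x ^ 2 * exp (-V x) + pd i (pd j V) x * pd i u x * pd j u x * exp (-V x)) := by
    intro x
    simp only [add_mul, Finset.sum_mul, Finset.sum_add_distrib]
  simp_rw [this]
  rw [sum_int_swap]
  · exact Finset.sum_congr rfl fun i _ => (sum_int_swap _ _ fun j _ => (hc2 i j).add (hc3 i j)).symm
  · exact fun i _ => integrable_finsetSum _ fun j _ => (hc2 i j).add (hc3 i j)

lemma hess_sum {V : EE n → ℝ} (hV : ContDiff ℝ 2 V) (x : EE n) (a : EE n) :
    iteratedFDeriv ℝ 2 V x ![a, a] = ∑ i, ∑ j, pd i (pd j V) x * a i * a j := by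
  have h1 : ContDiff ℝ 1 (fderiv ℝ V) := hV.fderiv_right (by norm_num)
  have key : ∀ i j : Fin n, pd i (pd j V) x =
      fderiv ℝ (fderiv ℝ V) x (EuclideanSpace.single i 1) (EuclideanSpace.single j 1) := by
    intro a b
    have h2 := (h1.differentiable one_ne_zero x).hasFDerivAt
    have := (h2.clm_apply (hasFDerivAt_const (EuclideanSpace.single b (1:ℝ)) x)).fderiv
    simp only [pd]
    change fderiv ℝ (fun y => (fderiv ℝ V y) (EuclideanSpace.single b 1)) x _ = _
    rw [this]; simp
  rw [iteratedFDeriv_two_apply]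
  simp only [Matrix.cons_val_zero, Matrix.cons_val_one]
  have ha : a = ∑ i, a i • EuclideanSpace.single i (1:ℝ) := by
    have := (EuclideanSpace.basisFun (Fin n) ℝ).sum_repr a
    simpa using this.symm
  conv_lhs => rw [ha]
  simp only [map_sum, map_smul, _root_.sum_apply, _root_.smul_apply, key, smul_eq_mul,
    Finset.mul_sum]
  rw [Finset.sum_comm]
  refine Finset.sum_congr rfl fun i _ => Finset.sum_congr rfl fun j _ => ?_
  ring

lemma grad_norm (f : EE n → ℝ) (x : EE n) : ‖gradient f x‖ ^ 2 = ∑ i, pd i f x ^ 2 := by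
  rw [EuclideanSpace.real_norm_sq_eq]
  refine Finset.sum_congr rfl fun i _ => ?_
  congr 1
  have : inner ℝ (gradient f x) (EuclideanSpace.single i (1:ℝ)) = pd i f x := by
    simp [gradient, pd]
  rw [← this, EuclideanSpace.inner_single_right]
  simp

lemma grad_sum_le (f : EE n → ℝ) (x : EE n) : ∑ i, pd i f x ^ 2 = ‖fderiv ℝ f x‖ ^ 2 := by
  rw [← grad_norm]; simp [gradient]


/-- scalar convolution -/
noncomputable def cv (f g : EE n → ℝ) : EE n → ℝ :=
  convolution f g (ContinuousLinearMap.lsmul ℝ ℝ) volume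

lemma cv_def (f g : EE n → ℝ) (x : EE n) : cv f g x = ∫ t, f t * g (x - t) := by
  simp [cv, convolution_def]

lemma cv_swap (f g : EE n → ℝ) (x : EE n) : cv f g x = ∫ t, f (x - t) * g t := by
  simp [cv, convolution_eq_swap]

lemma cv_int {f g : EE n → ℝ} (hf : Continuous f) (hc : HasCompactSupport f)
    (hg : LocallyIntegrable g) (x : EE n) : Integrable (fun t => f t * g (x - t)) := by
  have := hc.convolutionExists_left (ContinuousLinearMap.lsmul ℝ ℝ) hf hg x
  simpa [ConvolutionExistsAt] using this

lemma cv_int' {f g : EE n → ℝ} (hf : Continuous f) (hc : HasCompactSupport f)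
    (hg : LocallyIntegrable g) (x : EE n) : Integrable (fun t => f (x - t) * g t) := by
  have := (cv_int hf hc hg x).comp_sub_left x
  simpa using this

lemma cv_smooth {f g : EE n → ℝ} (hf : Tst f) (hg : LocallyIntegrable g) : ContDiff ℝ ∞ (cv f g) :=
  hf.2.contDiff_convolution_left _ hf.1 hg

lemma cv_pd {f g : EE n → ℝ} (i : Fin n) (hf : Tst f) (hg : LocallyIntegrable g) (x : EE n) :
    pd i (cv f g) x = cv (pd i f) g x := by
  have h := (hf.2.hasFDerivAt_convolution_left (ContinuousLinearMap.lsmul ℝ ℝ) hf.c1 hg x).fderiv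
  have hcx := (hf.2.fderiv (𝕜 := ℝ)).convolutionExists_left
    ((ContinuousLinearMap.lsmul ℝ ℝ : ℝ →L[ℝ] ℝ →L[ℝ] ℝ).precompL (EE n))
    (hf.c1.continuous_fderiv one_ne_zero) hg x
  unfold pd
  change fderiv ℝ (convolution f g (ContinuousLinearMap.lsmul ℝ ℝ) volume) x _ = _
  rw [h, convolution_def, ContinuousLinearMap.integral_apply hcx, cv_def]
  rfl

lemma cs_cv {ψ k q : EE n → ℝ} {δ C : ℝ} (x : EE n) (hψ : Tst ψ) (h0 : ∀ t, 0 ≤ ψ t)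
    (h1 : ∫ t, ψ t = 1) (hs : ∀ t, ψ t ≠ 0 → ‖t‖ < δ) (hk : LocallyIntegrable k)
    (hq : LocallyIntegrable q) (hkq : ∀ t, ‖t‖ < δ → k (x - t) ^ 2 ≤ C * q (x - t)) :
    cv ψ k x ^ 2 ≤ C * cv ψ q x := by
  set A := cv ψ k x with hA
  have i1 := cv_int hψ.1.continuous hψ.2 hk x
  have i2 := cv_int hψ.1.continuous hψ.2 hq x
  have i3 : Integrable ψ := int_cc hψ.1.continuous hψ.2
  have key : ∫ t, 2 * A * (ψ t * k (x - t)) ≤ ∫ t, (A ^ 2 * ψ t + C * (ψ t * q (x - t))) := by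
    refine integral_mono (i1.const_mul _) ((i3.const_mul _).add (i2.const_mul _)) fun t => ?_
    by_cases ht : ψ t = 0
    · simp [ht]
    · have := hkq t (hs t ht)
      have h2 : 2 * A * k (x - t) ≤ A ^ 2 + C * q (x - t) := by nlinarith [sq_nonneg (A - k (x - t))]
      have := mul_le_mul_of_nonneg_left h2 (h0 t)
      simp only; linarith
  rw [integral_const_mul, integral_add (i3.const_mul _) (i2.const_mul _), integral_const_mul,
    integral_const_mul, h1, ← cv_def, ← cv_def, ← hA] at key
  linarith

lemma unif_cont {F : EE n → ℝ} (hF : Continuous F) (K : Set (EE n)) (hK : IsCompact K) {η : ℝ}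
    (hη : 0 < η) : ∃ δ > 0, ∀ x ∈ K, ∀ t, ‖t‖ < δ → |F (x - t) - F x| ≤ η := by
  have hK' : IsCompact (Metric.cthickening 1 K) := hK.cthickening
  have hu := hK'.uniformContinuousOn_of_continuous hF.continuousOn
  rw [Metric.uniformContinuousOn_iff_le] at hu
  obtain ⟨δ, hδ, h⟩ := hu η hη
  refine ⟨min δ 1, by positivity, fun x hx t ht => ?_⟩
  have := h (x - t) ?_ x (Metric.self_subset_cthickening _ hx) ?_
  · simpa [Real.dist_eq] using this
  · refine Metric.mem_cthickening_of_dist_le _ x _ _ hx ?_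
    simp; exact (ht.trans_le (min_le_right _ _)).le
  · simp; exact (ht.trans_le (min_le_left _ _)).le

lemma pd_reflect {ψ : EE n → ℝ} (i : Fin n) (hψ : ContDiff ℝ 1 ψ) (x y : EE n) :
    pd i (fun z => ψ (x - z)) y = - pd i ψ (x - y) := by
  unfold pd
  have h := ((hψ.differentiable one_ne_zero (x - y)).hasFDerivAt.comp y
    ((hasFDerivAt_id y).const_sub x)).fderiv
  have e : (ψ ∘ HSub.hSub x) = fun z => ψ (x - z) := rfl
  rw [e] at h
  rw [h]; simp

lemma Tst_reflect {ψ : EE n → ℝ} (hψ : Tst ψ) (x : EE n) : Tst (fun z => ψ (x - z)) := by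
  refine ⟨hψ.1.comp (contDiff_const.sub contDiff_id), ?_⟩
  have := hψ.2.comp_homeomorph (Homeomorph.subLeft x)
  exact this

lemma locint_mul {p F : EE n → ℝ} (hp : LocallyIntegrable p) (hF : Continuous F) :
    LocallyIntegrable (fun x => p x * F x) := by
  exact hp.mul_continuous hF

lemma div_free {V ψ h : EE n → ℝ} (hV : ContDiff ℝ 2 V) (hψ : Tst ψ)
    (hp : LocallyIntegrable (fun x => h x * exp (-V x)))
    (hh : ∀ u, Tst u → ∫ x, h x * Lg V u x * exp (-V x) = 0) (x : EE n) :
    ∑ i, (cv (pd i ψ) (fun y => h y * exp (-V y) * pd i V y) x +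
      cv (pd i (pd i ψ)) (fun y => h y * exp (-V y)) x) = 0 := by
  have hV1 : ContDiff ℝ 1 V := hV.of_le (by norm_num)
  have := hh _ (Tst_reflect hψ x)
  have e : ∀ y, h y * Lg V (fun z => ψ (x - z)) y * exp (-V y) =
    ∑ i, (- (pd i ψ (x - y) * (h y * exp (-V y) * pd i V y) +
      pd i (pd i ψ) (x - y) * (h y * exp (-V y)))) := by
    intro y
    have e1 : ∀ i, pd i (fun z => ψ (x - z)) = fun y => - pd i ψ (x - y) := fun i => by
      ext z; exact pd_reflect i hψ.c1 x z
    have e2 : ∀ i, pd i (fun y => - pd i ψ (x - y)) y = pd i (pd i ψ) (x - y) := fun i => by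
      have := pd_reflect i (hψ.pd i).c1 x y
      have h3 : pd i (fun y => - pd i ψ (x - y)) y = - pd i (fun y => pd i ψ (x - y)) y := by
        unfold pd; rw [fderiv_fun_neg]; simp
      rw [h3, this]; ring
    simp only [Lg, e1, e2, Finset.mul_sum, Finset.sum_mul]
    exact Finset.sum_congr rfl fun i _ => by ring
  simp_rw [e] at this
  have i1 : ∀ i, Integrable (fun y => pd i ψ (x - y) * (h y * exp (-V y) * pd i V y)) := fun i =>
    cv_int' (hψ.pd i).1.continuous (hψ.pd i).2 (locint_mul hp (pd_continuous i hV1)) x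
  have i2 : ∀ i, Integrable (fun y => pd i (pd i ψ) (x - y) * (h y * exp (-V y))) := fun i =>
    cv_int' ((hψ.pd i).pd i).1.continuous ((hψ.pd i).pd i).2 hp x
  rw [sum_int_swap] at this
  swap
  · exact fun i _ => ((i1 i).add (i2 i)).neg
  simp_rw [integral_neg] at this
  rw [Finset.sum_neg_distrib, neg_eq_zero] at this
  rw [← this]
  refine Finset.sum_congr rfl fun i _ => ?_
  rw [integral_add (i1 i) (i2 i), cv_swap, cv_swap]


lemma energy_alg {ι : Type*} (s : Finset ι) (E χ h : ℝ) (hE : 0 < E) (d r c : ι → ℝ) :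
    1 / 2 * (χ ^ 2 * (∑ i ∈ s, d i ^ 2) * E) - 5 * (h ^ 2 * E * ∑ i ∈ s, c i ^ 2)
      - 2 * (χ ^ 2 * ∑ i ∈ s, r i ^ 2 * E⁻¹)
    ≤ ∑ i ∈ s, (E * d i + r i) * (χ ^ 2 * d i + 2 * χ * c i * h) := by
  simp only [Finset.mul_sum, Finset.sum_mul]
  rw [← Finset.sum_sub_distrib, ← Finset.sum_sub_distrib]
  refine Finset.sum_le_sum fun i _ => ?_
  obtain ⟨t, ht, rfl⟩ : ∃ t, 0 < t ∧ E = t ^ 2 := ⟨√E, by positivity, (Real.sq_sqrt hE.le).symm⟩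
  obtain ⟨v, hv⟩ : ∃ v, r i = t * v := ⟨r i / t, by field_simp⟩
  rw [hv]
  have : (t * v) ^ 2 * (t ^ 2)⁻¹ = v ^ 2 := by field_simp
  rw [this]
  nlinarith [sq_nonneg (1 / 2 * χ * d i * t + 2 * h * c i * t), sq_nonneg (1/2 * χ * d i * t + χ * v),
    sq_nonneg (χ * v + h * c i * t)]

/-- standing hypotheses for the mollifier -/
structure Mol (ψ : EE n → ℝ) (δ : ℝ) : Prop where
  tst : Tst ψ
  nn : ∀ t, 0 ≤ ψ t
  one : ∫ t, ψ t = 1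
  supp : ∀ t, ψ t ≠ 0 → ‖t‖ < δ

lemma energy {V ψ h χ : EE n → ℝ} {δ η κ : ℝ} (hV : ContDiff ℝ 2 V) (hψ : Mol ψ δ)
    (hp : Integrable (fun x => h x * exp (-V x)))
    (hq : Integrable (fun x => h x ^ 2 * exp (-V x)))
    (hh : ∀ u, Tst u → ∫ x, h x * Lg V u x * exp (-V x) = 0)
    (hχ : Tst χ) (hχ1 : ∀ x, |χ x| ≤ 1) (hκ : ∀ x, ∑ i, pd i χ x ^ 2 ≤ κ) (hη : 0 ≤ η)
    (hVδ : ∀ x ∈ tsupport χ, ∀ t, ‖t‖ < δ → |V (x - t) - V x| ≤ log 2)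
    (hDδ : ∀ i, ∀ x ∈ tsupport χ, ∀ t, ‖t‖ < δ → |pd i V (x - t) - pd i V x| ≤ η) :
    ∫ x, χ x ^ 2 * (∑ i, pd i (fun y => exp (V y) * cv ψ (fun z => h z * exp (-V z)) y) x ^ 2) * exp (-V x)
     ≤ (20 * κ + 8 * n * η ^ 2) * ∫ x, h x ^ 2 * exp (-V x) := by
  have hV1 : ContDiff ℝ 1 V := hV.of_le (by norm_num)
  have hexp : ContDiff ℝ 1 (fun y => exp (V y)) := hV1.exp
  have hexp2 : ContDiff ℝ 2 (fun y => exp (V y)) := hV.exp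
  have hE : Continuous (fun x => exp (-V x)) := hV.continuous.neg.rexp
  set p : EE n → ℝ := fun x => h x * exp (-V x) with hpdef
  set q : EE n → ℝ := fun x => h x ^ 2 * exp (-V x) with hqdef
  have hpl := hp.locallyIntegrable
  have hql := hq.locallyIntegrable
  set P := cv ψ p with hP
  have hPs : ContDiff ℝ ∞ P := cv_smooth hψ.tst hpl
  have hP1 : ContDiff ℝ 1 P := hPs.of_le (by norm_cast)
  set H : EE n → ℝ := fun y => exp (V y) * P y with hH
  have hH1 : ContDiff ℝ 1 H := hexp.mul hP1
  set Q := cv ψ q with hQ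
  have hpV : ∀ i, LocallyIntegrable (fun y => p y * pd i V y) := fun i =>
    locint_mul hpl (pd_continuous i hV1)
  set G : Fin n → EE n → ℝ := fun i x => cv ψ (fun y => p y * pd i V y) x + pd i P x with hG
  have hG1 : ∀ i, ContDiff ℝ 1 (G i) := fun i =>
    ((cv_smooth hψ.tst (hpV i)).of_le (by norm_cast)).add
      (pd_contDiff i (hPs.of_le (m := 2) (by norm_cast)) (by norm_num))
  set r : Fin n → EE n → ℝ := fun i x => cv ψ (fun y => p y * pd i V y) x - pd i V x * P x with hr
  have hGr : ∀ i x, G i x = exp (-V x) * pd i H x + r i x := by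
    intro i x
    rw [hH, pd_mul i hexp hP1, pd_exp i hV1, hG, hr]
    have : exp (-V x) * exp (V x) = 1 := by rw [← exp_add]; simp
    linear_combination (-(pd i V x * P x) - pd i P x) * this
  have hdiv : ∀ x, ∑ i, pd i (G i) x = 0 := by
    intro x
    rw [← div_free hV hψ.tst hpl hh x]
    refine Finset.sum_congr rfl fun i _ => ?_
    have e1 : pd i (G i) x = pd i (cv ψ (fun y => p y * pd i V y)) x + pd i (pd i P) x := by
      rw [hG]; unfold pd
      rw [fderiv_fun_add]
      · rfl
      · exact (cv_smooth hψ.tst (hpV i)).differentiable (by simp) x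
      · exact (pd_contDiff (k := 1) i (hPs.of_le (m := 2) (by norm_cast)) (by norm_num)).differentiable one_ne_zero x
    have e2 : pd i P = cv (pd i ψ) p := by ext y; exact cv_pd i hψ.tst hpl y
    rw [e1, e2, cv_pd i hψ.tst (hpV i), cv_pd i (hψ.tst.pd i) hpl]
  set w : EE n → ℝ := fun x => χ x ^ 2 * H x with hw
  have hχ2 : ContDiff ℝ 1 (fun x => χ x ^ 2) := hχ.c1.pow 2
  have hw1 : ContDiff ℝ 1 w := hχ2.mul hH1
  have hχ2c : HasCompactSupport (fun x => χ x ^ 2) := by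
    simp_rw [sq]; exact hχ.2.mul_right
  have hwc : HasCompactSupport w := hχ2c.mul_right
  have hpw : ∀ i x, pd i w x = χ x ^ 2 * pd i H x + 2 * χ x * pd i χ x * H x := by
    intro i x
    rw [hw, pd_mul i hχ2 hH1]
    have : pd i (fun x => χ x ^ 2) x = 2 * χ x * pd i χ x := by
      simp_rw [sq]; rw [pd_mul i hχ.c1 hχ.c1]; ring
    rw [this]; ring
  have hGw : ∀ i, Integrable (fun x => pd i w x * G i x) := fun i =>
    int_cc ((pd_continuous i hw1).mul (hG1 i).continuous) ((pd_compact i hwc).mul_right)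
  have hwG : ∀ i, Integrable (fun x => w x * pd i (G i) x) := fun i =>
    int_cc (hw1.continuous.mul (pd_continuous i (hG1 i))) (hwc.mul_right)
  have hzero : ∫ x, ∑ i, pd i w x * G i x = 0 := by
    rw [sum_int_swap _ _ fun i _ => hGw i]
    have : ∀ i, ∫ x, pd i w x * G i x = - ∫ x, w x * pd i (G i) x := fun i => by
      rw [ibp0 i hw1 (hG1 i) hwc]; ring
    simp_rw [this]
    rw [Finset.sum_neg_distrib, ← sum_int_swap _ _ fun i _ => hwG i]
    simp_rw [← Finset.mul_sum, hdiv]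
    simp
  have hQi : Integrable Q := hψ.tst.1.continuous.integrable_of_hasCompactSupport hψ.tst.2
    |>.integrable_convolution (ContinuousLinearMap.lsmul ℝ ℝ) hq
  have hQint : ∫ x, Q x = ∫ x, q x := by
    have := integral_convolution (ContinuousLinearMap.lsmul ℝ ℝ)
      (int_cc hψ.tst.1.continuous hψ.tst.2) hq
    rw [hQ, cv, this, hψ.one]; simp
  have hQ0 : ∀ x, 0 ≤ Q x := by
    intro x; rw [hQ, cv_def]
    exact integral_nonneg fun t => mul_nonneg (hψ.nn t) (by simp only [hqdef]; positivity)
  have hexpb : ∀ x ∈ tsupport χ, ∀ t, ‖t‖ < δ → exp (-V (x - t)) ≤ 2 * exp (-V x) := by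
    intro x hx t ht
    have := abs_le.1 (hVδ x hx t ht)
    calc exp (-V (x - t)) ≤ exp (log 2 + -V x) := exp_le_exp.2 (by linarith)
      _ = _ := by rw [exp_add, exp_log two_pos]
  have hPb : ∀ x ∈ tsupport χ, P x ^ 2 ≤ 2 * exp (-V x) * Q x := by
    intro x hx
    refine cs_cv x hψ.tst hψ.nn hψ.one hψ.supp hpl hql fun t ht => ?_
    have := mul_le_mul_of_nonneg_left (hexpb x hx t ht)
      (by positivity : 0 ≤ h (x - t) ^ 2 * exp (-V (x - t)))
    simp only [hpdef, hqdef]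
    nlinarith
  have hrb : ∀ i, ∀ x ∈ tsupport χ, r i x ^ 2 ≤ 2 * η ^ 2 * exp (-V x) * Q x := by
    intro i x hx
    have e : r i x = cv ψ (fun y => p y * (pd i V y - pd i V x)) x := by
      simp only [hr, hP, cv_def]
      rw [← integral_const_mul, ← integral_sub]
      · congr 1; ext t; ring
      · exact cv_int hψ.tst.1.continuous hψ.tst.2 (hpV i) x
      · exact (cv_int hψ.tst.1.continuous hψ.tst.2 hpl x).const_mul _
    rw [e]
    refine cs_cv x hψ.tst hψ.nn hψ.one hψ.supp
      (locint_mul hpl ((pd_continuous i hV1).sub continuous_const)) hql fun t ht => ?_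
    have h1 := mul_le_mul_of_nonneg_left (hexpb x hx t ht)
      (by positivity : 0 ≤ h (x - t) ^ 2 * exp (-V (x - t)))
    have h2 : (pd i V (x - t) - pd i V x) ^ 2 ≤ η ^ 2 := by
      rw [← sq_abs]; exact pow_le_pow_left₀ (abs_nonneg _) (hDδ i x hx t ht) 2
    simp only [hpdef, hqdef]
    calc _ = (h (x - t) ^ 2 * exp (-V (x - t)) * exp (-V (x - t))) * (pd i V (x - t) - pd i V x) ^ 2 := by ring
      _ ≤ (h (x - t) ^ 2 * exp (-V (x - t)) * (2 * exp (-V x))) * η ^ 2 := by gcongr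
      _ = _ := by ring
  have hpt : ∀ x, 1 / 2 * (χ x ^ 2 * (∑ i, pd i H x ^ 2) * exp (-V x)) - (10 * κ + 4 * n * η ^ 2) * Q x
      ≤ ∑ i, pd i w x * G i x := by
    intro x
    have hκ0 : 0 ≤ κ := le_trans (Finset.sum_nonneg fun i _ => sq_nonneg _) (hκ x)
    have hQx := hQ0 x
    have alg := energy_alg Finset.univ (exp (-V x)) (χ x) (H x) (exp_pos _) (fun i => pd i H x)
      (fun i => r i x) (fun i => pd i χ x)
    have e : ∑ i, pd i w x * G i x = ∑ i, (exp (-V x) * pd i H x + r i x) *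
      (χ x ^ 2 * pd i H x + 2 * χ x * pd i χ x * H x) := by
      refine Finset.sum_congr rfl fun i _ => ?_
      rw [hpw, hGr]; ring
    rw [e]
    refine le_trans ?_ alg
    by_cases hx : x ∈ tsupport χ
    · have b1 : H x ^ 2 * exp (-V x) ≤ 2 * Q x := by
        have := hPb x hx
        have e2 : exp (V x) * exp (-V x) = 1 := by rw [← exp_add]; simp
        have : exp (V x) * P x ^ 2 ≤ exp (V x) * (2 * exp (-V x) * Q x) := by gcongr
        have e3 : H x ^ 2 * exp (-V x) = exp (V x) * P x ^ 2 := by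
          simp only [hH]; linear_combination exp (V x) * P x ^ 2 * e2
        rw [e3]; nlinarith
      have b2 : H x ^ 2 * exp (-V x) * ∑ i, pd i χ x ^ 2 ≤ 2 * Q x * κ := by
        have := hκ x
        have : 0 ≤ ∑ i, pd i χ x ^ 2 := Finset.sum_nonneg fun i _ => sq_nonneg _
        gcongr
      have b3 : χ x ^ 2 * ∑ i, r i x ^ 2 * (exp (-V x))⁻¹ ≤ 1 * ∑ i : Fin n, 2 * η ^ 2 * Q x := by
        have h1 : χ x ^ 2 ≤ 1 := by
          rw [← sq_abs]; exact pow_le_one₀ (abs_nonneg _) (hχ1 x)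
        refine mul_le_mul h1 (Finset.sum_le_sum fun i _ => ?_)
          (Finset.sum_nonneg fun i _ => by positivity) zero_le_one
        rw [mul_inv_le_iff₀ (exp_pos _)]
        have := hrb i x hx
        linarith
      simp only [Finset.sum_const, Finset.card_univ, Fintype.card_fin, nsmul_eq_mul] at b3
      linarith
    · have h0 : χ x = 0 := image_eq_zero_of_notMem_tsupport hx
      have h1 : ∀ i, pd i χ x = 0 := fun i => by
        have : fderiv ℝ χ x = 0 := by
          by_contra hc
          exact hx (support_fderiv_subset ℝ hc)
        simp [pd, this]
      simp only [h0, h1]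
      have : 0 ≤ (10 * κ + 4 * n * η ^ 2) * Q x := by positivity
      simp
      linarith
  have hAi : Integrable (fun x => χ x ^ 2 * (∑ i, pd i H x ^ 2) * exp (-V x)) := by
    refine int_cc ((hχ2.continuous.mul (continuous_finsetSum _ fun i _ =>
      (pd_continuous i hH1).pow 2)).mul hE) (hχ2c.mul_right.mul_right)
  have := integral_mono ((hAi.const_mul (1/2)).sub (hQi.const_mul (10 * κ + 4 * n * η ^ 2)))
    (integrable_finsetSum _ fun i _ => hGw i) hpt
  rw [hzero, integral_sub' (hAi.const_mul (1/2)) (hQi.const_mul (10 * κ + 4 * n * η ^ 2)),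
    integral_const_mul, integral_const_mul, hQint] at this
  linarith


lemma cs_int {X : Type*} [MeasurableSpace X] {μ : Measure X} {a b : X → ℝ} (ha : Integrable (fun x => a x ^ 2) μ) (hb : Integrable (fun x => b x ^ 2) μ)
    (hab : Integrable (fun x => a x * b x) μ) :
    (∫ x, a x * b x ∂μ) ^ 2 ≤ (∫ x, a x ^ 2 ∂μ) * ∫ x, b x ^ 2 ∂μ := by
  have key : ∀ s : ℝ, 0 ≤ (∫ x, a x ^ 2 ∂μ) * (s * s) + (2 * ∫ x, a x * b x ∂μ) * s + ∫ x, b x ^ 2 ∂μ := by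
    intro s
    have : 0 ≤ ∫ x, (s * s * a x ^ 2 + 2 * s * (a x * b x) + b x ^ 2) ∂μ :=
      integral_nonneg fun x => by
        have : s * s * a x ^ 2 + 2 * s * (a x * b x) + b x ^ 2 = (s * a x + b x) ^ 2 := by ring
        simp only [this]; positivity
    have i12 : Integrable (fun x => s * s * a x ^ 2 + 2 * s * (a x * b x)) μ :=
      (ha.const_mul _).add (hab.const_mul _)
    rw [integral_add i12 hb, integral_add (ha.const_mul _)
      (hab.const_mul _), integral_const_mul, integral_const_mul] at this
    linarith
  have := discrim_le_zero key
  rw [discrim] at this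
  nlinarith

noncomputable def bmp (δ : ℝ) (hδ : 0 < δ) : ContDiffBump (0 : EE n) := ⟨δ / 2, δ, by positivity, by linarith⟩

lemma bmp_mol (δ : ℝ) (hδ : 0 < δ) : Mol ((bmp (n := n) δ hδ).normed volume) δ where
  tst := ⟨(bmp δ hδ).contDiff_normed, (bmp δ hδ).hasCompactSupport_normed⟩
  nn := (bmp δ hδ).nonneg_normed
  one := (bmp δ hδ).integral_normed
  supp := fun t ht => by
    have : t ∈ Function.support ((bmp δ hδ).normed volume) := ht
    rw [ContDiffBump.support_normed_eq] at this
    simpa [bmp] using this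

lemma cutoff : ∃ C : ℝ, 0 ≤ C ∧ ∀ R : ℝ, 0 < R → ∃ χ : EE n → ℝ, Tst χ ∧ (∀ x, |χ x| ≤ 1) ∧
    (∀ x, ‖x‖ ≤ R → χ x = 1) ∧ ∀ x, ‖fderiv ℝ χ x‖ ≤ C / R := by
  let b : ContDiffBump (0 : EE n) := ⟨1, 2, by norm_num, by norm_num⟩
  have hb : ContDiff ℝ ∞ b := b.contDiff
  obtain ⟨C, hC⟩ := hb.lipschitzWith_of_hasCompactSupport b.hasCompactSupport (by simp)
  refine ⟨C, C.2, fun R hR => ⟨fun x => b (R⁻¹ • x), ⟨?_, ?_⟩, ?_, ?_, ?_⟩⟩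
  · exact hb.comp (contDiff_const_smul _)
  · have := b.hasCompactSupport.comp_homeomorph (Homeomorph.smulOfNeZero (R⁻¹) (inv_ne_zero hR.ne') : EE n ≃ₜ EE n)
    exact this
  · intro x; rw [abs_of_nonneg b.nonneg]; exact b.le_one
  · intro x hx
    refine b.one_of_mem_closedBall ?_
    simp only [Metric.mem_closedBall, dist_zero_right, norm_smul, norm_inv, Real.norm_eq_abs, abs_of_pos hR]
    rw [inv_mul_le_iff₀ hR]; simpa [b] using hx
  · intro x
    refine norm_fderiv_le_of_lip' ℝ (div_nonneg C.2 hR.le) (Eventually.of_forall fun y => ?_)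
    have := hC.dist_le_mul (R⁻¹ • y) (R⁻¹ • x)
    rw [dist_eq_norm, dist_eq_norm, ← smul_sub, norm_smul, norm_inv, Real.norm_eq_abs R, abs_of_pos hR] at this
    calc _ ≤ _ := this
      _ = _ := by rw [div_eq_mul_inv]; ring

lemma fderiv_zero_of_pd {f : EE n → ℝ} {x : EE n} (h : ∀ i, pd i f x = 0) : fderiv ℝ f x = 0 := by
  have := grad_sum_le f x
  simp only [h] at this
  simpa using this.symm

lemma weak_const {h : EE n → ℝ} (hl : LocallyIntegrable h)
    (h0 : ∀ i, ∀ φ : EE n → ℝ, Tst φ → ∫ x, h x * pd i φ x = 0) : ∃ c : ℝ, ∀ᵐ x, h x = c := by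
  let φ : ℕ → ContDiffBump (0 : EE n) := fun k => bmp (1 / ((k:ℝ) + 1)) (by positivity)
  have hφ : ∀ k, Mol ((φ k).normed volume) (1 / ((k:ℝ) + 1)) := fun k => bmp_mol _ _
  have hlim := ContDiffBump.ae_convolution_tendsto_right_of_locallyIntegrable (μ := volume) (φ := φ) (l := atTop)
    (K := 2) tendsto_one_div_add_atTop_nhds_zero_nat
    (Eventually.of_forall fun k => by simp only [φ, bmp]; linarith) hl
  have hc : ∀ k x y, cv ((φ k).normed volume) h x = cv ((φ k).normed volume) h y := by
    intro k
    refine is_const_of_fderiv_eq_zero (𝕜 := ℝ) ((cv_smooth (hφ k).tst hl).differentiable (by simp)) fun x => ?_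
    refine fderiv_zero_of_pd fun i => ?_
    rw [cv_pd i (hφ k).tst hl, cv_swap]
    have := h0 i _ (Tst_reflect (hφ k).tst x)
    simp_rw [pd_reflect i (hφ k).tst.c1 x] at this
    rw [← neg_eq_zero, ← integral_neg, ← this]
    congr 1; ext t; ring
  obtain ⟨x0, hx0⟩ := hlim.exists
  refine ⟨h x0, hlim.mono fun x hx => tendsto_nhds_unique hx ?_⟩
  refine hx0.congr fun k => ?_
  exact hc k x0 x

lemma mol_lim {p Ψ : EE n → ℝ} (hp : Integrable p) (hΨ : Continuous Ψ) (hc : HasCompactSupport Ψ)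
    (φ : ℕ → ContDiffBump (0 : EE n)) (hφ : Tendsto (fun k => (φ k).rOut) atTop (𝓝 0)) :
    Tendsto (fun k => ∫ x, Ψ x * cv ((φ k).normed volume) p x) atTop (𝓝 (∫ x, Ψ x * p x)) := by
  set Ψ' : EE n → ℝ := fun x => Ψ (-x) with hΨ'
  have hΨ'c : Continuous Ψ' := hΨ.comp continuous_neg
  have hΨ's : HasCompactSupport Ψ' := hc.comp_homeomorph (Homeomorph.neg _)
  have hcont : Continuous (cv p Ψ') :=
    hΨ's.continuous_convolution_right _ hp.locallyIntegrable hΨ'c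
  have hJ := ContDiffBump.convolution_tendsto_right_of_continuous (μ := volume) hφ hcont 0
  have e0 : cv p Ψ' 0 = ∫ x, Ψ x * p x := by
    rw [cv_def]; congr 1; ext t; simp [hΨ']; ring
  rw [e0] at hJ
  refine hJ.congr fun k => ?_
  set ψ := (φ k).normed volume
  have hψ1 : Continuous ψ := (φ k).continuous_normed
  have hψ2 : HasCompactSupport ψ := (φ k).hasCompactSupport_normed
  have hψi : Integrable ψ := int_cc hψ1 hψ2
  have e1 : ∫ x, Ψ x * cv ψ p x = cv (cv ψ p) Ψ' 0 := by
    rw [cv_def]; congr 1; ext t; simp [hΨ']; ring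
  rw [e1]
  have : cv (cv ψ p) Ψ' 0 = cv ψ (cv p Ψ') 0 := by
    unfold cv
    refine convolution_assoc _ _ _ _ ?_ hψi.aestronglyMeasurable hp.aestronglyMeasurable
      hΨ'c.aestronglyMeasurable ?_ ?_ ?_
    · intro a b c; simp; ring
    · exact Eventually.of_forall fun y => hψ2.convolutionExists_left _ hψ1 hp.locallyIntegrable y
    · refine Eventually.of_forall fun y => ?_
      exact hΨ's.norm.convolutionExists_right _ hp.norm.locallyIntegrable hΨ'c.norm y
    · have hci : Continuous (convolution (fun x => ‖p x‖) (fun x => ‖Ψ' x‖) (ContinuousLinearMap.mul ℝ ℝ) volume) :=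
        hΨ's.norm.continuous_convolution_right _ hp.norm.locallyIntegrable hΨ'c.norm
      exact hψ2.norm.convolutionExists_left _ hψ1.norm hci.locallyIntegrable 0
  rw [this]
  rfl

lemma weak_harm {V h : EE n → ℝ} (hV : ContDiff ℝ 2 V)
    (hp : Integrable (fun x => h x * exp (-V x)))
    (hq : Integrable (fun x => h x ^ 2 * exp (-V x)))
    (hh : ∀ u, Tst u → ∫ x, h x * Lg V u x * exp (-V x) = 0) : ∃ c : ℝ, ∀ᵐ x, h x = c := by
  have hV1 : ContDiff ℝ 1 V := hV.of_le (by norm_num)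
  have hexp : ContDiff ℝ 1 (fun y => exp (V y)) := hV1.exp
  have hE : Continuous (fun x => exp (-V x)) := hV.continuous.neg.rexp
  have ee : ∀ x, exp (-V x) * exp (V x) = 1 := fun x => by rw [← exp_add]; simp
  have hl : LocallyIntegrable h := by
    have := locint_mul hp.locallyIntegrable hexp.continuous
    refine this.congr (Eventually.of_forall fun x => ?_)
    simp only; rw [mul_assoc, ee]; simp
  refine weak_const hl fun i φ hφ => ?_
  obtain ⟨C, hC0, hC⟩ := cutoff (n := n)
  obtain ⟨R0, hR0, hR⟩ : ∃ R0 > 0, ∀ x ∈ tsupport φ, ‖x‖ ≤ R0 := by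
    obtain ⟨R, hR⟩ := hφ.2.isBounded.exists_norm_le
    exact ⟨max R 1, by positivity, fun x hx => (hR x hx).trans (le_max_left _ _)⟩
  have hRk : ∀ k : ℕ, 0 < R0 + k := fun k => by positivity
  choose χ hχ hχ1 hχR hχd using fun k : ℕ => hC (R0 + k) (hRk k)
  have hδ : ∀ k : ℕ, ∃ δ > 0, δ ≤ 1 / ((k:ℝ) + 1) ∧
      (∀ x ∈ tsupport (χ k), ∀ t, ‖t‖ < δ → |V (x - t) - V x| ≤ log 2) ∧
      (∀ j, ∀ x ∈ tsupport (χ k), ∀ t, ‖t‖ < δ → |pd j V (x - t) - pd j V x| ≤ 1 / ((k:ℝ) + 1)) := by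
    intro k
    obtain ⟨δ1, h1, h1'⟩ := unif_cont hV.continuous _ (hχ k).2 (log_pos one_lt_two)
    have hpos : (0:ℝ) < 1 / ((k:ℝ) + 1) := by positivity
    choose δ2 h2 h2' using fun j => unif_cont (pd_continuous j hV1) _ (hχ k).2 hpos
    obtain ⟨δ3, h3, h3'⟩ : ∃ δ3 > 0, ∀ j, δ3 ≤ δ2 j := by
      have : ∀ᶠ d in 𝓝[>] (0:ℝ), ∀ j, d ≤ δ2 j := by
        rw [eventually_all]
        intro j
        exact (eventually_le_nhds (h2 j)).filter_mono nhdsWithin_le_nhds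
      obtain ⟨d, hd, hd'⟩ := (this.and self_mem_nhdsWithin).exists
      exact ⟨d, hd', hd⟩
    refine ⟨min (min δ1 δ3) (1 / ((k:ℝ) + 1)), by positivity, min_le_right _ _, ?_, ?_⟩
    · intro x hx t ht
      exact h1' x hx t (ht.trans_le ((min_le_left _ _).trans (min_le_left _ _)))
    · intro j x hx t ht
      exact h2' j x hx t (ht.trans_le (((min_le_left _ _).trans (min_le_right _ _)).trans (h3' j)))
  choose δ hδ0 hδk hδV hδD using hδ
  let b : ℕ → ContDiffBump (0 : EE n) := fun k => bmp (δ k) (hδ0 k)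
  have hb : ∀ k, Mol ((b k).normed volume) (δ k) := fun k => bmp_mol _ _
  set p : EE n → ℝ := fun x => h x * exp (-V x) with hpdef
  set H : ℕ → EE n → ℝ := fun k y => exp (V y) * cv ((b k).normed volume) p y with hH
  have hH1 : ∀ k, ContDiff ℝ 1 (H k) := fun k =>
    hexp.mul ((cv_smooth (hb k).tst hp.locallyIntegrable).of_le (by norm_cast))
  set B := ∫ x, h x ^ 2 * exp (-V x) with hB
  set A : ℕ → ℝ := fun k => ∫ x, χ k x ^ 2 * (∑ i, pd i (H k) x ^ 2) * exp (-V x) with hA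
  have hAb : ∀ k : ℕ, A k ≤ (20 * (C / (R0 + k)) ^ 2 + 8 * n * (1 / ((k:ℝ) + 1)) ^ 2) * B := by
    intro k
    refine energy hV (hb k) hp hq hh (hχ k) (hχ1 k) ?_ (by positivity) (hδV k) (hδD k)
    intro x
    rw [grad_sum_le]
    exact pow_le_pow_left₀ (norm_nonneg _) (hχd k x) 2
  have hAlim : Tendsto (fun k : ℕ => (20 * (C / (R0 + k)) ^ 2 + 8 * n * (1 / ((k:ℝ) + 1)) ^ 2) * B) atTop (𝓝 0) := by
    have t1 : Tendsto (fun k : ℕ => C / (R0 + k)) atTop (𝓝 0) :=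
      tendsto_const_nhds.div_atTop (tendsto_atTop_add_const_left _ _ tendsto_natCast_atTop_atTop)
    have t2 : Tendsto (fun k : ℕ => 1 / ((k:ℝ) + 1)) atTop (𝓝 0) := tendsto_one_div_add_atTop_nhds_zero_nat
    have := (((t1.pow 2).const_mul 20).add ((t2.pow 2).const_mul (8 * (n:ℝ)))).mul_const B
    simpa using this
  set M := ∫ x, (φ x * exp (V x / 2)) ^ 2 with hM
  have hMcont : Continuous (fun x => φ x * exp (V x / 2)) :=
    hφ.1.continuous.mul (hV.continuous.div_const 2).rexp
  have hbd : ∀ k, (∫ x, exp (V x) * pd i φ x * cv ((b k).normed volume) p x) ^ 2 ≤ A k * M := by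
    intro k
    have e1 : ∫ x, exp (V x) * pd i φ x * cv ((b k).normed volume) p x = - ∫ x, φ x * pd i (H k) x := by
      rw [ibp0 i hφ.c1 (hH1 k) hφ.2, neg_neg]
      congr 1; ext x; simp only [hH]; ring
    have e2 : ∫ x, φ x * pd i (H k) x =
        ∫ x, (χ k x * pd i (H k) x * exp (-V x / 2)) * (φ x * exp (V x / 2)) := by
      congr 1; ext x
      have : exp (-V x / 2) * exp (V x / 2) = 1 := by rw [← exp_add]; ring_nf; simp
      by_cases hx : x ∈ tsupport φ
      · rw [hχR k x ((hR x hx).trans (by simp))]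
        linear_combination (- φ x * pd i (H k) x) * this
      · rw [image_eq_zero_of_notMem_tsupport hx]; simp
    have c1 : Continuous (fun x => χ k x * pd i (H k) x * exp (-V x / 2)) :=
      ((hχ k).1.continuous.mul (pd_continuous i (hH1 k))).mul (hV.continuous.neg.div_const 2).rexp
    have i1 : Integrable (fun x => (χ k x * pd i (H k) x * exp (-V x / 2)) ^ 2) := by
      refine int_cc (c1.pow 2) ?_
      simp_rw [sq]
      exact (((hχ k).2.mul_right).mul_right).mul_right
    have i2 : Integrable (fun x => (φ x * exp (V x / 2)) ^ 2) := by
      refine int_cc (hMcont.pow 2) ?_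
      simp_rw [sq]
      exact (hφ.2.mul_right).mul_right
    have i3 : Integrable (fun x => (χ k x * pd i (H k) x * exp (-V x / 2)) * (φ x * exp (V x / 2))) :=
      int_cc (c1.mul hMcont) (((hχ k).2.mul_right).mul_right).mul_right
    rw [e1, neg_sq, e2]
    refine (cs_int i1 i2 i3).trans ?_
    refine mul_le_mul_of_nonneg_right ?_ (integral_nonneg fun x => sq_nonneg _)
    refine integral_mono i1 ?_ fun x => ?_
    · refine int_cc ((((hχ k).1.continuous.pow 2).mul (continuous_finsetSum _ fun i _ =>
        (pd_continuous i (hH1 k)).pow 2)).mul hE) ?_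
      simp_rw [sq]
      exact (((hχ k).2.mul_right).mul_right).mul_right
    · have : exp (-V x / 2) ^ 2 = exp (-V x) := by rw [← exp_nat_mul]; congr 1; push_cast; ring
      simp only
      rw [mul_pow, mul_pow, this]
      gcongr
      exact Finset.single_le_sum (f := fun i => pd i (H k) x ^ 2) (fun j _ => sq_nonneg _) (Finset.mem_univ i)
  have hlim := mol_lim (Ψ := fun x => exp (V x) * pd i φ x) hp (hexp.continuous.mul (hφ.pd i).1.continuous)
    (hφ.pd i).2.mul_left b (squeeze_zero (fun k => (hδ0 k).le) hδk tendsto_one_div_add_atTop_nhds_zero_nat)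
  have hM0 : 0 ≤ M := integral_nonneg fun x => sq_nonneg _
  have hz : Tendsto (fun k => (∫ x, exp (V x) * pd i φ x * cv ((b k).normed volume) p x) ^ 2) atTop (𝓝 0) := by
    refine squeeze_zero (fun k => sq_nonneg _) (fun k => (hbd k).trans
      (mul_le_mul_of_nonneg_right (hAb k) hM0)) ?_
    simpa using hAlim.mul_const M
  have := tendsto_nhds_unique (hlim.pow 2) hz
  rw [← pow_eq_zero_iff two_ne_zero, ← this]
  congr 2; ext x
  simp only [hpdef]
  linear_combination (-(h x * pd i φ x)) * ee x


/-- Poincaré inequality with constant `1/Λ` on test functions. -/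
def Poi (V : EE n → ℝ) (Λ : ℝ) : Prop := ∀ f : EE n → ℝ, Tst f →
  Λ * ((∫ x, f x ^ 2 * exp (-V x)) - (∫ x, f x * exp (-V x)) ^ 2) ≤ ∫ x, (∑ i, pd i f x ^ 2) * exp (-V x)

noncomputable def mu (V : EE n → ℝ) : Measure (EE n) := volume.withDensity (fun x => ENNReal.ofReal (exp (-V x)))

lemma mu_int {V : EE n → ℝ} (hV : Continuous V) (g : EE n → ℝ) : ∫ x, g x ∂(mu V) = ∫ x, g x * exp (-V x) := by
  rw [mu, integral_withDensity_eq_integral_toReal_smul (by fun_prop) (by simp)]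
  congr 1; ext x
  rw [ENNReal.toReal_ofReal (exp_pos _).le, smul_eq_mul, mul_comm]

lemma mu_integrable {V : EE n → ℝ} (hV : Continuous V) (g : EE n → ℝ) :
    Integrable g (mu V) ↔ Integrable (fun x => g x * exp (-V x)) := by
  rw [mu, integrable_withDensity_iff_integrable_smul' (by fun_prop) (by simp)]
  refine integrable_congr (Eventually.of_forall fun x => ?_)
  simp only
  rw [ENNReal.toReal_ofReal (exp_pos _).le, smul_eq_mul, mul_comm]

lemma mu_prob {V : EE n → ℝ} (hVi : Integrable (fun x => exp (-V x)))
    (h1 : ∫ x, exp (-V x) = 1) : IsProbabilityMeasure (mu V) := by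
  constructor
  rw [mu, withDensity_apply _ MeasurableSet.univ, setLIntegral_univ,
    ← ofReal_integral_eq_lintegral_ofReal hVi (Eventually.of_forall fun x => (exp_pos _).le), h1]
  simp

lemma mu_ae {V : EE n → ℝ} (hV : Continuous V) {P : EE n → Prop} : (∀ᵐ x ∂(mu V), P x) ↔ ∀ᵐ x, P x := by
  rw [mu, ae_withDensity_iff (by fun_prop)]
  have : ∀ x, ENNReal.ofReal (exp (-V x)) ≠ 0 := fun x => by simp [exp_pos]
  simp [this]

lemma cs_vec {V f u : EE n → ℝ} (hV : Continuous V) (hf : Tst f) (hu : Tst u) :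
    (∫ x, (∑ i, pd i f x * pd i u x) * exp (-V x)) ^ 2 ≤
      (∫ x, (∑ i, pd i f x ^ 2) * exp (-V x)) * ∫ x, (∑ i, pd i u x ^ 2) * exp (-V x) := by
  have hE : Continuous (fun x => exp (-V x)) := hV.neg.rexp
  have gen : ∀ f u : EE n → ℝ, Tst f → Tst u → Integrable (fun x => (∑ i, pd i f x * pd i u x) * exp (-V x)) := by
    intro f u hf hu
    simp_rw [Finset.sum_mul]
    refine integrable_finsetSum _ fun i _ => int_cc (((hf.pd i).1.continuous.mul
      (hu.pd i).1.continuous).mul hE) (hf.pd i).2.mul_right.mul_right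
  have ha := gen f f hf hf
  have hb := gen u u hu hu
  have hab := gen f u hf hu
  simp_rw [← sq] at ha hb
  have key : ∀ s : ℝ, 0 ≤ (∫ x, (∑ i, pd i f x ^ 2) * exp (-V x)) * (s * s) +
      (2 * ∫ x, (∑ i, pd i f x * pd i u x) * exp (-V x)) * s + ∫ x, (∑ i, pd i u x ^ 2) * exp (-V x) := by
    intro s
    have : 0 ≤ ∫ x, (s * s * ((∑ i, pd i f x ^ 2) * exp (-V x)) +
      2 * s * ((∑ i, pd i f x * pd i u x) * exp (-V x)) + (∑ i, pd i u x ^ 2) * exp (-V x)) :=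
      integral_nonneg fun x => by
        have : s * s * ((∑ i, pd i f x ^ 2) * exp (-V x)) +
            2 * s * ((∑ i, pd i f x * pd i u x) * exp (-V x)) + (∑ i, pd i u x ^ 2) * exp (-V x)
            = (∑ i, (s * pd i f x + pd i u x) ^ 2) * exp (-V x) := by
          simp only [Finset.mul_sum, Finset.sum_mul, ← Finset.sum_add_distrib]
          exact Finset.sum_congr rfl fun i _ => by ring
        simp only [this, Pi.zero_apply]
        exact mul_nonneg (Finset.sum_nonneg fun i _ => sq_nonneg _) (exp_pos _).le
    have i12 : Integrable (fun x => s * s * ((∑ i, pd i f x ^ 2) * exp (-V x)) +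
      2 * s * ((∑ i, pd i f x * pd i u x) * exp (-V x))) := (ha.const_mul _).add (hab.const_mul _)
    rw [integral_add i12 hb, integral_add (ha.const_mul _)
      (hab.const_mul _), integral_const_mul, integral_const_mul] at this
    linarith
  have := discrim_le_zero key
  rw [discrim] at this
  nlinarith

lemma pd_add {f g : EE n → ℝ} (i : Fin n) (hf : ContDiff ℝ 1 f) (hg : ContDiff ℝ 1 g) (x : EE n) :
    pd i (fun y => f y + g y) x = pd i f x + pd i g x := by
  unfold pd
  rw [fderiv_fun_add (hf.differentiable one_ne_zero x) (hg.differentiable one_ne_zero x)]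
  simp

lemma pd_cmul {f : EE n → ℝ} (c : ℝ) (i : Fin n) (hf : ContDiff ℝ 1 f) (x : EE n) :
    pd i (fun y => c * f y) x = c * pd i f x := by
  unfold pd
  rw [fderiv_const_mul (hf.differentiable one_ne_zero x)]
  simp

lemma Lg_add {V u v : EE n → ℝ} (hu : Tst u) (hv : Tst v) (x : EE n) :
    Lg V (fun y => u y + v y) x = Lg V u x + Lg V v x := by
  simp only [Lg, ← Finset.sum_add_distrib]
  refine Finset.sum_congr rfl fun i _ => ?_
  have : pd i (fun y => u y + v y) = fun y => pd i u y + pd i v y := by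
    ext y; exact pd_add i hu.c1 hv.c1 y
  rw [this, pd_add i (hu.pd i).c1 (hv.pd i).c1]; ring

lemma Lg_cmul {V u : EE n → ℝ} (c : ℝ) (hu : Tst u) (x : EE n) :
    Lg V (fun y => c * u y) x = c * Lg V u x := by
  simp only [Lg, Finset.mul_sum]
  refine Finset.sum_congr rfl fun i _ => ?_
  have : pd i (fun y => c * u y) = fun y => c * pd i u y := by
    ext y; exact pd_cmul c i hu.c1 y
  rw [this, pd_cmul c i (hu.pd i).c1]; ring

noncomputable def KK (V : EE n → ℝ) : Submodule ℝ (Lp ℝ 2 (mu V)) where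
  carrier := {g | ∃ u, Tst u ∧ g =ᵐ[mu V] Lg V u}
  zero_mem' := by
    refine ⟨fun _ => 0, ⟨contDiff_const, HasCompactSupport.zero⟩, ?_⟩
    filter_upwards [Lp.coeFn_zero ℝ 2 (mu V)] with x hx
    rw [hx]
    have : ∀ i, pd i (fun _ : EE n => (0:ℝ)) = fun _ => 0 := fun i => by ext y; simp [pd]
    simp [Lg, this]
  add_mem' := by
    rintro a b ⟨u, hu, ha⟩ ⟨v, hv, hb⟩
    refine ⟨fun y => u y + v y, ⟨hu.1.add hv.1, hu.2.add hv.2⟩, ?_⟩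
    filter_upwards [Lp.coeFn_add a b, ha, hb] with x h1 h2 h3
    rw [h1, Pi.add_apply, h2, h3, Lg_add hu hv]
  smul_mem' := by
    rintro c a ⟨u, hu, ha⟩
    refine ⟨fun y => c * u y, ⟨contDiff_const.mul hu.1, hu.2.mul_left⟩, ?_⟩
    filter_upwards [Lp.coeFn_smul c a, ha] with x h1 h2
    rw [h1, Pi.smul_apply, h2, Lg_cmul c hu, smul_eq_mul]

lemma upgrade {V : EE n → ℝ} (hV : ContDiff ℝ 2 V) (hVi : Integrable (fun x => exp (-V x)))
    (h1 : ∫ x, exp (-V x) = 1) {Λ : ℝ} (hΛ : 0 < Λ)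
    (hB : ∀ u, Tst u → Λ * ∫ x, (∑ i, pd i u x ^ 2) * exp (-V x) ≤ ∫ x, Lg V u x ^ 2 * exp (-V x)) :
    Poi V Λ := by
  intro f hf
  have hVc := hV.continuous
  have hV1 : ContDiff ℝ 1 V := hV.of_le (by norm_num)
  have := mu_prob hVi h1
  set c := ∫ x, f x * exp (-V x) with hc
  set D := ∫ x, (∑ i, pd i f x ^ 2) * exp (-V x) with hD
  have hD0 : 0 ≤ D := integral_nonneg fun x =>
    mul_nonneg (Finset.sum_nonneg fun i _ => sq_nonneg _) (exp_pos _).le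
  have hfi : Integrable f (mu V) := by
    rw [mu_integrable hVc]
    exact int_cc (hf.1.continuous.mul hVc.neg.rexp) hf.2.mul_right
  have hf2 : Integrable (fun x => f x ^ 2) (mu V) := by
    rw [mu_integrable hVc]
    refine int_cc ((hf.1.continuous.pow 2).mul hVc.neg.rexp) ?_
    simp_rw [sq]; exact hf.2.mul_right.mul_right
  have hFm : MemLp (fun x => f x - c) 2 (mu V) := by
    have : MemLp f 2 (mu V) := (memLp_two_iff_integrable_sq hf.1.continuous.aestronglyMeasurable).2 hf2
    exact this.sub (memLp_const c)
  set F : Lp ℝ 2 (mu V) := hFm.toLp with hF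
  have hFae := hFm.coeFn_toLp
  have hcm : ∫ x, f x ∂(mu V) = c := by rw [mu_int hVc]
  have hnorm : ‖F‖ ^ 2 = (∫ x, f x ^ 2 * exp (-V x)) - c ^ 2 := by
    rw [← real_inner_self_eq_norm_sq, L2.inner_def]
    have : ∫ x, ⟪F x, F x⟫ ∂(mu V) = ∫ x, (f x ^ 2 - 2 * c * f x + c ^ 2) ∂(mu V) := by
      refine integral_congr_ae ?_
      filter_upwards [hFae] with x hx
      rw [hx]; simp; ring
    rw [this]
    have i1 : Integrable (fun x => f x ^ 2 - 2 * c * f x) (mu V) := hf2.sub (hfi.const_mul _)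
    rw [integral_add i1 (integrable_const _), integral_sub hf2 (hfi.const_mul _), integral_const_mul, hcm, mu_int hVc]
    simp; ring
  have hFK : F ∈ (KK V).topologicalClosure := by
    rw [← Submodule.orthogonal_orthogonal_eq_closure, Submodule.mem_orthogonal]
    intro h hh
    rw [Submodule.mem_orthogonal'] at hh
    have hm : MemLp h 2 (mu V) := Lp.memLp h
    obtain ⟨c', hc'⟩ : ∃ c' : ℝ, ∀ᵐ x, h x = c' := by
      refine weak_harm hV ?_ ?_ ?_
      · rw [← mu_integrable hVc]; exact hm.integrable (by norm_num)
      · have := hm.integrable_sq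
        rwa [mu_integrable hVc] at this
      · intro u hu
        have hLm : MemLp (Lg V u) 2 (mu V) := by
          refine (memLp_two_iff_integrable_sq (Lg_continuous hV1 hu).aestronglyMeasurable).2 ?_
          rw [mu_integrable hVc]
          refine int_cc (((Lg_continuous hV1 hu).pow 2).mul hVc.neg.rexp) ?_
          simp_rw [sq]; exact (Lg_compact hu).mul_right.mul_right
        have := hh hLm.toLp ⟨u, hu, hLm.coeFn_toLp⟩
        rw [L2.inner_def] at this
        rw [← this, ← mu_int hVc (fun x => h x * Lg V u x)]
        refine integral_congr_ae ?_
        filter_upwards [hLm.coeFn_toLp] with x hx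
        rw [hx]; simp; ring
    rw [← mu_ae hVc] at hc'
    rw [L2.inner_def]
    have : ∫ x, ⟪h x, F x⟫ ∂(mu V) = ∫ x, c' * (f x - c) ∂(mu V) := by
      refine integral_congr_ae ?_
      filter_upwards [hFae, hc'] with x hx hx'
      rw [hx, hx']; simp; ring
    rw [this, integral_const_mul, integral_sub hfi (integrable_const _), hcm]
    simp
  have hcl : IsClosed {g : Lp ℝ 2 (mu V) | Λ * ⟪F, g⟫ ^ 2 ≤ D * ‖g‖ ^ 2} :=
    isClosed_le (by fun_prop) (by fun_prop)
  have hsub : (KK V : Set (Lp ℝ 2 (mu V))) ⊆ {g : Lp ℝ 2 (mu V) | Λ * ⟪F, g⟫ ^ 2 ≤ D * ‖g‖ ^ 2} := by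
    rintro g ⟨u, hu, hg⟩
    simp only [mem_ofPred_eq]
    have e1 : ⟪F, g⟫ = ∫ x, (∑ i, pd i f x * pd i u x) * exp (-V x) := by
      rw [L2.inner_def]
      have : ∫ x, ⟪F x, g x⟫ ∂(mu V) = ∫ x, (f x - c) * Lg V u x ∂(mu V) := by
        refine integral_congr_ae ?_
        filter_upwards [hFae, hg] with x hx hx'
        rw [hx, hx']; simp; ring
      rw [this, mu_int hVc, Lg_ibp hV1 (hf.c1.sub contDiff_const) hu]
      congr 1; ext x; congr 1
      refine Finset.sum_congr rfl fun i _ => ?_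
      rw [pd_sub i hf.c1 contDiff_const]
      simp [pd]
    have e2 : ‖g‖ ^ 2 = ∫ x, Lg V u x ^ 2 * exp (-V x) := by
      rw [← real_inner_self_eq_norm_sq, L2.inner_def, ← mu_int hVc]
      refine integral_congr_ae ?_
      filter_upwards [hg] with x hx
      rw [hx]; simp
    rw [e1, e2]
    have := cs_vec hVc hf hu
    have h3 := mul_le_mul_of_nonneg_left (hB u hu) hD0
    calc _ ≤ Λ * (D * ∫ x, (∑ i, pd i u x ^ 2) * exp (-V x)) := by gcongr
      _ ≤ _ := by linarith
  have hfin : F ∈ {g : Lp ℝ 2 (mu V) | Λ * ⟪F, g⟫ ^ 2 ≤ D * ‖g‖ ^ 2} :=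
    closure_minimal hsub hcl hFK
  simp only [mem_ofPred_eq, real_inner_self_eq_norm_sq] at hfin
  rw [← hnorm]
  rcases eq_or_lt_of_le (sq_nonneg ‖F‖) with h0 | h0
  · rw [← h0]; simpa using hD0
  · have : (Λ * ‖F‖ ^ 2) * ‖F‖ ^ 2 ≤ D * ‖F‖ ^ 2 := by linarith
    exact le_of_mul_le_mul_right this h0


lemma Mol.avg {ψ : EE n → ℝ} {δ : ℝ} (h : Mol ψ δ) {g : EE n → ℝ} {B : ℝ}
    (hB : ∀ t, ‖t‖ < δ → |g t| ≤ B) : |∫ t, ψ t * g t| ≤ B := by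
  have hi : Integrable ψ := int_cc h.tst.1.continuous h.tst.2
  have : ‖∫ t, ψ t * g t‖ ≤ ∫ t, ψ t * B := by
    refine norm_integral_le_of_norm_le (hi.mul_const B) (Eventually.of_forall fun t => ?_)
    rw [norm_mul, Real.norm_eq_abs, Real.norm_eq_abs, abs_of_nonneg (h.nn t)]
    by_cases ht : ψ t = 0
    · simp [ht]
    · exact mul_le_mul_of_nonneg_left (hB t (h.supp t ht)) (h.nn t)
  rw [integral_mul_const, h.one, one_mul] at this
  exact this

lemma lip_cont {q : EE n → ℝ} {L : ℝ} (hL : ∀ x y, |q x - q y| ≤ L * ‖x - y‖) : Continuous q := by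
  have : LipschitzWith L.toNNReal q := LipschitzWith.of_dist_le_mul fun x y => by
    rw [Real.dist_eq, dist_eq_norm]
    exact (hL x y).trans (mul_le_mul_of_nonneg_right (Real.le_coe_toNNReal L) (norm_nonneg _))
  exact this.continuous

lemma approx {q : EE n → ℝ} {L M : ℝ} (hL0 : 0 ≤ L) (hL : ∀ x y, |q x - q y| ≤ L * ‖x - y‖)
    (hM : ∀ x, |q x| ≤ M) : ∃ C : ℝ, ∃ F : ℕ → EE n → ℝ, (∀ k, Tst (F k)) ∧ (∀ k x, |F k x| ≤ M) ∧
      (∀ k x, ‖fderiv ℝ (F k) x‖ ≤ L + C * (1 / ((k:ℝ) + 1))) ∧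
      ∀ x, Tendsto (fun k => F k x) atTop (𝓝 (q x)) := by
  obtain ⟨C, hC0, hC⟩ := cutoff (n := n)
  have hM0 : 0 ≤ M := (abs_nonneg _).trans (hM 0)
  have hqc := lip_cont hL
  have hql : LocallyIntegrable q := hqc.locallyIntegrable
  choose χ hχT hχ1 hχR hχd using fun k : ℕ => hC ((k:ℝ) + 1) (by positivity)
  let ψ : ℕ → EE n → ℝ := fun k => (bmp (n := n) (1 / ((k:ℝ) + 1)) (by positivity)).normed volume
  have hψ : ∀ k, Mol (ψ k) (1 / ((k:ℝ) + 1)) := fun k => bmp_mol _ _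
  have hb : ∀ k x, |cv (ψ k) q x| ≤ M := fun k x => by
    rw [cv_def]; exact (hψ k).avg fun t _ => hM _
  have hint : ∀ k x, Integrable (fun t => ψ k t * q (x - t)) := fun k x =>
    cv_int (hψ k).tst.1.continuous (hψ k).tst.2 hql x
  have hlip : ∀ k x y, |cv (ψ k) q x - cv (ψ k) q y| ≤ L * ‖x - y‖ := fun k x y => by
    rw [cv_def, cv_def, ← integral_sub (hint k x) (hint k y)]
    simp_rw [← mul_sub]
    refine (hψ k).avg fun t _ => (hL _ _).trans (by simp)
  have hcl : ∀ k x, |cv (ψ k) q x - q x| ≤ L * (1 / ((k:ℝ) + 1)) := fun k x => by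
    have e : q x = ∫ t, ψ k t * q x := by rw [integral_mul_const, (hψ k).one, one_mul]
    have hi : Integrable (fun t => ψ k t * q x) :=
      (int_cc (hψ k).tst.1.continuous (hψ k).tst.2).mul_const _
    have : cv (ψ k) q x - q x = ∫ t, ψ k t * (q (x - t) - q x) := by
      simp_rw [mul_sub]
      rw [integral_sub (hint k x) hi, ← e, cv_def]
    rw [this]
    refine (hψ k).avg fun t ht => (hL _ _).trans ?_
    refine mul_le_mul_of_nonneg_left ?_ hL0
    simpa using ht.le
  have hsm : ∀ k, ContDiff ℝ ∞ (cv (ψ k) q) := fun k => cv_smooth (hψ k).tst hql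
  refine ⟨M * C, fun k x => χ k x * cv (ψ k) q x, fun k => ⟨(hχT k).1.mul (hsm k), (hχT k).2.mul_right⟩,
    fun k x => ?_, fun k x => ?_, fun x => ?_⟩
  · rw [abs_mul]
    calc _ ≤ 1 * M := mul_le_mul (hχ1 k x) (hb k x) (abs_nonneg _) zero_le_one
      _ = M := one_mul M
  · have d1 : DifferentiableAt ℝ (χ k) x := (hχT k).1.differentiable (by simp) x
    have d2 : DifferentiableAt ℝ (cv (ψ k) q) x := (hsm k).differentiable (by simp) x
    rw [fderiv_fun_mul d1 d2]
    have n2 : ‖fderiv ℝ (cv (ψ k) q) x‖ ≤ L :=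
      norm_fderiv_le_of_lip' ℝ hL0 (Eventually.of_forall fun y => hlip k y x)
    refine (norm_add_le _ _).trans (add_le_add ?_ ?_)
    · rw [norm_smul, Real.norm_eq_abs]
      calc _ ≤ 1 * L := mul_le_mul (hχ1 k x) n2 (norm_nonneg _) zero_le_one
        _ = L := one_mul L
    · rw [norm_smul, Real.norm_eq_abs]
      calc _ ≤ M * (C / ((k:ℝ) + 1)) := mul_le_mul (hb k x) (hχd k x) (norm_nonneg _) hM0
        _ = _ := by ring
  · have h1 : Tendsto (fun k => cv (ψ k) q x) atTop (𝓝 (q x)) := by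
      rw [tendsto_iff_dist_tendsto_zero]
      refine squeeze_zero (fun _ => dist_nonneg) (fun k => hcl k x) ?_
      simpa using (tendsto_one_div_add_atTop_nhds_zero_nat (𝕜 := ℝ)).const_mul L
    refine h1.congr' ?_
    filter_upwards [eventually_ge_atTop ⌈‖x‖⌉₊] with k hk
    rw [hχR k x, one_mul]
    have := Nat.ceil_le.1 hk
    linarith

lemma var_lip {V q : EE n → ℝ} {L M lam : ℝ} (hV : ContDiff ℝ 2 V) (hVi : Integrable (fun x => exp (-V x)))
    (h1 : ∫ x, exp (-V x) = 1) (hP : Poi V lam)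
    (hL0 : 0 ≤ L) (hL : ∀ x y, |q x - q y| ≤ L * ‖x - y‖)
    (hM : ∀ x, |q x| ≤ M) :
    lam * ((∫ x, q x ^ 2 ∂(mu V)) - (∫ x, q x ∂(mu V)) ^ 2) ≤ L ^ 2 := by
  obtain ⟨C, F, hT, hb, hd, hl⟩ := approx hL0 hL hM
  have hVc := hV.continuous
  have := mu_prob hVi h1
  have hk : ∀ k : ℕ, lam * ((∫ x, F k x ^ 2 ∂(mu V)) - (∫ x, F k x ∂(mu V)) ^ 2) ≤ (L + C * (1 / ((k:ℝ) + 1))) ^ 2 := by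
    intro k
    rw [mu_int hVc, mu_int hVc]
    refine (hP _ (hT k)).trans ?_
    rw [← mu_int hVc (fun x => ∑ i, pd i (F k) x ^ 2)]
    calc _ ≤ ∫ x, (L + C * (1 / ((k:ℝ) + 1))) ^ 2 ∂(mu V) := by
          refine integral_mono_of_nonneg (Eventually.of_forall fun x => Finset.sum_nonneg fun i _ => sq_nonneg _)
            (integrable_const _) (Eventually.of_forall fun x => ?_)
          simp only [grad_sum_le]
          exact pow_le_pow_left₀ (norm_nonneg _) (hd k x) 2
      _ = _ := by simp
  have t1 : Tendsto (fun k => ∫ x, F k x ∂(mu V)) atTop (𝓝 (∫ x, q x ∂(mu V))) :=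
    tendsto_integral_of_dominated_convergence (fun _ => M) (fun k => (hT k).1.continuous.aestronglyMeasurable)
      (integrable_const _) (fun k => Eventually.of_forall (hb k)) (Eventually.of_forall hl)
  have t2 : Tendsto (fun k => ∫ x, F k x ^ 2 ∂(mu V)) atTop (𝓝 (∫ x, q x ^ 2 ∂(mu V))) :=
    tendsto_integral_of_dominated_convergence (fun _ => M ^ 2) (fun k => ((hT k).1.continuous.pow 2).aestronglyMeasurable)
      (integrable_const _) (fun k => Eventually.of_forall fun x => by
        rw [norm_pow, Real.norm_eq_abs]; exact pow_le_pow_left₀ (abs_nonneg _) (hb k x) 2)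
      (Eventually.of_forall fun x => (hl x).pow 2)
  have t3 : Tendsto (fun k : ℕ => (L + C * (1 / ((k:ℝ) + 1))) ^ 2) atTop (𝓝 (L ^ 2)) := by
    have := (((tendsto_one_div_add_atTop_nhds_zero_nat (𝕜 := ℝ)).const_mul C).const_add L).pow 2
    simpa using this
  exact le_of_tendsto_of_tendsto' ((t2.sub (t1.pow 2)).const_mul lam) t3 hk


lemma form_lower {V q : EE n → ℝ} {Λ : ℝ} (hV : ContDiff ℝ 2 V) (hVi : Integrable (fun x => exp (-V x)))
    (h1 : ∫ x, exp (-V x) = 1) (hΛ : 0 < Λ) (hq : Continuous q)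
    (hH : ∀ x u, q x * ‖u‖ ^ 2 ≤ iteratedFDeriv ℝ 2 V x ![u, u])
    (hg : ∀ g, Tst g → Λ * ∫ x, g x ^ 2 * exp (-V x) ≤
      (∫ x, (∑ j, pd j g x ^ 2) * exp (-V x)) + ∫ x, q x * g x ^ 2 * exp (-V x)) : Poi V Λ := by
  refine upgrade hV hVi h1 hΛ fun u hu => ?_
  have hE : Continuous (fun x => exp (-V x)) := hV.continuous.neg.rexp
  have hpV : ∀ i j, Continuous (pd i (pd j V)) := fun i j =>
    pd_continuous i (pd_contDiff j hV (by norm_num))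
  have I1 : ∀ i, Integrable (fun x => pd i u x ^ 2 * exp (-V x)) := fun i => by
    simp_rw [sq]
    exact int_cc (((hu.pd i).1.continuous.mul (hu.pd i).1.continuous).mul hE) (hu.pd i).2.mul_right.mul_right
  have I2 : ∀ i, Integrable (fun x => (∑ j, pd j (pd i u) x ^ 2) * exp (-V x)) := fun i => by
    simp_rw [Finset.sum_mul, sq]
    refine integrable_finsetSum _ fun j _ => int_cc ((((hu.pd i).pd j).1.continuous.mul
      ((hu.pd i).pd j).1.continuous).mul hE) ((hu.pd i).pd j).2.mul_right.mul_right
  have I3 : ∀ i, Integrable (fun x => q x * pd i u x ^ 2 * exp (-V x)) := fun i => by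
    simp_rw [sq]
    exact int_cc ((hq.mul ((hu.pd i).1.continuous.mul (hu.pd i).1.continuous)).mul hE)
      (hu.pd i).2.mul_right.mul_left.mul_right
  have I4 : Integrable (fun x => (∑ i, ∑ j, pd i (pd j V) x * pd i u x * pd j u x) * exp (-V x)) := by
    simp_rw [Finset.sum_mul]
    refine integrable_finsetSum _ fun i _ => integrable_finsetSum _ fun j _ => int_cc ((((hpV i j).mul
      (hu.pd i).1.continuous).mul (hu.pd j).1.continuous).mul hE) (hu.pd j).2.mul_left.mul_right
  have I5 : Integrable (fun x => (∑ i, ∑ j, pd j (pd i u) x ^ 2) * exp (-V x)) := by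
    simp_rw [Finset.sum_mul (s := Finset.univ) (f := fun i => ∑ j, pd j (pd i u) _ ^ 2)]
    exact integrable_finsetSum _ fun i _ => I2 i
  rw [bochner hV hu]
  calc _ = ∑ i, Λ * ∫ x, pd i u x ^ 2 * exp (-V x) := by
        simp_rw [Finset.sum_mul]
        rw [sum_int_swap _ _ fun i _ => I1 i, Finset.mul_sum]
    _ ≤ ∑ i, ((∫ x, (∑ j, pd j (pd i u) x ^ 2) * exp (-V x)) + ∫ x, q x * pd i u x ^ 2 * exp (-V x)) :=
        Finset.sum_le_sum fun i _ => hg _ (hu.pd i)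
    _ = ∫ x, ∑ i, ((∑ j, pd j (pd i u) x ^ 2) * exp (-V x) + q x * pd i u x ^ 2 * exp (-V x)) := by
        rw [sum_int_swap Finset.univ (fun i x => (∑ j, pd j (pd i u) x ^ 2) * exp (-V x) + q x * pd i u x ^ 2 * exp (-V x)) fun i _ => (I2 i).add (I3 i)]
        exact Finset.sum_congr rfl fun i _ => (integral_add (I2 i) (I3 i)).symm
    _ ≤ _ := by
        refine integral_mono (integrable_finsetSum _ fun i _ => (I2 i).add (I3 i)) ?_ fun x => ?_
        · simp_rw [add_mul]; exact I5.add I4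
        · simp only [Finset.sum_add_distrib, add_mul, ← Finset.sum_mul, ← Finset.mul_sum]
          refine add_le_add le_rfl (mul_le_mul_of_nonneg_right ?_ (exp_pos _).le)
          have := hH x (WithLp.toLp 2 fun i => pd i u x)
          rw [hess_sum hV, EuclideanSpace.real_norm_sq_eq] at this
          exact this

lemma base {V : EE n → ℝ} {r0 : ℝ} (hV : ContDiff ℝ 2 V) (hVi : Integrable (fun x => exp (-V x)))
    (h1 : ∫ x, exp (-V x) = 1) (hr : 0 < r0)
    (hH : ∀ x u, r0 * ‖u‖ ^ 2 ≤ iteratedFDeriv ℝ 2 V x ![u, u]) : Poi V r0 := by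
  refine form_lower hV hVi h1 hr continuous_const hH fun g hg => ?_
  have : 0 ≤ ∫ x, (∑ j, pd j g x ^ 2) * exp (-V x) := integral_nonneg fun x =>
    mul_nonneg (Finset.sum_nonneg fun i _ => sq_nonneg _) (exp_pos _).le
  simp_rw [mul_assoc]
  rw [integral_const_mul]; linarith

lemma lower {V r g : EE n → ℝ} {L B lam : ℝ} (hV : ContDiff ℝ 2 V) (hVi : Integrable (fun x => exp (-V x)))
    (h1 : ∫ x, exp (-V x) = 1) (hP : Poi V lam) (hlam : 0 < lam)
    (hL0 : 0 ≤ L) (hL : ∀ x y, |r x - r y| ≤ L * ‖x - y‖)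
    (hB : ∀ x, |r x| ≤ B) (hr0 : ∀ x, 0 ≤ r x) (hg : Tst g) :
    ∃ T : ℝ, lam * T ^ 2 ≤ L ^ 2 * ((∫ x, g x ^ 2 ∂(mu V)) - (∫ x, g x ∂(mu V)) ^ 2) ∧
      (∫ x, g x ∂(mu V)) ^ 2 * (∫ x, r x ∂(mu V)) + 2 * (∫ x, g x ∂(mu V)) * T ≤ ∫ x, r x * g x ^ 2 ∂(mu V) := by
  have hVc := hV.continuous
  have := mu_prob hVi h1
  have hrc := lip_cont hL
  have hv := var_lip hV hVi h1 hP hL0 hL hB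
  have hgc := hg.1.continuous
  have bi : ∀ F : EE n → ℝ, Continuous F → (∃ K, ∀ x, |F x| ≤ K) → Integrable F (mu V) := by
    rintro F hF ⟨K, hK⟩
    exact Integrable.of_bound hF.aestronglyMeasurable K (Eventually.of_forall hK)
  obtain ⟨K, hK⟩ : ∃ K, ∀ x, |g x| ≤ K := hg.2.exists_bound_of_continuous hgc
  have hB0 : 0 ≤ B := (abs_nonneg _).trans (hB 0)
  have hK0 : 0 ≤ K := (abs_nonneg _).trans (hK 0)
  have ir := bi r hrc ⟨B, hB⟩
  have ig := bi g hgc ⟨K, hK⟩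
  have ir2 := bi (fun x => r x ^ 2) (hrc.pow 2) ⟨B ^ 2, fun x => by
    rw [abs_pow]; exact pow_le_pow_left₀ (abs_nonneg _) (hB x) 2⟩
  have ig2 := bi (fun x => g x ^ 2) (hgc.pow 2) ⟨K ^ 2, fun x => by
    rw [abs_pow]; exact pow_le_pow_left₀ (abs_nonneg _) (hK x) 2⟩
  have irg := bi (fun x => r x * g x) (hrc.mul hgc) ⟨B * K, fun x => by
    rw [abs_mul]; exact mul_le_mul (hB x) (hK x) (abs_nonneg _) hB0⟩
  have irg2 := bi (fun x => r x * g x ^ 2) (hrc.mul (hgc.pow 2)) ⟨B * K ^ 2, fun x => by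
    rw [abs_mul, abs_pow]; exact mul_le_mul (hB x) (pow_le_pow_left₀ (abs_nonneg _) (hK x) 2) (by positivity) hB0⟩
  set c := ∫ x, g x ∂(mu V)
  set a := ∫ x, r x ∂(mu V)
  have varf : ∀ (f : EE n → ℝ) (c : ℝ), Integrable f (mu V) → Integrable (fun x => f x ^ 2) (mu V) →
      c = ∫ x, f x ∂(mu V) → Integrable (fun x => (f x - c) ^ 2) (mu V) ∧
      ∫ x, (f x - c) ^ 2 ∂(mu V) = (∫ x, f x ^ 2 ∂(mu V)) - c ^ 2 := by
    intro f c i1 i2 hc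
    have e : (fun x => (f x - c) ^ 2) = fun x => (f x ^ 2 - 2 * c * f x) + c ^ 2 := by ext x; ring
    have j1 : Integrable (fun x => f x ^ 2 - 2 * c * f x) (mu V) := i2.sub (i1.const_mul _)
    rw [e]
    refine ⟨j1.add (integrable_const _), ?_⟩
    rw [integral_add j1 (integrable_const _), integral_sub i2 (i1.const_mul _), integral_const_mul, ← hc]
    simp; ring
  obtain ⟨vg1, vg2⟩ := varf g c ig ig2 rfl
  obtain ⟨vr1, vr2⟩ := varf r a ir ir2 rfl
  have ecov : (fun x => (r x - a) * (g x - c)) = fun x => (r x * g x - a * g x) - (c * r x - a * c) := by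
    ext x; ring
  have j1 : Integrable (fun x => r x * g x - a * g x) (mu V) := irg.sub (ig.const_mul _)
  have j2 : Integrable (fun x => c * r x - a * c) (mu V) := (ir.const_mul _).sub (integrable_const _)
  have hcs := cs_int vr1 vg1 (by rw [ecov]; exact j1.sub j2)
  have hT : ∫ x, (r x - a) * (g x - c) ∂(mu V) = (∫ x, r x * g x ∂(mu V)) - a * c := by
    rw [ecov, integral_sub j1 j2, integral_sub irg (ig.const_mul _),
      integral_sub (ir.const_mul _) (integrable_const _), integral_const_mul, integral_const_mul]
    simp; ring
  rw [vg2, vr2, hT] at hcs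
  refine ⟨(∫ x, r x * g x ∂(mu V)) - a * c, ?_, ?_⟩
  · have hS : 0 ≤ (∫ x, g x ^ 2 ∂(mu V)) - c ^ 2 := by
      rw [← vg2]; exact integral_nonneg fun x => sq_nonneg _
    have h2 := mul_le_mul_of_nonneg_right hv hS
    have h3 := mul_le_mul_of_nonneg_left hcs hlam.le
    linarith
  · have h0 : 0 ≤ ∫ x, r x * (g x - c) ^ 2 ∂(mu V) := integral_nonneg fun x => mul_nonneg (hr0 x) (sq_nonneg _)
    have e : (fun x => r x * (g x - c) ^ 2) = fun x => (r x * g x ^ 2 - 2 * c * (r x * g x)) + c ^ 2 * r x := by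
      ext x; ring
    have j3 : Integrable (fun x => r x * g x ^ 2 - 2 * c * (r x * g x)) (mu V) := irg2.sub (irg.const_mul _)
    rw [e, integral_add j3 (ir.const_mul _), integral_sub irg2 (irg.const_mul _), integral_const_mul,
      integral_const_mul] at h0
    linarith

lemma alg1 {r0 ε L a : ℝ} (hr : 0 < r0) (hε : 0 ≤ ε) (hL : 0 < L) (ha : ε + 2 * L * √ε / r0 < a) :
    ∃ η > 0, ∀ c S T : ℝ, 0 ≤ S → (r0 + ε) * T ^ 2 ≤ L ^ 2 * S →
      (ε + η) * (c ^ 2 + S) ≤ (r0 + ε) * S + max 0 (c ^ 2 * a + 2 * c * T) := by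
  have hlam : 0 < r0 + ε := by linarith
  have hcont : ContinuousAt (fun η : ℝ => ε + η + 2 * L * √((ε + η) / ((r0 + ε) * (r0 - η)))) 0 := by
    refine (by fun_prop : ContinuousAt (fun η : ℝ => ε + η) 0).add (continuousAt_const.mul ?_)
    refine Real.continuous_sqrt.continuousAt.comp (ContinuousAt.div (by fun_prop) (by fun_prop) ?_)
    simp; constructor <;> positivity
  have h0 : ε + 0 + 2 * L * √((ε + 0) / ((r0 + ε) * (r0 - 0))) < a := by
    refine lt_of_le_of_lt ?_ ha
    simp only [add_zero, sub_zero]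
    have : √(ε / ((r0 + ε) * r0)) ≤ √ε / r0 := by
      rw [Real.sqrt_le_left (by positivity), div_pow, Real.sq_sqrt hε, sq]
      gcongr; linarith
    rw [mul_div_assoc]
    have := mul_le_mul_of_nonneg_left this (by positivity : 0 ≤ 2 * L)
    linarith
  have hev : ∀ᶠ η in 𝓝[>] (0:ℝ), ε + η + 2 * L * √((ε + η) / ((r0 + ε) * (r0 - η))) < a :=
    (hcont.eventually (gt_mem_nhds h0)).filter_mono nhdsWithin_le_nhds
  have hev2 : ∀ᶠ η in 𝓝[>] (0:ℝ), η < r0 :=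
    (gt_mem_nhds hr).filter_mono nhdsWithin_le_nhds
  obtain ⟨η, ⟨h1, h2⟩, h3⟩ := ((hev.and hev2).and self_mem_nhdsWithin).exists
  have h3 : 0 < η := h3
  refine ⟨η, h3, fun c S T hS hT => ?_⟩
  by_cases hc : (ε + η) * (c ^ 2 + S) ≤ (r0 + ε) * S
  · exact hc.trans (le_add_of_nonneg_right (le_max_left _ _))
  push Not at hc
  have hd : 0 < r0 - η := by linarith
  set K := √((ε + η) / ((r0 + ε) * (r0 - η))) with hK
  have hK0 : 0 ≤ K := Real.sqrt_nonneg _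
  have hK2 : K ^ 2 * ((r0 + ε) * (r0 - η)) = ε + η := by
    rw [hK, Real.sq_sqrt (by positivity)]; field_simp
  have hS2 : (r0 - η) * S ≤ (ε + η) * c ^ 2 := by nlinarith
  have hT2 : T ^ 2 ≤ (L * K * |c|) ^ 2 := by
    have e : (L * K * |c|) ^ 2 * ((r0 + ε) * (r0 - η)) = L ^ 2 * ((ε + η) * c ^ 2) := by
      rw [← hK2]; rw [mul_pow, mul_pow, sq_abs]; ring
    have : T ^ 2 * ((r0 + ε) * (r0 - η)) ≤ (L * K * |c|) ^ 2 * ((r0 + ε) * (r0 - η)) := by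
      rw [e]
      have a1 := mul_le_mul_of_nonneg_right hT hd.le
      have a2 := mul_le_mul_of_nonneg_left hS2 (sq_nonneg L)
      nlinarith
    exact le_of_mul_le_mul_right this (by positivity)
  have hTa : |T| ≤ L * K * |c| := abs_le_of_sq_le_sq hT2 (by positivity)
  have hcT : -(c * T) ≤ L * K * c ^ 2 := by
    calc -(c * T) ≤ |c * T| := neg_le_abs _
      _ = |c| * |T| := abs_mul _ _
      _ ≤ |c| * (L * K * |c|) := mul_le_mul_of_nonneg_left hTa (abs_nonneg _)
      _ = L * K * c ^ 2 := by rw [← sq_abs c]; ring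
  have hm := le_max_right 0 (c ^ 2 * a + 2 * c * T)
  have h5 := mul_le_mul_of_nonneg_left h1.le (sq_nonneg c)
  have h6 : 0 ≤ (r0 - η) * S := by positivity
  nlinarith

lemma improve {V q : EE n → ℝ} {L M r0 ε : ℝ} (hV : ContDiff ℝ 2 V) (hVi : Integrable (fun x => exp (-V x)))
    (h1 : ∫ x, exp (-V x) = 1) (hr : 0 < r0) (hε : 0 ≤ ε) (hP : Poi V (r0 + ε))
    (hL0 : 0 < L) (hL : ∀ x y, |q x - q y| ≤ L * ‖x - y‖) (hq : ∀ x, r0 ≤ q x) (hM : ∀ x, q x ≤ M)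
    (hH : ∀ x u, q x * ‖u‖ ^ 2 ≤ iteratedFDeriv ℝ 2 V x ![u, u])
    (ha : ε + 2 * L * √ε / r0 < (∫ x, q x ∂(mu V)) - r0) : ∃ η > 0, Poi V (r0 + ε + η) := by
  have hVc := hV.continuous
  have := mu_prob hVi h1
  have hqc := lip_cont hL
  have iq : Integrable q (mu V) := Integrable.of_bound hqc.aestronglyMeasurable M
    (Eventually.of_forall fun x => by
      rw [Real.norm_eq_abs, abs_of_nonneg (hr.le.trans (hq x))]; exact hM x)
  have ea : ∫ x, (q x - r0) ∂(mu V) = (∫ x, q x ∂(mu V)) - r0 := by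
    rw [integral_sub iq (integrable_const _)]; simp
  rw [← ea] at ha
  obtain ⟨η, hη, hal⟩ := alg1 hr hε hL0 ha
  refine ⟨η, hη, form_lower hV hVi h1 (by positivity) hqc hH fun g hg => ?_⟩
  obtain ⟨T, hT1, hT2⟩ := lower (r := fun x => q x - r0) (B := M - r0) hV hVi h1 hP (by positivity) hL0.le
    (fun x y => by simpa using hL x y)
    (fun x => by rw [abs_of_nonneg (by linarith [hq x])]; linarith [hM x]) (fun x => by linarith [hq x]) hg
  have hD := hP g hg
  rw [← mu_int hVc, ← mu_int hVc] at hD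
  have hS : 0 ≤ (∫ x, g x ^ 2 ∂(mu V)) - (∫ x, g x ∂(mu V)) ^ 2 := by
    have hh : 0 ≤ L ^ 2 * ((∫ x, g x ^ 2 ∂(mu V)) - (∫ x, g x ∂(mu V)) ^ 2) := le_trans (by positivity) hT1
    exact nonneg_of_mul_nonneg_right hh (by positivity)
  have := hal (∫ x, g x ∂(mu V)) _ T hS hT1
  have h0 : 0 ≤ ∫ x, (q x - r0) * g x ^ 2 ∂(mu V) :=
    integral_nonneg fun x => mul_nonneg (by linarith [hq x]) (sq_nonneg _)
  have hmx := max_le h0 hT2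
  have eR : ∫ x, (q x - r0) * g x ^ 2 ∂(mu V) =
      (∫ x, q x * g x ^ 2 * exp (-V x)) - r0 * ∫ x, g x ^ 2 ∂(mu V) := by
    rw [← integral_const_mul, ← mu_int hVc (fun x => q x * g x ^ 2), ← integral_sub]
    · congr 1; ext x; ring
    · rw [mu_integrable hVc]; simp_rw [sq]
      exact int_cc ((hqc.mul (hg.1.continuous.mul hg.1.continuous)).mul hVc.neg.rexp)
        hg.2.mul_right.mul_left.mul_right
    · rw [mu_integrable hVc]; simp_rw [sq]
      exact int_cc ((continuous_const.mul (hg.1.continuous.mul hg.1.continuous)).mul hVc.neg.rexp)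
        hg.2.mul_right.mul_left.mul_right
  rw [eR] at hmx
  rw [← mu_int hVc (fun x => g x ^ 2)]
  nlinarith


lemma alg2 {a b ε K : ℝ} (ha : 0 ≤ a) (hb : 0 < b) (hε : 0 ≤ ε) (hK : K ^ 2 = b * ε)
    (h : a ≤ ε + K) :
    0 ≤ (a + b) * (1 - √(1 - a ^ 2 / (a + b) ^ 2)) ∧ (a + b) * (1 - √(1 - a ^ 2 / (a + b) ^ 2)) ≤ ε := by
  have ht : 0 < a + b := by positivity
  set s := √(1 - a ^ 2 / (a + b) ^ 2) with hs
  have hs0 : 0 ≤ s := Real.sqrt_nonneg _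
  have hx : a ^ 2 / (a + b) ^ 2 ≤ 1 := by
    rw [div_le_one (by positivity)]
    exact pow_le_pow_left₀ ha (by linarith) 2
  have hs2 : ((a + b) * s) ^ 2 = (a + b) ^ 2 - a ^ 2 := by
    rw [mul_pow, hs, Real.sq_sqrt (by linarith)]; field_simp
  have hs1 : s ≤ 1 := by
    rw [hs, Real.sqrt_le_left zero_le_one, one_pow]
    have : 0 ≤ a ^ 2 / (a + b) ^ 2 := by positivity
    linarith
  refine ⟨mul_nonneg ht.le (by linarith), ?_⟩
  suffices a + b - ε ≤ (a + b) * s by linarith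
  by_cases h1 : a + b ≤ ε
  · have := mul_nonneg ht.le hs0; linarith
  push Not at h1
  have hp : 0 ≤ (a + b) * s := mul_nonneg ht.le hs0
  refine le_of_sq_le_sq ?_ hp
  rw [hs2]
  by_cases h2 : ε ≤ a
  · have : (a - ε) ^ 2 ≤ b * ε := by rw [← hK]; exact pow_le_pow_left₀ (by linarith) (by linarith) 2
    nlinarith [mul_nonneg hb.le hε]
  · push Not at h2
    have : (a + b - ε) ^ 2 ≤ b ^ 2 := pow_le_pow_left₀ (by linarith) (by linarith) 2
    nlinarith [mul_nonneg ha hb.le]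

lemma alg3 {m r0 b : ℝ} (hm : 0 ≤ m) (hr : 0 < r0) (hb : 0 < b) :
    0 ≤ r0 + ((m - r0) + b) * (1 - √(1 - (m - r0) ^ 2 / ((m - r0) + b) ^ 2)) := by
  set s := √(1 - (m - r0) ^ 2 / ((m - r0) + b) ^ 2) with hs
  have hs0 : 0 ≤ s := Real.sqrt_nonneg _
  have hs1 : s ≤ 1 := by
    rw [hs, Real.sqrt_le_left zero_le_one, one_pow]
    have : 0 ≤ (m - r0) ^ 2 / ((m - r0) + b) ^ 2 := by positivity
    linarith
  nlinarith [mul_nonneg (by linarith : 0 ≤ m + b) (by linarith : 0 ≤ 1 - s), mul_nonneg hr.le hs0]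

lemma int_trunc {X : Type*} [MeasurableSpace X] {μ : Measure X} [IsProbabilityMeasure μ] {q : X → ℝ} {r0 C : ℝ}
    (hr : 0 < r0) (hqm : Measurable q) (hq : ∀ x, r0 ≤ q x)
    (hC : ∀ k : ℕ, ∫ x, min (q x) (r0 + k) ∂μ ≤ C) : Integrable q μ ∧ ∫ x, q x ∂μ ≤ C := by
  have hk0 : ∀ (k : ℕ) x, 0 ≤ min (q x) (r0 + k) := fun k x =>
    le_min (hr.le.trans (hq x)) (by positivity)
  have hi : ∀ k : ℕ, Integrable (fun x => min (q x) (r0 + k)) μ := fun k =>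
    Integrable.of_bound (hqm.min measurable_const).aestronglyMeasurable (r0 + k) (Eventually.of_forall fun x => by
      rw [Real.norm_eq_abs, abs_of_nonneg (hk0 k x)]; exact min_le_right _ _)
  have hC0 : 0 ≤ C := (integral_nonneg (hk0 0)).trans (hC 0)
  have hlim : Tendsto (fun k : ℕ => ∫⁻ x, ENNReal.ofReal (min (q x) (r0 + k)) ∂μ) atTop
      (𝓝 (∫⁻ x, ENNReal.ofReal (q x) ∂μ)) := by
    refine lintegral_tendsto_of_tendsto_of_monotone (fun k => (hqm.min measurable_const).ennreal_ofReal.aemeasurable)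
      (Eventually.of_forall fun x => fun i j hij => ?_) (Eventually.of_forall fun x => ?_)
    · refine ENNReal.ofReal_le_ofReal (min_le_min le_rfl ?_)
      have : (i:ℝ) ≤ j := by exact_mod_cast hij
      linarith
    · refine tendsto_const_nhds.congr' ?_
      filter_upwards [eventually_ge_atTop ⌈q x⌉₊] with k hk
      rw [min_eq_left]
      have := Nat.ceil_le.1 hk
      linarith
  have hle : ∫⁻ x, ENNReal.ofReal (q x) ∂μ ≤ ENNReal.ofReal C := by
    refine le_of_tendsto' hlim fun k => ?_
    rw [← ofReal_integral_eq_lintegral_ofReal (hi k) (Eventually.of_forall (hk0 k))]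
    exact ENNReal.ofReal_le_ofReal (hC k)
  have hq0 : ∀ x, 0 ≤ q x := fun x => hr.le.trans (hq x)
  refine ⟨⟨hqm.aestronglyMeasurable, ?_⟩, ?_⟩
  · rw [hasFiniteIntegral_iff_ofReal (Eventually.of_forall hq0)]
    exact hle.trans_lt ENNReal.ofReal_lt_top
  · rw [integral_eq_lintegral_of_nonneg_ae (Eventually.of_forall hq0) hqm.aestronglyMeasurable]
    exact ENNReal.toReal_le_of_le_ofReal hC0 hle

lemma main_norm {V ρ : EE n → ℝ} (hV : ContDiff ℝ 2 V) (hVi : Integrable (fun x => exp (-V x)))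
    (h1 : ∫ x, exp (-V x) = 1) {L r0 m : ℝ} (hL0 : 0 < L) (hL : ∀ x y, |ρ x - ρ y| ≤ L * ‖x - y‖)
    (hH : ∀ x u, ρ x * ‖u‖ ^ 2 ≤ iteratedFDeriv ℝ 2 V x ![u, u])
    (hr : 0 < r0) (hρ : ∀ x, r0 ≤ ρ x) (hm : m = ∫ x, ρ x ∂(mu V)) {f : EE n → ℝ} (hf : Tst f) :
    (∫ x, f x ^ 2 * exp (-V x)) - (∫ x, f x * exp (-V x)) ^ 2 ≤
      (1 / (r0 + ((m - r0) + 4 * L ^ 2 / r0 ^ 2) *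
      (1 - √(1 - (m - r0) ^ 2 / ((m - r0) + 4 * L ^ 2 / r0 ^ 2) ^ 2)))) *
        ∫ x, (∑ i, pd i f x ^ 2) * exp (-V x) := by
  have hVc := hV.continuous
  have hpr := mu_prob hVi h1
  have hm0 : 0 ≤ m := by rw [hm]; exact integral_nonneg fun x => hr.le.trans (hρ x)
  have hb : 0 < 4 * L ^ 2 / r0 ^ 2 := by positivity
  have h3 := alg3 hm0 hr hb
  have hbase : Poi V r0 := base hV hVi h1 hr fun x u =>
    (mul_le_mul_of_nonneg_right (hρ x) (sq_nonneg _)).trans (hH x u)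
  have hDn : ∀ f : EE n → ℝ, 0 ≤ ∫ x, (∑ j, pd j f x ^ 2) * exp (-V x) := fun f => integral_nonneg fun x =>
    mul_nonneg (Finset.sum_nonneg fun i _ => sq_nonneg _) (exp_pos _).le
  by_cases hv : (∫ x, f x ^ 2 * exp (-V x)) - (∫ x, f x * exp (-V x)) ^ 2 ≤ 0
  · exact hv.trans (mul_nonneg (one_div_nonneg.2 h3) (hDn f))
  push Not at hv
  have ub : ∀ g, Tst g → 0 < (∫ x, g x ^ 2 * exp (-V x)) - (∫ x, g x * exp (-V x)) ^ 2 →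
      ∀ l ∈ {l | Poi V l}, l ≤ (∫ x, (∑ i, pd i g x ^ 2) * exp (-V x)) /
        ((∫ x, g x ^ 2 * exp (-V x)) - (∫ x, g x * exp (-V x)) ^ 2) := by
    intro g hg hgv l hl
    rw [le_div_iff₀ hgv]
    exact hl g hg
  have hbdd : BddAbove {l | Poi V l} := ⟨_, ub f hf hv⟩
  set l := sSup {l | Poi V l} with hl
  have hlr : r0 ≤ l := le_csSup hbdd hbase
  have hPl : Poi V l := by
    intro g hg
    by_cases hgv : (∫ x, g x ^ 2 * exp (-V x)) - (∫ x, g x * exp (-V x)) ^ 2 ≤ 0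
    · exact (mul_nonpos_of_nonneg_of_nonpos (hr.le.trans hlr) hgv).trans (hDn g)
    · push Not at hgv
      rw [← le_div_iff₀ hgv]
      exact csSup_le ⟨r0, hbase⟩ (ub g hg hgv)
  obtain ⟨ε, hε⟩ : ∃ ε, l = r0 + ε := ⟨l - r0, by ring⟩
  have hε0 : 0 ≤ ε := by linarith
  have hC : ∀ k : ℕ, ∫ x, min (ρ x) (r0 + k) ∂(mu V) ≤ r0 + (ε + 2 * L * √ε / r0) := by
    intro k
    by_contra! hcon
    obtain ⟨η, hη, hPη⟩ := improve (q := fun x => min (ρ x) (r0 + k)) (M := r0 + k) (L := L) hV hVi h1 hr hε0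
      (hε ▸ hPl) hL0 (fun x y => by
        refine (abs_min_sub_min_le_max _ _ _ _).trans (max_le (hL x y) ?_)
        simp; positivity) (fun x => le_min (hρ x) (by simp)) (fun x => min_le_right _ _)
      (fun x u => (mul_le_mul_of_nonneg_right (min_le_left _ _) (sq_nonneg _)).trans (hH x u)) (by linarith)
    have : r0 + ε + η ≤ l := le_csSup hbdd hPη
    linarith
  obtain ⟨hρi, hρC⟩ := int_trunc hr (lip_cont hL).measurable hρ hC
  rw [← hm] at hρC
  have hmr : r0 ≤ m := by
    rw [hm]
    calc r0 = ∫ x, r0 ∂(mu V) := by simp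
      _ ≤ _ := integral_mono (integrable_const _) hρi hρ
  have hK : (2 * L * √ε / r0) ^ 2 = 4 * L ^ 2 / r0 ^ 2 * ε := by
    rw [div_pow, mul_pow, Real.sq_sqrt hε0]; ring
  obtain ⟨e1, e2⟩ := alg2 (a := m - r0) (by linarith) hb hε0 hK (by linarith)
  have hfin := hPl f hf
  rw [one_div, inv_mul_eq_div, le_div_iff₀ (by linarith), mul_comm]
  refine le_trans (mul_le_mul_of_nonneg_right ?_ hv.le) hfin
  linarith

end helpers

/-- Self-improved Bakry–Émery bound for the Poincaré constant under a
variable positive curvature lower bound, Lipschitz version. -/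
theorem stmt_1 {n : ℕ} (V ρ : EuclideanSpace ℝ (Fin n) → ℝ)
    (hV : ContDiff ℝ 2 V)
    (hVint : Integrable (fun x => Real.exp (-V x)))
    (μ : Measure (EuclideanSpace ℝ (Fin n)))
    (hμ : μ = volume.withDensity
      (fun x => ENNReal.ofReal (Real.exp (-V x) / ∫ y, Real.exp (-V y))))
    (Lip : ℝ) (hLippos : 0 < Lip)
    (hLip : ∀ x y, |ρ x - ρ y| ≤ Lip * ‖x - y‖)
    (hHess : ∀ x u, ρ x * ‖u‖ ^ 2 ≤ iteratedFDeriv ℝ 2 V x ![u, u])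
    (ρ₀ : ℝ) (hρ₀pos : 0 < ρ₀) (hρ₀ : ∀ x, ρ₀ ≤ ρ x)
    (m : ℝ) (hm : m = ∫ x, ρ x ∂μ)
    (ε' : ℝ)
    (hε' : ε' = ((m - ρ₀) + 4 * Lip ^ 2 / ρ₀ ^ 2) *
      (1 - Real.sqrt (1 - (m - ρ₀) ^ 2 / ((m - ρ₀) + 4 * Lip ^ 2 / ρ₀ ^ 2) ^ 2))) :
    ∀ f : EuclideanSpace ℝ (Fin n) → ℝ, ContDiff ℝ (⊤ : ℕ∞) f → HasCompactSupport f →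
      ∫ x, f x ^ 2 ∂μ - (∫ x, f x ∂μ) ^ 2 ≤
        (1 / (ρ₀ + ε')) * ∫ x, ‖gradient f x‖ ^ 2 ∂μ := by
  intro f hf hfc
  have hZ : 0 < ∫ y, Real.exp (-V y) := integral_exp_pos hVint
  set Z := ∫ y, Real.exp (-V y) with hZd
  set W : EE n → ℝ := fun x => V x + Real.log Z with hW
  have hWexp : ∀ x, Real.exp (-W x) = Real.exp (-V x) / Z := fun x => by
    simp only [hW]
    rw [neg_add, Real.exp_add, Real.exp_neg (Real.log Z), Real.exp_log hZ, div_eq_mul_inv]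
  have hWc : ContDiff ℝ 2 W := hV.add contDiff_const
  have hWi : Integrable (fun x => Real.exp (-W x)) := by
    simp_rw [hWexp]; exact hVint.div_const _
  have hW1 : ∫ x, Real.exp (-W x) = 1 := by
    simp_rw [hWexp]
    rw [integral_div, ← hZd, div_self hZ.ne']
  have hμW : μ = mu W := by
    rw [hμ, mu]; simp_rw [hWexp]
  have hWd : fderiv ℝ W = fderiv ℝ V := by
    ext1 x
    simp only [hW]
    rw [fderiv_add_const]
  have hHW : ∀ x u, ρ x * ‖u‖ ^ 2 ≤ iteratedFDeriv ℝ 2 W x ![u, u] := fun x u => by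
    have := hHess x u
    rw [iteratedFDeriv_two_apply] at this ⊢
    rwa [hWd]
  have key := main_norm hWc hWi hW1 hLippos hLip hHW hρ₀pos hρ₀ (m := m) (by rw [hm, hμW]) (f := f) ⟨hf, hfc⟩
  rw [← hε'] at key
  simp_rw [grad_norm]
  rw [hμW, mu_int hWc.continuous, mu_int hWc.continuous, mu_int hWc.continuous]
  exact key
end
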